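/- arXiv:2008.12944 — 5 statements merged into one kernel-verified Lean document; each statement's English description precedes it below -/
import Mathlib

section
/- Let k be an algebraically closed field and S = k[x_1,...,x_r]. Suppose D = (p_{ij}) is an 8×8 matrix with entries in S satisfying the standard conditions, and suppose moreover that either: (A) p_{ij} = 0 unless (i = 1 and 2 ≤ j ≤ 8) or (2 ≤ i ≤ 3 and 4 ≤ j ≤ 8) or (4 ≤ i ≤ 6 and 7 ≤ j ≤ 8); or (B) p_{ij} = 0 unless (1 ≤ i ≤ 2 and 3 ≤ j ≤ 8) or (3 ≤ i ≤ 5 and 6 ≤ j ≤ 8) or (6 ≤ i ≤ 7 and j = 8). Then r < 3, i.e., r ≤ 2. -/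
open MvPolynomial

/-- The "standard conditions" on an `8 × 8` matrix `D = (p_{ij})` with entries in
`S = k[x_1, ..., x_r]`:
(1) `D` is strictly upper triangular;
(2) `D² = 0`;
(3) every entry vanishes at the origin;
(4) for every nonzero point `a ∈ k^r` the evaluated matrix `D(a)` has rank `4`;
(5) there is a nonincreasing `8`-tuple of integers `(d_1, ..., d_8)` such that each `p_{ij}`
is homogeneous of degree `d_i - d_j + 1` (the zero polynomial being homogeneous of
any degree). -/
def StandardConditions {k : Type*} [Field k] {r : ℕ}
    (D : Matrix (Fin 8) (Fin 8) (MvPolynomial (Fin r) k)) : Prop :=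
  (∀ i j : Fin 8, j ≤ i → D i j = 0) ∧
  D * D = 0 ∧
  (∀ i j : Fin 8, eval (0 : Fin r → k) (D i j) = 0) ∧
  (∀ a : Fin r → k, a ≠ 0 → (D.map (eval a)).rank = 4) ∧
  (∃ d : Fin 8 → ℤ, Antitone d ∧
    ∀ i j : Fin 8, D i j = 0 ∨
      (0 ≤ d i - d j + 1 ∧ (D i j).IsHomogeneous (d i - d j + 1).toNat))


/-! ### A Čech-type lemma -/

section Cech

variable {k : Type*} [Field k] {r : ℕ}

/-- Powers of two distinct variables: divisibility. -/
lemma st5_dvd {x y : Fin r} (hxy : x ≠ y) (n m : ℕ) {a b : MvPolynomial (Fin r) k}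
    (h : X y ^ m * a = X x ^ n * b) : ∃ c, a = X x ^ n * c := by
  have hp : Prime (X x : MvPolynomial (Fin r) k) := X_prime
  have h1 : ¬ (X x : MvPolynomial (Fin r) k) ∣ X y ^ m := fun hd => by
    have := hp.dvd_of_dvd_pow hd
    rw [X_dvd_X] at this
    exact hxy this
  exact hp.pow_dvd_of_dvd_mul_left n h1 ⟨b, h⟩

lemma st5_dvd_vec {Q : Type*} {x y : Fin r} (hxy : x ≠ y) (n m : ℕ)
    {a b : Q → MvPolynomial (Fin r) k}
    (h : (X y ^ m : MvPolynomial (Fin r) k) • a = (X x ^ n : MvPolynomial (Fin r) k) • b) :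
    ∃ c : Q → MvPolynomial (Fin r) k, a = (X x ^ n : MvPolynomial (Fin r) k) • c := by
  have : ∀ q, ∃ c, a q = X x ^ n * c := fun q => st5_dvd hxy n m (congrFun h q)
  choose c hc using this
  exact ⟨c, funext hc⟩

/-- Powers of three distinct variables form a regular sequence. -/
lemma st5_reg {x y z : Fin r} (hxz : x ≠ z) (hyz : y ≠ z) (n m l : ℕ)
    {w a b : MvPolynomial (Fin r) k}
    (h : X z ^ l * w = X x ^ n * a + X y ^ m * b) :
    ∃ c d, w = X x ^ n * c + X y ^ m * d := by
  have key : ∀ f : MvPolynomial (Fin r) k,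
      f ∈ Ideal.span {(X x : MvPolynomial (Fin r) k) ^ n, X y ^ m} ↔
      ∀ xi ∈ f.support, ∃ si ∈ ({Finsupp.single x n, Finsupp.single y m} : Set (Fin r →₀ ℕ)),
        si ≤ xi := by
    intro f
    rw [← mem_ideal_span_monomial_image, Set.image_pair, X_pow_eq_monomial, X_pow_eq_monomial]
  have hz : X z ^ l * w ∈ Ideal.span {(X x : MvPolynomial (Fin r) k) ^ n, X y ^ m} := by
    rw [h, Ideal.mem_span_pair]
    exact ⟨a, b, by ring⟩
  have hw : w ∈ Ideal.span {(X x : MvPolynomial (Fin r) k) ^ n, X y ^ m} := by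
    rw [key] at hz ⊢
    intro xi hxi
    obtain ⟨si, hsi, hle⟩ := hz (Finsupp.single z l + xi) (by
      rw [mem_support_iff, X_pow_eq_monomial, coeff_monomial_mul, one_mul]
      exact mem_support_iff.1 hxi)
    refine ⟨si, hsi, ?_⟩
    rcases hsi with rfl | rfl
    · rw [Finsupp.single_le_iff] at hle ⊢
      simpa [Finsupp.single_apply, hxz.symm] using hle
    · rw [Finsupp.single_le_iff] at hle ⊢
      simpa [Finsupp.single_apply, hyz.symm] using hle
  rw [Ideal.mem_span_pair] at hw
  obtain ⟨c, d, hcd⟩ := hw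
  exact ⟨c, d, by rw [← hcd]; ring⟩

lemma st5_reg_vec {Q : Type*} {x y z : Fin r} (hxz : x ≠ z) (hyz : y ≠ z) (n m l : ℕ)
    {w a b : Q → MvPolynomial (Fin r) k}
    (h : (X z ^ l : MvPolynomial (Fin r) k) • w =
      (X x ^ n : MvPolynomial (Fin r) k) • a + (X y ^ m : MvPolynomial (Fin r) k) • b) :
    ∃ c d : Q → MvPolynomial (Fin r) k,
      w = (X x ^ n : MvPolynomial (Fin r) k) • c + (X y ^ m : MvPolynomial (Fin r) k) • d := by
  have : ∀ q, ∃ c d, w q = X x ^ n * c + X y ^ m * d :=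
    fun q => st5_reg hxz hyz n m l (congrFun h q)
  choose c d hc using this
  exact ⟨c, d, funext hc⟩

variable {P Q R : Type*} [Fintype P] [Fintype Q] [Fintype R]
  [DecidableEq P] [DecidableEq Q] [DecidableEq R]

set_option linter.unusedSectionVars false

/-- The ideal of scalars `s` such that `s • 1` factors on the left through `M`. -/
def st5Ideal (M : Matrix P R (MvPolynomial (Fin r) k)) : Ideal (MvPolynomial (Fin r) k) where
  carrier := {s | ∃ L : Matrix R P (MvPolynomial (Fin r) k), M * L = s • 1}
  add_mem' := by
    rintro a b ⟨L, hL⟩ ⟨L', hL'⟩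
    exact ⟨L + L', by rw [Matrix.mul_add, hL, hL', add_smul]⟩
  zero_mem' := ⟨0, by simp⟩
  smul_mem' := by
    rintro c a ⟨L, hL⟩
    exact ⟨c • L, by rw [Matrix.mul_smul, hL, smul_smul, smul_eq_mul]⟩

lemma st5_det_mem (M : Matrix P R (MvPolynomial (Fin r) k))
    (L : Matrix R P (MvPolynomial (Fin r) k)) : (M * L).det ∈ st5Ideal M := by
  have h : M * (L * (M * L).adjugate) = (M * L).det • (1 : Matrix P P _) := by
    rw [← Matrix.mul_assoc, Matrix.mul_adjugate]
  exact ⟨_, h⟩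

/-- If `M` has full row rank off the origin, powers of variables factor through `M`. -/
lemma st5_rightInv [IsAlgClosed k] (M : Matrix P R (MvPolynomial (Fin r) k))
    (hM : ∀ a : Fin r → k, a ≠ 0 → Fintype.card P ≤ (M.map (eval a)).rank) (x : Fin r) :
    ∃ n : ℕ, ∃ L : Matrix R P (MvPolynomial (Fin r) k),
      M * L = (X x ^ n : MvPolynomial (Fin r) k) • (1 : Matrix P P _) := by
  have hx : (X x : MvPolynomial (Fin r) k) ∈ (st5Ideal M).radical := by
    rw [← vanishingIdeal_zeroLocus_eq_radical (K := k)]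
    intro a ha
    by_cases h0 : a = 0
    · simp [h0]
    exfalso
    have hr := hM a h0
    have hsurj : Function.Surjective (M.map (eval a)).mulVec := by
      have h1 : LinearMap.range (M.map (eval a)).mulVecLin = ⊤ := by
        apply Submodule.eq_top_of_finrank_eq
        rw [Module.finrank_fintype_fun_eq_card]
        exact le_antisymm (Matrix.rank_le_card_height _) hr
      exact LinearMap.range_eq_top.1 h1
    obtain ⟨B, hB⟩ := Matrix.mulVec_surjective_iff_exists_right_inverse.1 hsurj
    have hmem := st5_det_mem M (B.map (C : k → MvPolynomial (Fin r) k))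
    have h2 := ha _ hmem
    have h3 : aeval a (M * B.map (C : k → MvPolynomial (Fin r) k)).det = (1 : k) := by
      rw [MvPolynomial.aeval_eq_eval, RingHom.map_det,
        RingHom.mapMatrix_apply, Matrix.map_mul]
      have : (B.map (C : k → MvPolynomial (Fin r) k)).map (eval a) = B := by
        ext i j; simp
      rw [this, hB, Matrix.det_one]
    rw [h3] at h2
    exact one_ne_zero h2
  exact hx

/-- Adjusted homotopy. -/
lemma st5_homotopy [IsAlgClosed k] (M : Matrix P R (MvPolynomial (Fin r) k))
    (N : Matrix R Q (MvPolynomial (Fin r) k)) (hMN : M * N = 0)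
    (hc : Fintype.card R = Fintype.card P + Fintype.card Q)
    (hM : ∀ a : Fin r → k, a ≠ 0 → Fintype.card P ≤ (M.map (eval a)).rank)
    (hN : ∀ a : Fin r → k, a ≠ 0 → Fintype.card Q ≤ (N.map (eval a)).rank) (x : Fin r) :
    ∃ n : ℕ, ∃ H : Matrix R P (MvPolynomial (Fin r) k),
      ∃ L : Matrix Q R (MvPolynomial (Fin r) k),
      M * H = (X x ^ n : MvPolynomial (Fin r) k) • (1 : Matrix P P _) ∧
      L * N = (X x ^ n : MvPolynomial (Fin r) k) • (1 : Matrix Q Q _) ∧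
      H * M + N * L = (X x ^ n : MvPolynomial (Fin r) k) • (1 : Matrix R R _) := by
  obtain ⟨n, H, hH⟩ := st5_rightInv M hM x
  obtain ⟨m, L, hL⟩ := st5_rightInv N.transpose (fun a ha => by
    rw [Matrix.transpose_map, Matrix.rank_transpose]; exact hN a ha) x
  have hL' : L.transpose * N = (X x ^ m : MvPolynomial (Fin r) k) • (1 : Matrix Q Q _) := by
    have := congrArg Matrix.transpose hL
    simpa using this
  set s : MvPolynomial (Fin r) k := X x ^ n with hs
  set t : MvPolynomial (Fin r) k := X x ^ m with ht
  have hst : (X x ^ (n + m) : MvPolynomial (Fin r) k) = s * t := pow_add _ _ _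
  have hst0 : s * t ≠ 0 := by rw [← hst]; exact pow_ne_zero _ (X_ne_zero x)
  let H' := t • H
  let L' := L.transpose * (s • (1 : Matrix R R (MvPolynomial (Fin r) k)) - H * M)
  have e1 : M * H' = (s * t) • (1 : Matrix P P _) := by
    simp only [H', Matrix.mul_smul, hH, smul_smul, mul_comm]
  have e2 : L' * N = (s * t) • (1 : Matrix Q Q _) := by
    simp only [L', Matrix.mul_assoc, Matrix.sub_mul, hMN, Matrix.mul_zero, sub_zero,
      Matrix.smul_mul, Matrix.one_mul, Matrix.mul_smul, hL', smul_smul]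
  have e3 : L' * H' = 0 := by
    simp only [L', H', Matrix.mul_assoc, Matrix.sub_mul, Matrix.mul_smul, hH, Matrix.smul_mul,
      Matrix.one_mul, Matrix.mul_one, sub_self, Matrix.mul_zero, smul_zero]
  have e4 : Matrix.fromRows M L' * Matrix.fromCols H' N = (s * t) • 1 := by
    rw [Matrix.fromRows_mul_fromCols, e1, hMN, e2, e3, ← Matrix.fromBlocks_one,
      Matrix.fromBlocks_smul, smul_zero, smul_zero]
  let F := FractionRing (MvPolynomial (Fin r) k)
  let φ : MvPolynomial (Fin r) k →+* F := algebraMap _ _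
  have hφ : Function.Injective φ := IsFractionRing.injective _ _
  have hφ0 : φ (s * t) ≠ 0 := fun h => hst0 (hφ (by rw [h, map_zero]))
  have e5 : ((φ (s * t))⁻¹ • (Matrix.fromRows M L').map φ) * (Matrix.fromCols H' N).map φ = 1 := by
    rw [Matrix.smul_mul, ← Matrix.map_mul, e4]
    ext i j
    by_cases hij : i = j
    · subst hij; simp only [Matrix.smul_apply, Matrix.map_apply, Matrix.one_apply_eq, smul_eq_mul, mul_one]
      exact inv_mul_cancel₀ hφ0
    · simp [Matrix.one_apply_ne hij]
  replace e5 := (Matrix.mul_eq_one_comm_of_card_eq _ _ F (by rw [Fintype.card_sum, hc])).1 e5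
  have e6 : Matrix.fromCols H' N * Matrix.fromRows M L' = (s * t) • 1 := by
    rw [Matrix.mul_smul, ← Matrix.map_mul] at e5
    have e7 := congrArg (fun A => φ (s * t) • A) e5
    simp only [smul_smul, mul_inv_cancel₀ hφ0, one_smul] at e7
    refine Matrix.ext fun i j => hφ ?_
    have := congrFun (congrFun e7 i) j
    rw [Matrix.map_apply] at this
    rw [this]
    by_cases hij : i = j
    · subst hij; simp
    · simp [Matrix.one_apply_ne hij]
  rw [Matrix.fromCols_mul_fromRows] at e6
  refine ⟨n + m, H', L', ?_, ?_, ?_⟩ <;> rw [hst] <;> assumption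

/-- Main algebraic lemma: a short complex `S^Q → S^R → S^P`, exact off the origin in at least
three variables, is surjective on the right. -/
lemma st5_surj [IsAlgClosed k] (hr : 3 ≤ r) (M : Matrix P R (MvPolynomial (Fin r) k))
    (N : Matrix R Q (MvPolynomial (Fin r) k)) (hMN : M * N = 0)
    (hc : Fintype.card R = Fintype.card P + Fintype.card Q)
    (hM : ∀ a : Fin r → k, a ≠ 0 → Fintype.card P ≤ (M.map (eval a)).rank)
    (hN : ∀ a : Fin r → k, a ≠ 0 → Fintype.card Q ≤ (N.map (eval a)).rank)
    (v : P → MvPolynomial (Fin r) k) :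
    ∃ u : R → MvPolynomial (Fin r) k, M.mulVec u = v := by
  let x : Fin r := ⟨0, by omega⟩
  let y : Fin r := ⟨1, by omega⟩
  let z : Fin r := ⟨2, by omega⟩
  have hxy : x ≠ y := by simp [x, y]
  have hxz : x ≠ z := by simp [x, z]
  have hyz : y ≠ z := by simp [y, z]
  obtain ⟨n, Hx, Lx, x1, x2, x3⟩ := st5_homotopy M N hMN hc hM hN x
  obtain ⟨m, Hy, Ly, y1, y2, y3⟩ := st5_homotopy M N hMN hc hM hN y
  obtain ⟨l, Hz, Lz, z1, z2, z3⟩ := st5_homotopy M N hMN hc hM hN z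
  set s : MvPolynomial (Fin r) k := X x ^ n with hs
  set t : MvPolynomial (Fin r) k := X y ^ m with ht
  set q : MvPolynomial (Fin r) k := X z ^ l with hq
  have hs0 : s ≠ 0 := pow_ne_zero _ (X_ne_zero x)
  have ht0 : t ≠ 0 := pow_ne_zero _ (X_ne_zero y)
  have inj : ∀ w w' : Q → MvPolynomial (Fin r) k, N.mulVec w = N.mulVec w' → w = w' := by
    intro w w' h
    have := congrArg Lx.mulVec h
    rw [Matrix.mulVec_mulVec, Matrix.mulVec_mulVec, x2, Matrix.smul_mulVec, Matrix.smul_mulVec,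
      Matrix.one_mulVec, Matrix.one_mulVec] at this
    exact smul_right_injective _ hs0 this
  have exact_mid : ∀ a : R → MvPolynomial (Fin r) k, M.mulVec a = 0 → ∃ w, a = N.mulVec w := by
    intro a ha
    have a1 : s • a = N.mulVec (Lx.mulVec a) := by
      have := congrArg (fun A => Matrix.mulVec A a) x3
      simpa [Matrix.add_mulVec, ← Matrix.mulVec_mulVec, ha, Matrix.smul_mulVec] using this.symm
    have a2 : t • a = N.mulVec (Ly.mulVec a) := by
      have := congrArg (fun A => Matrix.mulVec A a) y3
      simpa [Matrix.add_mulVec, ← Matrix.mulVec_mulVec, ha, Matrix.smul_mulVec] using this.symm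
    have a3 : t • Lx.mulVec a = s • Ly.mulVec a := by
      apply inj
      rw [Matrix.mulVec_smul, Matrix.mulVec_smul, ← a1, ← a2, smul_comm]
    obtain ⟨w, hw⟩ := st5_dvd_vec hxy n m a3
    refine ⟨w, smul_right_injective _ hs0 ?_⟩
    change s • a = s • N.mulVec w
    rw [a1, hw, Matrix.mulVec_smul]
  set ux := Hx.mulVec v with hux
  set uy := Hy.mulVec v with huy
  set uz := Hz.mulVec v with huz
  have mx : M.mulVec ux = s • v := by
    rw [hux, Matrix.mulVec_mulVec, x1, Matrix.smul_mulVec, Matrix.one_mulVec]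
  have my : M.mulVec uy = t • v := by
    rw [huy, Matrix.mulVec_mulVec, y1, Matrix.smul_mulVec, Matrix.one_mulVec]
  have mz : M.mulVec uz = q • v := by
    rw [huz, Matrix.mulVec_mulVec, z1, Matrix.smul_mulVec, Matrix.one_mulVec]
  obtain ⟨wxy, hwxy⟩ := exact_mid (t • ux - s • uy) (by
    rw [Matrix.mulVec_sub, Matrix.mulVec_smul, Matrix.mulVec_smul, mx, my, smul_comm, sub_self])
  obtain ⟨wxz, hwxz⟩ := exact_mid (q • ux - s • uz) (by
    rw [Matrix.mulVec_sub, Matrix.mulVec_smul, Matrix.mulVec_smul, mx, mz, smul_comm, sub_self])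
  obtain ⟨wyz, hwyz⟩ := exact_mid (q • uy - t • uz) (by
    rw [Matrix.mulVec_sub, Matrix.mulVec_smul, Matrix.mulVec_smul, my, mz, smul_comm, sub_self])
  have coc : q • wxy = s • (-wyz) + t • wxz := by
    apply inj
    rw [Matrix.mulVec_add, Matrix.mulVec_smul, Matrix.mulVec_smul, Matrix.mulVec_smul,
      Matrix.mulVec_neg, ← hwxy, ← hwxz, ← hwyz]
    module
  obtain ⟨α, β, hαβ⟩ := st5_reg_vec hxz hyz n m l coc
  have fin1 : t • (ux - N.mulVec β) = s • (uy + N.mulVec α) := by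
    have h1 : t • ux - s • uy = s • N.mulVec α + t • N.mulVec β := by
      rw [hwxy, hαβ, Matrix.mulVec_add, Matrix.mulVec_smul, Matrix.mulVec_smul]
    rw [smul_sub, smul_add, sub_eq_iff_eq_add]
    rw [sub_eq_iff_eq_add] at h1
    rw [h1]; abel
  obtain ⟨u, hu⟩ := st5_dvd_vec hxy n m fin1
  refine ⟨u, smul_right_injective _ hs0 ?_⟩
  change s • M.mulVec u = s • v
  rw [← Matrix.mulVec_smul, ← hu, Matrix.mulVec_sub, mx, Matrix.mulVec_mulVec, hMN]
  simp

end Cech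

section Rank

variable {k : Type*} [Field k] {r : ℕ}

lemma st5_rank_add_le {m n : Type*} [Fintype m] [Fintype n] (A B : Matrix m n k) :
    (A + B).rank ≤ A.rank + B.rank := by
  unfold Matrix.rank
  rw [Matrix.mulVecLin_add]
  refine le_trans (Submodule.finrank_mono (LinearMap.range_add_le _ _)) ?_
  exact Submodule.finrank_add_le_finrank_add_finrank _ _

lemma st5_rank_pos {m n : Type*} [Fintype m] [Fintype n] (A : Matrix m n k) (hA : A ≠ 0) :
    1 ≤ A.rank := by
  classical
  by_contra h
  apply hA
  have h0 : A.rank = 0 := by omega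
  unfold Matrix.rank at h0
  rw [Submodule.finrank_eq_zero, LinearMap.range_eq_bot] at h0
  ext i j
  have := congrFun (LinearMap.congr_fun h0 (Pi.single j 1)) i
  simpa using this

lemma st5_rank {P R T : Type*} [Fintype P] [Fintype R] [Fintype T]
    {D : Matrix (Fin 8) (Fin 8) (MvPolynomial (Fin r) k)}
    (J : Matrix (Fin 8) P (MvPolynomial (Fin r) k)) (M : Matrix P R (MvPolynomial (Fin r) k))
    (K : Matrix R (Fin 8) (MvPolynomial (Fin r) k))
    (C : Matrix (Fin 8) T (MvPolynomial (Fin r) k))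
    (Q : Matrix T (Fin 8) (MvPolynomial (Fin r) k))
    (h : D = J * M * K + C * Q) (a : Fin r → k) (hD : 4 ≤ (D.map (eval a)).rank) :
    4 ≤ (M.map (eval a)).rank + Fintype.card T := by
  have h1 : D.map (eval a) = J.map (eval a) * M.map (eval a) * K.map (eval a)
      + C.map (eval a) * Q.map (eval a) := by
    rw [h, ← Matrix.map_mul, ← Matrix.map_mul, ← Matrix.map_mul]
    ext i j
    exact map_add (eval a) _ _
  rw [h1] at hD
  refine hD.trans ((st5_rank_add_le _ _).trans (add_le_add ?_ ?_))
  · exact (Matrix.rank_mul_le_left _ _).trans (Matrix.rank_mul_le_right _ _)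
  · exact (Matrix.rank_mul_le_left _ _).trans (Matrix.rank_le_card_width _)

lemma st5_unimod [IsAlgClosed k] (hr : 3 ≤ r) (p q : MvPolynomial (Fin r) k)
    (h : ∀ a : Fin r → k, a ≠ 0 → ¬ (eval a p = 0 ∧ eval a q = 0)) :
    ∃ u v, p * u + q * v = 1 := by
  obtain ⟨w, hw⟩ := st5_surj hr !![p, q] !![-q; p]
    (by ext1 i j; fin_cases i; fin_cases j; simp [Matrix.mul_apply]; ring) (by simp)
    (fun a ha => by
      rw [Fintype.card_fin]
      refine st5_rank_pos _ fun h0 => h a ha ⟨?_, ?_⟩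
      · simpa using congrFun (congrFun h0 0) 0
      · simpa using congrFun (congrFun h0 0) 1)
    (fun a ha => by
      rw [Fintype.card_fin]
      refine st5_rank_pos _ fun h0 => h a ha ⟨?_, ?_⟩
      · simpa using congrFun (congrFun h0 1) 0
      · simpa using congrFun (congrFun h0 0) 0) ![1]
  refine ⟨w 0, w 1, ?_⟩
  simpa [Matrix.mulVec, dotProduct, Fin.sum_univ_two] using congrFun hw 0

lemma st5_gcd (p q : MvPolynomial (Fin r) k) (hpq : ¬ (p = 0 ∧ q = 0)) :
    ∃ h p' q', p = h * p' ∧ q = h * q' ∧ h ≠ 0 ∧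
      ∀ s t, p * s + q * t = 0 → ∃ ε, s = -q' * ε ∧ t = p' * ε := by
  have main : ∀ p q : MvPolynomial (Fin r) k, p ≠ 0 →
      ∃ h p' q', p = h * p' ∧ q = h * q' ∧ h ≠ 0 ∧
      ∀ s t, p * s + q * t = 0 → ∃ ε, s = -q' * ε ∧ t = p' * ε := by
    intro p q hp
    obtain ⟨p', q', h, hrel, h1, h2⟩ := UniqueFactorizationMonoid.exists_reduced_factors p hp q
    have hh : h ≠ 0 := by rintro rfl; simp at h1; exact hp h1.symm
    have hp' : p' ≠ 0 := by rintro rfl; simp at h1; exact hp h1.symm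
    refine ⟨h, p', q', h1.symm, h2.symm, hh, fun s t hst => ?_⟩
    have h3 : p' * s + q' * t = 0 := by
      apply mul_left_cancel₀ hh
      rw [← h1, ← h2] at hst
      linear_combination hst
    have h4 : p' ∣ q' * t := ⟨-s, by linear_combination h3⟩
    obtain ⟨ε, rfl⟩ := hrel.dvd_of_dvd_mul_left h4
    exact ⟨ε, mul_left_cancel₀ hp' (by linear_combination h3), rfl⟩
  by_cases hp : p = 0
  · have hq : q ≠ 0 := fun hq => hpq ⟨hp, hq⟩
    obtain ⟨h, q', p', h1, h2, hh, h3⟩ := main q p hq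
    refine ⟨h, p', q', h2, h1, hh, fun s t hst => ?_⟩
    obtain ⟨ε, e1, e2⟩ := h3 t s (by rw [add_comm]; exact hst)
    exact ⟨-ε, by rw [e2]; ring, by rw [e1]; ring⟩
  · exact main p q hp

/-- The block matrix of shape `(1, 2, 3, 2)`. -/
noncomputable def st5D (a : Fin 2 → MvPolynomial (Fin r) k) (b : Fin 3 → MvPolynomial (Fin r) k)
    (c : Fin 2 → MvPolynomial (Fin r) k) (e : Fin 2 → Fin 3 → MvPolynomial (Fin r) k)
    (f : Fin 2 → Fin 2 → MvPolynomial (Fin r) k) (g : Fin 3 → Fin 2 → MvPolynomial (Fin r) k) :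
    Matrix (Fin 8) (Fin 8) (MvPolynomial (Fin r) k) :=
  !![0, a 0, a 1, b 0, b 1, b 2, c 0, c 1;
     0, 0, 0, e 0 0, e 0 1, e 0 2, f 0 0, f 0 1;
     0, 0, 0, e 1 0, e 1 1, e 1 2, f 1 0, f 1 1;
     0, 0, 0, 0, 0, 0, g 0 0, g 0 1;
     0, 0, 0, 0, 0, 0, g 1 0, g 1 1;
     0, 0, 0, 0, 0, 0, g 2 0, g 2 1;
     0, 0, 0, 0, 0, 0, 0, 0;
     0, 0, 0, 0, 0, 0, 0, 0]

set_option maxHeartbeats 1000000 in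
/-- Case `a ≠ 0`. -/
lemma st5_case1 [IsAlgClosed k] (hr : 3 ≤ r)
    (a : Fin 2 → MvPolynomial (Fin r) k) (b : Fin 3 → MvPolynomial (Fin r) k)
    (c : Fin 2 → MvPolynomial (Fin r) k) (e : Fin 2 → Fin 3 → MvPolynomial (Fin r) k)
    (f : Fin 2 → Fin 2 → MvPolynomial (Fin r) k) (g : Fin 3 → Fin 2 → MvPolynomial (Fin r) k)
    (ha : ¬ (a 0 = 0 ∧ a 1 = 0))
    (hae : ∀ j, a 0 * e 0 j + a 1 * e 1 j = 0)
    (haf : ∀ j, a 0 * f 0 j + a 1 * f 1 j + (b 0 * g 0 j + b 1 * g 1 j + b 2 * g 2 j) = 0)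
    (heg : ∀ i j, e i 0 * g 0 j + e i 1 * g 1 j + e i 2 * g 2 j = 0)
    (he0 : ∀ i j, eval 0 (e i j) = 0)
    (hD : ∀ x : Fin r → k, x ≠ 0 → 4 ≤ ((st5D a b c e f g).map (eval x)).rank) : False := by
  obtain ⟨h, p, q, hp, hq, hh, hgcd⟩ := st5_gcd _ _ ha
  choose ε hε0 hε1 using fun j => hgcd _ _ (hae j)
  obtain ⟨u, v, huv⟩ := st5_unimod hr p q (fun x hx ⟨h1, h2⟩ => by
    have := st5_rank (D := st5D a b c e f g)
      !![0, 0; 1, 0; 0, 1; 0, 0; 0, 0; 0, 0; 0, 0; 0, 0]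
      !![-q; p]
      !![0, 0, 0, ε 0, ε 1, ε 2, 0, 0]
      !![1, 0, 0; 0, f 0 0, f 0 1; 0, f 1 0, f 1 1; 0, g 0 0, g 0 1; 0, g 1 0, g 1 1;
         0, g 2 0, g 2 1; 0, 0, 0; 0, 0, 0]
      !![0, a 0, a 1, b 0, b 1, b 2, c 0, c 1; 0, 0, 0, 0, 0, 0, 1, 0; 0, 0, 0, 0, 0, 0, 0, 1]
      (by
        simp [st5D, hε0, hε1]) x (hD x hx)
    have h0 : (!![-q; p] : Matrix (Fin 2) (Fin 1) _).map (eval x) = 0 := by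
      ext i j; fin_cases i <;> simp [h1, h2]
    rw [h0, Matrix.rank_zero] at this
    simp at this)
  have hp0 : ∀ j, ε j = -v * e 0 j + u * e 1 j := fun j => by
    rw [hε0, hε1]; linear_combination (- ε j) * huv
  have hε : ∀ j, eval 0 (ε j) = 0 := fun j => by
    rw [hp0, map_add, map_mul, map_mul, he0, he0]; simp
  have hεg : ∀ j, ε 0 * g 0 j + ε 1 * g 1 j + ε 2 * g 2 j = 0 := fun j => by
    simp only [hp0]; linear_combination (-v) * heg 0 j + u * heg 1 j
  obtain ⟨w, hw⟩ := st5_surj hr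
    !![h, b 0, b 1, b 2; 0, ε 0, ε 1, ε 2]
    !![p * f 0 0 + q * f 1 0, p * f 0 1 + q * f 1 1; g 0 0, g 0 1; g 1 0, g 1 1; g 2 0, g 2 1]
    (by
      have haf' := haf
      rw [hp, hq] at haf'
      have h0 := haf' 0
      have h1 := haf' 1
      have h2 := hεg 0
      have h3 := hεg 1
      ext1 i j
      fin_cases i <;> fin_cases j <;> simp [Matrix.mul_apply, Fin.sum_univ_succ]
      · linear_combination h0
      · linear_combination h1
      · linear_combination h2
      · linear_combination h3)
    (by simp)
    (fun x hx => by
      have := st5_rank (D := st5D a b c e f g)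
        !![1, 0; 0, -q; 0, p; 0, 0; 0, 0; 0, 0; 0, 0; 0, 0]
        !![h, b 0, b 1, b 2; 0, ε 0, ε 1, ε 2]
        !![0, p, q, 0, 0, 0, 0, 0; 0, 0, 0, 1, 0, 0, 0, 0; 0, 0, 0, 0, 1, 0, 0, 0;
           0, 0, 0, 0, 0, 1, 0, 0]
        !![c 0, c 1; f 0 0, f 0 1; f 1 0, f 1 1; g 0 0, g 0 1; g 1 0, g 1 1;
           g 2 0, g 2 1; 0, 0; 0, 0]
        !![0, 0, 0, 0, 0, 0, 1, 0; 0, 0, 0, 0, 0, 0, 0, 1]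
        (by
          simp [st5D, hε0, hε1, hp, hq]) x (hD x hx)
      simp only [Fintype.card_fin] at this ⊢
      omega)
    (fun x hx => by
      have := st5_rank (D := st5D a b c e f g)
        !![0, 0, 0, 0; u, 0, 0, 0; v, 0, 0, 0; 0, 1, 0, 0; 0, 0, 1, 0; 0, 0, 0, 1;
           0, 0, 0, 0; 0, 0, 0, 0]
        !![p * f 0 0 + q * f 1 0, p * f 0 1 + q * f 1 1; g 0 0, g 0 1; g 1 0, g 1 1;
           g 2 0, g 2 1]
        !![0, 0, 0, 0, 0, 0, 1, 0; 0, 0, 0, 0, 0, 0, 0, 1]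
        !![1, 0; 0, -q; 0, p; 0, 0; 0, 0; 0, 0; 0, 0; 0, 0]
        !![0, a 0, a 1, b 0, b 1, b 2, c 0, c 1;
           0, 0, 0, ε 0, ε 1, ε 2, -v * f 0 0 + u * f 1 0, -v * f 0 1 + u * f 1 1]
        (by
          simp [st5D, hε0, hε1]
          refine ⟨⟨?_, ?_⟩, ?_, ?_⟩
          · linear_combination (- f 0 0) * huv
          · linear_combination (- f 0 1) * huv
          · linear_combination (- f 1 0) * huv
          · linear_combination (- f 1 1) * huv) x (hD x hx)
      simp only [Fintype.card_fin] at this ⊢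
      omega)
    ![0, 1]
  have h1 := congrArg (eval 0) (congrFun hw 1)
  simp [Matrix.mulVec, dotProduct, Fin.sum_univ_succ, -eval_zero, hε] at h1

set_option maxHeartbeats 1000000 in
/-- Case `a = 0`. -/
lemma st5_case2 [IsAlgClosed k] (hr : 3 ≤ r)
    (a : Fin 2 → MvPolynomial (Fin r) k) (b : Fin 3 → MvPolynomial (Fin r) k)
    (c : Fin 2 → MvPolynomial (Fin r) k) (e : Fin 2 → Fin 3 → MvPolynomial (Fin r) k)
    (f : Fin 2 → Fin 2 → MvPolynomial (Fin r) k) (g : Fin 3 → Fin 2 → MvPolynomial (Fin r) k)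
    (ha0 : a 0 = 0) (ha1 : a 1 = 0)
    (hbg : ∀ j, b 0 * g 0 j + b 1 * g 1 j + b 2 * g 2 j = 0)
    (heg : ∀ i j, e i 0 * g 0 j + e i 1 * g 1 j + e i 2 * g 2 j = 0)
    (hb0 : ∀ j, eval 0 (b j) = 0) (hc0 : ∀ j, eval 0 (c j) = 0)
    (hg0 : ∀ i j, eval 0 (g i j) = 0)
    (hD : ∀ x : Fin r → k, x ≠ 0 → 4 ≤ ((st5D a b c e f g).map (eval x)).rank) : False := by
  let G : Matrix (Fin 3) (Fin 2) (MvPolynomial (Fin r) k) := Matrix.of g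
  have hG : G = !![g 0 0, g 0 1; g 1 0, g 1 1; g 2 0, g 2 1] := by
    ext1 i j
    fin_cases i <;> fin_cases j <;> rfl
  let B : Matrix (Fin 3) (Fin 3) (MvPolynomial (Fin r) k) :=
    !![b 0, b 1, b 2; e 0 0, e 0 1, e 0 2; e 1 0, e 1 1, e 1 2]
  have hBG : B * G = 0 := by
    have h0 := hbg 0
    have h1 := hbg 1
    have h2 := heg 0 0
    have h3 := heg 0 1
    have h4 := heg 1 0
    have h5 := heg 1 1
    ext1 i j
    fin_cases i <;> fin_cases j <;> simp [B, G, Matrix.mul_apply, Fin.sum_univ_succ]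
    · linear_combination h0
    · linear_combination h1
    · linear_combination h2
    · linear_combination h3
    · linear_combination h4
    · linear_combination h5
  have rB : ∀ x : Fin r → k, x ≠ 0 → 2 ≤ (B.map (eval x)).rank := fun x hx => by
    have := st5_rank (D := st5D a b c e f g)
      !![1, 0, 0; 0, 1, 0; 0, 0, 1; 0, 0, 0; 0, 0, 0; 0, 0, 0; 0, 0, 0; 0, 0, 0]
      B
      !![0, 0, 0, 1, 0, 0, 0, 0; 0, 0, 0, 0, 1, 0, 0, 0; 0, 0, 0, 0, 0, 1, 0, 0]
      !![c 0, c 1; f 0 0, f 0 1; f 1 0, f 1 1; g 0 0, g 0 1; g 1 0, g 1 1;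
         g 2 0, g 2 1; 0, 0; 0, 0]
      !![0, 0, 0, 0, 0, 0, 1, 0; 0, 0, 0, 0, 0, 0, 0, 1]
      (by
        simp [st5D, B, ha0, ha1]) x (hD x hx)
    simp only [Fintype.card_fin] at this
    omega
  have rG : ∀ x : Fin r → k, x ≠ 0 → 1 ≤ (G.map (eval x)).rank := fun x hx => by
    rw [hG]
    have := st5_rank (D := st5D a b c e f g)
      !![0, 0, 0; 0, 0, 0; 0, 0, 0; 1, 0, 0; 0, 1, 0; 0, 0, 1; 0, 0, 0; 0, 0, 0]
      !![g 0 0, g 0 1; g 1 0, g 1 1; g 2 0, g 2 1]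
      !![0, 0, 0, 0, 0, 0, 1, 0; 0, 0, 0, 0, 0, 0, 0, 1]
      !![1, 0, 0; 0, 1, 0; 0, 0, 1; 0, 0, 0; 0, 0, 0; 0, 0, 0; 0, 0, 0; 0, 0, 0]
      !![0, a 0, a 1, b 0, b 1, b 2, c 0, c 1;
        0, 0, 0, e 0 0, e 0 1, e 0 2, f 0 0, f 0 1;
        0, 0, 0, e 1 0, e 1 1, e 1 2, f 1 0, f 1 1]
      (by
        simp [st5D]) x (hD x hx)
    simp only [Fintype.card_fin] at this
    omega
  have rG' : ∀ x : Fin r → k, x ≠ 0 → (G.map (eval x)).rank ≤ 1 := fun x hx => by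
    have h1 : B.map (eval x) * G.map (eval x) = 0 := by
      rw [← Matrix.map_mul, hBG]; ext i j; simp
    have h2 := Matrix.rank_add_rank_le_card_of_mul_eq_zero h1
    rw [Fintype.card_fin] at h2
    have := rB x hx
    omega
  have minor : ∀ i j, g i 0 * g j 1 - g i 1 * g j 0 = 0 := fun i j => by
    apply MvPolynomial.funext
    intro x
    by_cases hx : x = 0
    · subst hx; simp only [map_sub, map_mul, hg0]; simp
    by_contra hne
    have hdet : IsUnit ((G.map (eval x)).submatrix ![i, j] id) := by
      rw [Matrix.isUnit_iff_isUnit_det, isUnit_iff_ne_zero, Matrix.det_fin_two]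
      simpa [G] using hne
    have h2 := Matrix.rank_of_isUnit _ hdet
    have h3 : (G.map (eval x)).submatrix ![i, j] id =
        ((1 : Matrix (Fin 3) (Fin 3) k).submatrix ![i, j] id) * G.map (eval x) := by
      have := Matrix.submatrix_mul_equiv (1 : Matrix (Fin 3) (Fin 3) k) (G.map (eval x))
        ![i, j] (Equiv.refl _) id
      rw [Matrix.one_mul] at this
      exact this.symm
    rw [h3] at h2
    have h4 := Matrix.rank_mul_le_right
      ((1 : Matrix (Fin 3) (Fin 3) k).submatrix ![i, j] id) (G.map (eval x))
    rw [h2, Fintype.card_fin] at h4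
    have := rG' x hx
    omega
  have hex : ∃ i, ¬ (g i 0 = 0 ∧ g i 1 = 0) := by
    by_contra hcon
    push Not at hcon
    let x : Fin r → k := fun _ => 1
    have hx : x ≠ 0 := fun h => one_ne_zero (α := k) (congrFun h ⟨0, by omega⟩)
    have h1 := rG x hx
    have h0 : G.map (eval x) = 0 := by
      ext i j
      fin_cases j <;> simp [G, hcon i]
    rw [h0, Matrix.rank_zero] at h1
    omega
  obtain ⟨i, hi⟩ := hex
  obtain ⟨h, p, q, hp, hq, hh, hgcd⟩ := st5_gcd _ _ hi
  choose γ hγ1 hγ0 using fun j => hgcd (g j 1) (- g j 0) (by linear_combination minor i j)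
  have hγ0' : ∀ j, g j 0 = -(p * γ j) := fun j => by rw [← hγ0 j]; ring
  have gne : ∀ x : Fin r → k, x ≠ 0 → ¬ (∀ j, eval x (g j 0) = 0 ∧ eval x (g j 1) = 0) :=
    fun x hx hcon => by
      have h1 := rG x hx
      have h0 : G.map (eval x) = 0 := by
        ext i j
        fin_cases j <;> simp [G, hcon i]
      rw [h0, Matrix.rank_zero] at h1
      omega
  obtain ⟨u, v, huv⟩ := st5_unimod hr p q (fun x hx ⟨h1, h2⟩ => gne x hx fun j => by
    rw [hγ0', hγ1]; simp [h1, h2])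
  have hγ : ∀ j, γ j = -(u * g j 0 + v * g j 1) := fun j => by
    rw [hγ0', hγ1]; linear_combination (- γ j) * huv
  let M : Matrix (Fin 3) (Fin 4) (MvPolynomial (Fin r) k) :=
    !![b 0, b 1, b 2, -q * c 0 + p * c 1;
       e 0 0, e 0 1, e 0 2, -q * f 0 0 + p * f 0 1;
       e 1 0, e 1 1, e 1 2, -q * f 1 0 + p * f 1 1]
  obtain ⟨w, hw⟩ := st5_surj hr M !![γ 0; γ 1; γ 2; 0]
    (by
      have h0 := hbg 0
      have h1 := hbg 1
      have h2 := heg 0 0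
      have h3 := heg 0 1
      have h4 := heg 1 0
      have h5 := heg 1 1
      ext1 i j
      fin_cases i <;> fin_cases j <;> simp [M, Matrix.mul_apply, Fin.sum_univ_succ, hγ]
      · linear_combination (-u) * h0 - v * h1
      · linear_combination (-u) * h2 - v * h3
      · linear_combination (-u) * h4 - v * h5)
    (by simp)
    (fun x hx => by
      have := st5_rank (D := st5D a b c e f g)
        !![1, 0, 0; 0, 1, 0; 0, 0, 1; 0, 0, 0; 0, 0, 0; 0, 0, 0; 0, 0, 0; 0, 0, 0]
        M
        !![0, 0, 0, 1, 0, 0, 0, 0; 0, 0, 0, 0, 1, 0, 0, 0; 0, 0, 0, 0, 0, 1, 0, 0;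
           0, 0, 0, 0, 0, 0, -v, u]
        !![u * c 0 + v * c 1; u * f 0 0 + v * f 0 1; u * f 1 0 + v * f 1 1;
           -γ 0; -γ 1; -γ 2; 0; 0]
        !![0, 0, 0, 0, 0, 0, p, q]
        (by
          simp [st5D, M, ha0, ha1, hγ0', hγ1]
          refine ⟨⟨?_, ?_⟩, ⟨?_, ?_⟩, ⟨?_, ?_⟩, ⟨?_, ?_⟩, ⟨?_, ?_⟩, ?_, ?_⟩
          · linear_combination (- c 0) * huv
          · linear_combination (- c 1) * huv
          · linear_combination (- f 0 0) * huv
          · linear_combination (- f 0 1) * huv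
          · linear_combination (- f 1 0) * huv
          · linear_combination (- f 1 1) * huv
          all_goals ring) x (hD x hx)
      simp only [Fintype.card_fin] at this ⊢
      omega)
    (fun x hx => by
      rw [Fintype.card_fin]
      refine st5_rank_pos _ fun h0 => gne x hx fun j => ?_
      have hz : eval x (γ j) = 0 := by
        fin_cases j
        · simpa using congrFun (congrFun h0 0) 0
        · simpa using congrFun (congrFun h0 1) 0
        · simpa using congrFun (congrFun h0 2) 0
      rw [hγ0', hγ1]; simp [hz])
    ![1, 0, 0]
  have h1 := congrArg (eval 0) (congrFun hw 0)
  simp [M, Matrix.mulVec, dotProduct, Fin.sum_univ_succ, -eval_zero, hb0, hc0] at h1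

set_option maxHeartbeats 1000000 in
lemma st5_core [IsAlgClosed k] (D : Matrix (Fin 8) (Fin 8) (MvPolynomial (Fin r) k))
    (hDD : D * D = 0) (h0 : ∀ i j : Fin 8, eval (0 : Fin r → k) (D i j) = 0)
    (hrk : ∀ x : Fin r → k, x ≠ 0 → 4 ≤ (D.map (eval x)).rank)
    (hz : ∀ i j : Fin 8,
        ¬((1 ≤ (i : ℕ) + 1 ∧ (i : ℕ) + 1 ≤ 1 ∧ 2 ≤ (j : ℕ) + 1 ∧ (j : ℕ) + 1 ≤ 8) ∨
          (2 ≤ (i : ℕ) + 1 ∧ (i : ℕ) + 1 ≤ 3 ∧ 4 ≤ (j : ℕ) + 1 ∧ (j : ℕ) + 1 ≤ 8) ∨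
          (4 ≤ (i : ℕ) + 1 ∧ (i : ℕ) + 1 ≤ 6 ∧ 7 ≤ (j : ℕ) + 1 ∧ (j : ℕ) + 1 ≤ 8)) →
        D i j = 0) : r < 3 := by
  by_contra hr
  push Not at hr
  let a : Fin 2 → MvPolynomial (Fin r) k := ![D 0 1, D 0 2]
  let b : Fin 3 → MvPolynomial (Fin r) k := ![D 0 3, D 0 4, D 0 5]
  let c : Fin 2 → MvPolynomial (Fin r) k := ![D 0 6, D 0 7]
  let e : Fin 2 → Fin 3 → MvPolynomial (Fin r) k := ![![D 1 3, D 1 4, D 1 5], ![D 2 3, D 2 4, D 2 5]]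
  let f : Fin 2 → Fin 2 → MvPolynomial (Fin r) k := ![![D 1 6, D 1 7], ![D 2 6, D 2 7]]
  let g : Fin 3 → Fin 2 → MvPolynomial (Fin r) k := ![![D 3 6, D 3 7], ![D 4 6, D 4 7], ![D 5 6, D 5 7]]
  have hD : D = st5D a b c e f g := by
    ext1 i j
    fin_cases i <;> fin_cases j <;>
      first
      | exact hz _ _ (by decide)
      | rfl
  have sq : ∀ i j, (st5D a b c e f g * st5D a b c e f g) i j = 0 := fun i j => by
    rw [← hD, hDD]; rfl
  rw [hD] at hrk
  have hae : ∀ j, a 0 * e 0 j + a 1 * e 1 j = 0 := fun j => by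
    have h3 := sq 0 3
    have h4 := sq 0 4
    have h5 := sq 0 5
    simp [st5D, Matrix.mul_apply, Fin.sum_univ_succ] at h3 h4 h5
    fin_cases j <;> assumption
  have haf : ∀ j, a 0 * f 0 j + a 1 * f 1 j + (b 0 * g 0 j + b 1 * g 1 j + b 2 * g 2 j) = 0 :=
    by
      have h3 := sq 0 6
      have h4 := sq 0 7
      simp [st5D, Matrix.mul_apply, Fin.sum_univ_succ] at h3 h4
      rw [Fin.forall_fin_two]
      constructor
      · linear_combination h3
      · linear_combination h4
  have heg : ∀ i j, e i 0 * g 0 j + e i 1 * g 1 j + e i 2 * g 2 j = 0 := by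
    have h1 := sq 1 6
    have h2 := sq 1 7
    have h3 := sq 2 6
    have h4 := sq 2 7
    simp [st5D, Matrix.mul_apply, Fin.sum_univ_succ] at h1 h2 h3 h4
    simp only [Fin.forall_fin_two]
    refine ⟨⟨?_, ?_⟩, ?_, ?_⟩
    · linear_combination h1
    · linear_combination h2
    · linear_combination h3
    · linear_combination h4
  have he0 : ∀ i j, eval 0 (e i j) = 0 := fun i j => by fin_cases i <;> fin_cases j <;> exact h0 _ _
  have hb0 : ∀ j, eval 0 (b j) = 0 := fun j => by fin_cases j <;> exact h0 _ _
  have hc0 : ∀ j, eval 0 (c j) = 0 := fun j => by fin_cases j <;> exact h0 _ _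
  have hg0 : ∀ i j, eval 0 (g i j) = 0 := fun i j => by fin_cases i <;> fin_cases j <;> exact h0 _ _
  by_cases ha : a 0 = 0 ∧ a 1 = 0
  · refine st5_case2 hr a b c e f g ha.1 ha.2 (fun j => ?_) heg hb0 hc0 hg0 hrk
    have := haf j
    rw [ha.1, ha.2] at this
    linear_combination this
  · exact st5_case1 hr a b c e f g ha hae haf heg he0 hrk

end Rank

theorem statement_5 {k : Type*} [Field k] [IsAlgClosed k] {r : ℕ}
    (D : Matrix (Fin 8) (Fin 8) (MvPolynomial (Fin r) k))
    (hstd : StandardConditions D)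
    (hzero : (∀ i j : Fin 8,
        ¬((1 ≤ (i : ℕ) + 1 ∧ (i : ℕ) + 1 ≤ 1 ∧ 2 ≤ (j : ℕ) + 1 ∧ (j : ℕ) + 1 ≤ 8) ∨
          (2 ≤ (i : ℕ) + 1 ∧ (i : ℕ) + 1 ≤ 3 ∧ 4 ≤ (j : ℕ) + 1 ∧ (j : ℕ) + 1 ≤ 8) ∨
          (4 ≤ (i : ℕ) + 1 ∧ (i : ℕ) + 1 ≤ 6 ∧ 7 ≤ (j : ℕ) + 1 ∧ (j : ℕ) + 1 ≤ 8)) →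
        D i j = 0) ∨
      (∀ i j : Fin 8,
        ¬((1 ≤ (i : ℕ) + 1 ∧ (i : ℕ) + 1 ≤ 2 ∧ 3 ≤ (j : ℕ) + 1 ∧ (j : ℕ) + 1 ≤ 8) ∨
          (3 ≤ (i : ℕ) + 1 ∧ (i : ℕ) + 1 ≤ 5 ∧ 6 ≤ (j : ℕ) + 1 ∧ (j : ℕ) + 1 ≤ 8) ∨
          (6 ≤ (i : ℕ) + 1 ∧ (i : ℕ) + 1 ≤ 7 ∧ 8 ≤ (j : ℕ) + 1 ∧ (j : ℕ) + 1 ≤ 8)) →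
        D i j = 0)) :
    r < 3 := by
  obtain ⟨-, hDD, h0, hrk, -⟩ := hstd
  rcases hzero with hA | hB
  · exact st5_core D hDD h0 (fun x hx => (hrk x hx).ge) hA
  · refine st5_core (D.transpose.submatrix Fin.revPerm Fin.revPerm) ?_ (fun i j => h0 _ _)
      (fun x hx => ?_) (fun i j hij => hB _ _ ?_)
    · rw [Matrix.submatrix_mul_equiv _ _ _ Fin.revPerm, ← Matrix.transpose_mul, hDD]
      rfl
    · have : (D.transpose.submatrix Fin.revPerm Fin.revPerm).map (eval x) =
          (D.map (eval x)).transpose.submatrix Fin.revPerm Fin.revPerm := rfl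
      rw [this, Matrix.rank_submatrix, Matrix.rank_transpose]
      exact (hrk x hx).ge
    · intro h
      apply hij
      simp only [Fin.revPerm_apply, Fin.val_rev] at h
      omega
end

section
/- Let k be an algebraically closed field and S = k[x_1,...,x_r]. Suppose D = (p_{ij}) is an 8×8 matrix with entries in S satisfying the standard conditions, and suppose moreover that p_{ij} = 0 unless 1 ≤ i ≤ 4 and 5 ≤ j ≤ 8. Then r < 2, i.e., r ≤ 1. -/
open MvPolynomial

theorem eval_zero_ne_aux {k : Type*} [Field k] [IsAlgClosed k] {r : ℕ} (hr : 2 ≤ r)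
    (f : MvPolynomial (Fin r) k) (h : ∀ a : Fin r → k, a ≠ 0 → eval a f ≠ 0) :
    eval 0 f ≠ 0 := by
  let L : (Fin r → k) → (Fin r → k) → Polynomial k := fun u v =>
    aeval (fun i => Polynomial.C (u i) + Polynomial.C (v i) * Polynomial.X) f
  have hL : ∀ u v t, (L u v).eval t = eval (u + t • v) f := by
    intro u v t
    change Polynomial.evalRingHom t (aeval _ f) = _
    rw [MvPolynomial.aeval_def, MvPolynomial.hom_eval₂, MvPolynomial.eval, MvPolynomial.coe_eval₂Hom]
    congr 1
    · exact RingHom.ext fun x => Polynomial.eval_C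
    · ext i
      simp only [map_add, map_mul, Polynomial.coe_evalRingHom, Polynomial.eval_C, Polynomial.eval_X,
        Pi.add_apply, Pi.smul_apply, smul_eq_mul, Function.comp_apply]
      ring
  let e0 : Fin r → k := Pi.single ⟨0, by omega⟩ 1
  let e1 : Fin r → k := Pi.single ⟨1, by omega⟩ 1
  have h00 : e0 ⟨0, by omega⟩ = 1 := by simp [e0]
  have h10 : e1 ⟨0, by omega⟩ = 0 := by simp [e1]
  have h11 : e1 ⟨1, by omega⟩ = 1 := by simp [e1]
  have h01 : e0 ⟨1, by omega⟩ = 0 := by simp [e0]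
  have key : ∀ y : k, y ≠ 0 → eval (y • e1) f = eval (e0 + y • e1) f := by
    intro y hy
    have hdeg : (L (y • e1) e0).degree = 0 := by
      by_contra hd
      obtain ⟨x, hx⟩ := IsAlgClosed.exists_root _ hd
      rw [Polynomial.IsRoot, hL] at hx
      refine h _ ?_ hx
      intro h0
      have := congrFun h0 ⟨1, by omega⟩
      simp [h11, h01, hy] at this
    have hc := Polynomial.eq_C_of_degree_eq_zero hdeg
    have a0 := hL (y • e1) e0 0
    have a1 := hL (y • e1) e0 1
    rw [hc, Polynomial.eval_C] at a0 a1
    rw [zero_smul, add_zero] at a0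
    rw [one_smul, add_comm] at a1
    rw [← a0, ← a1]
  have hz : L 0 e1 = L e0 e1 := by
    apply Polynomial.eq_of_infinite_eval_eq
    refine Set.Infinite.mono (s := {0}ᶜ) ?_ (Set.finite_singleton (0 : k)).infinite_compl
    intro y hy
    simp only [Set.mem_ofPred_eq, hL, zero_add]
    exact key y hy
  have h0 := hL 0 e1 0
  have h1 := hL e0 e1 0
  rw [hz, h1] at h0
  simp only [zero_smul, add_zero] at h0
  rw [← h0]
  apply h
  intro hh
  rw [hh] at h00
  simp at h00

theorem det_ne_aux {k : Type*} [Field k] (D : Matrix (Fin 8) (Fin 8) k) (hD : D.rank = 4)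
    (hzero : ∀ i j : Fin 8, ¬ ((i : ℕ) < 4 ∧ 4 ≤ (j : ℕ)) → D i j = 0) :
    (Matrix.of fun i j : Fin 4 => D (Fin.castAdd 4 i) (Fin.natAdd 4 j)).det ≠ 0 := by
  set M : Matrix (Fin 4) (Fin 4) k :=
    Matrix.of fun i j : Fin 4 => D (Fin.castAdd 4 i) (Fin.natAdd 4 j) with hM
  intro hdet
  let P : Matrix (Fin 8) (Fin 4) k := Matrix.of fun i j => if i = Fin.castAdd 4 j then 1 else 0
  let Q : Matrix (Fin 4) (Fin 8) k := Matrix.of fun i j => if j = Fin.natAdd 4 i then 1 else 0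
  have hfac : D = P * M * Q := by
    ext i j
    simp only [Matrix.mul_apply, P, Q, M, Matrix.of_apply, ite_mul, one_mul, zero_mul, mul_ite,
      mul_one, mul_zero]
    by_cases hij : (i : ℕ) < 4 ∧ 4 ≤ (j : ℕ)
    · have hi : i = Fin.castAdd 4 (⟨i, hij.1⟩ : Fin 4) := Fin.ext (by simp)
      have hj : j = Fin.natAdd 4 (⟨j - 4, by omega⟩ : Fin 4) := Fin.ext (by simp; omega)
      rw [Finset.sum_eq_single ⟨j - 4, by omega⟩, if_pos hj, Finset.sum_eq_single ⟨i, hij.1⟩,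
        if_pos hi, ← hi, ← hj]
      · intro b _ hb
        refine if_neg fun h => hb (Fin.ext ?_)
        simp [h]
      · simp
      · intro b _ hb
        refine if_neg fun h => hb (Fin.ext ?_)
        simp [h]
      · simp
    · rw [hzero i j hij]
      symm
      refine Finset.sum_eq_zero fun b _ => ?_
      split_ifs with h1
      · refine Finset.sum_eq_zero fun c _ => if_neg fun h2 => hij ?_
        have e1 := congrArg Fin.val h1
        have e2 := congrArg Fin.val h2
        simp only [Fin.val_natAdd, Fin.val_castAdd] at e1 e2
        have := c.2
        omega
      · rfl
  have h1 : D.rank ≤ M.rank := by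
    rw [hfac]
    exact (Matrix.rank_mul_le_left _ _).trans (Matrix.rank_mul_le_right _ _)
  obtain ⟨v, hv, hMv⟩ := Matrix.exists_mulVec_eq_zero_iff.mpr hdet
  have h2 := LinearMap.finrank_range_add_finrank_ker M.mulVecLin
  have h3 : 0 < Module.finrank k (LinearMap.ker M.mulVecLin) := by
    have : Nontrivial (LinearMap.ker M.mulVecLin) :=
      ⟨⟨v, by simpa using hMv⟩, 0, fun h => hv (congrArg Subtype.val h)⟩
    exact Module.finrank_pos
  rw [Module.finrank_fin_fun] at h2
  unfold Matrix.rank at h1 hD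
  omega

theorem statement_6 {k : Type*} [Field k] [IsAlgClosed k] {r : ℕ}
    (D : Matrix (Fin 8) (Fin 8) (MvPolynomial (Fin r) k))
    (hstd : StandardConditions D)
    (hzero : ∀ i j : Fin 8,
        ¬((1 ≤ (i : ℕ) + 1 ∧ (i : ℕ) + 1 ≤ 4 ∧ 5 ≤ (j : ℕ) + 1 ∧ (j : ℕ) + 1 ≤ 8)) →
        D i j = 0) :
    r < 2 := by
  by_contra hr
  obtain ⟨-, -, h0, hrk, -⟩ := hstd
  let M : Matrix (Fin 4) (Fin 4) (MvPolynomial (Fin r) k) :=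
    Matrix.of fun i j => D (Fin.castAdd 4 i) (Fin.natAdd 4 j)
  have hev : ∀ a : Fin r → k, eval a M.det =
      (Matrix.of fun i j : Fin 4 =>
        (D.map (eval a)) (Fin.castAdd 4 i) (Fin.natAdd 4 j)).det := by
    intro a
    rw [RingHom.map_det]
    rfl
  refine eval_zero_ne_aux (not_lt.mp hr) M.det ?_ ?_
  · intro a ha
    rw [hev]
    apply det_ne_aux _ (hrk a ha)
    intro i j hij
    rw [Matrix.map_apply, hzero i j (by omega), map_zero]
  · rw [hev]
    apply Matrix.det_eq_zero_of_row_eq_zero 0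
    intro j
    exact h0 _ _
end

section
/- Let k be an algebraically closed field and S = k[x_1,...,x_r]. Suppose D = (p_{ij}) is an 8×8 matrix with entries in S satisfying the standard conditions, and suppose moreover that p_{ij} = 0 unless (i = 1 and 2 ≤ j ≤ 8) or (2 ≤ i ≤ 3 and 4 ≤ j ≤ 8) or (4 ≤ i ≤ 5 and 6 ≤ j ≤ 8) or (6 ≤ i ≤ 7 and j = 8). Then r < 4, i.e., r ≤ 3. -/
open MvPolynomial

namespace Sq8

section alg
variable {k : Type*} [Field k] {r : ℕ}

/-- substitution killing the first `n` variables -/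
noncomputable def kill (k : Type*) [Field k] (r n : ℕ) :
    MvPolynomial (Fin r) k →ₐ[k] MvPolynomial (Fin r) k :=
  aeval (fun j : Fin r => if (j : ℕ) < n then 0 else X j)

lemma kill_comp {n m : ℕ} (h : n ≤ m) : (kill k r m).comp (kill k r n) = kill k r m := by
  apply MvPolynomial.algHom_ext
  intro j
  simp only [kill, AlgHom.comp_apply, aeval_X]
  by_cases hj : (j : ℕ) < n
  · have : (j : ℕ) < m := by omega
    simp [hj, this]
  · simp [hj]

lemma height_ker_kill (n : ℕ) (hn : n ≤ r) :
    (n : ℕ∞) ≤ (RingHom.ker (kill k r n)).height := by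
  induction n with
  | zero => simp
  | succ n ih =>
    have h1 := ih (by omega)
    have hp1 : (RingHom.ker (kill k r n)).IsPrime := RingHom.ker_isPrime _
    have hp2 : (RingHom.ker (kill k r (n+1))).IsPrime := RingHom.ker_isPrime _
    have hlt : RingHom.ker (kill k r n) < RingHom.ker (kill k r (n+1)) := by
      refine lt_of_le_of_ne ?_ ?_
      · intro p hp
        rw [RingHom.mem_ker] at hp ⊢
        rw [← kill_comp (Nat.le_succ n), AlgHom.comp_apply, hp, map_zero]
      · intro he
        have hx : (X ⟨n, by omega⟩ : MvPolynomial (Fin r) k) ∈ RingHom.ker (kill k r (n+1)) := by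
          rw [RingHom.mem_ker]; simp [kill]
        rw [← he, RingHom.mem_ker] at hx
        simp [kill] at hx
    have := Ideal.height_add_one_le_of_lt_of_isPrime hlt
    push_cast
    exact (add_le_add_left h1 1).trans this

lemma height_origin (hr : 4 ≤ r) :
    (4 : ℕ∞) ≤ (RingHom.ker (eval (0 : Fin r → k))).height := by
  refine (height_ker_kill (k := k) (r := r) 4 hr).trans ?_
  apply Ideal.height_mono
  intro p hp
  rw [RingHom.mem_ker] at hp ⊢
  have : (eval (0 : Fin r → k)) (kill k r 4 p) = eval 0 p := by
    simp only [kill, aeval_def, ← coe_eval₂Hom]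
    rw [← RingHom.comp_apply]
    congr 1
    apply MvPolynomial.ringHom_ext
    · intro c; simp
    · intro j; simp; split_ifs <;> simp
  rw [← this, hp, map_zero]

/-- Three polynomials vanishing at the origin of `k^r`, `r ≥ 4`, have a common nonzero zero,
even outside the zero set of a polynomial not vanishing at the origin. -/
lemma exists_zero [IsAlgClosed k] (hr : 4 ≤ r) (f g h q : MvPolynomial (Fin r) k)
    (hf : eval 0 f = 0) (hg : eval 0 g = 0) (hh : eval 0 h = 0) (hq : eval 0 q ≠ 0) :
    ∃ z : Fin r → k, z ≠ 0 ∧ eval z f = 0 ∧ eval z g = 0 ∧ eval z h = 0 ∧ eval z q ≠ 0 := by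
  classical
  have hm : (RingHom.ker (eval (0 : Fin r → k))).IsPrime := RingHom.ker_isPrime _
  let s : Finset (MvPolynomial (Fin r) k) := {f, g, h}
  have hle : Ideal.span (s : Set (MvPolynomial (Fin r) k)) ≤ RingHom.ker (eval (0 : Fin r → k)) := by
    rw [Ideal.span_le]
    intro x hx
    simp only [s, Finset.coe_insert, Finset.coe_singleton, Set.mem_insert_iff,
      Set.mem_singleton_iff] at hx
    rw [SetLike.mem_coe, RingHom.mem_ker]
    rcases hx with rfl | rfl | rfl <;> assumption
  obtain ⟨P, hP, hPm⟩ := Ideal.exists_minimalPrimes_le hle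
  have hPp : P.IsPrime := hP.isPrime
  have hht : P.height ≤ 3 := by
    refine (Ideal.height_le_card_of_mem_minimalPrimes_span_finset hP).trans ?_
    exact_mod_cast Finset.card_le_three
  have hs : ∀ x ∈ s, x ∈ P := fun x hx => hP.1.2 (Ideal.subset_span hx)
  by_contra hcon
  push Not at hcon
  have key : ∀ i, X i ∈ P := by
    intro i
    have hqP : q ∉ P := fun hqP => hq (hPm hqP)
    have : X i * q ∈ P := by
      rw [← MvPolynomial.IsPrime.vanishingIdeal_zeroLocus (K := k) P]
      rw [mem_vanishingIdeal_iff]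
      intro z hz
      rw [mem_zeroLocus_iff] at hz
      by_cases hz0 : z = 0
      · subst hz0; simp
      · have := hcon z hz0 (by simpa using hz f (hs _ (by simp [s])))
          (by simpa using hz g (hs _ (by simp [s])))
          (by simpa using hz h (hs _ (by simp [s])))
        simp [this]
    exact (hPp.mem_or_mem this).resolve_right hqP
  have hge : RingHom.ker (eval (0 : Fin r → k)) ≤ P := by
    intro p hp
    rw [← MvPolynomial.IsPrime.vanishingIdeal_zeroLocus (K := k) P, mem_vanishingIdeal_iff]
    intro z hz
    have hz0 : z = 0 := by
      funext i
      simpa using (mem_zeroLocus_iff.1 hz) _ (key i)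
    subst hz0
    simpa [RingHom.mem_ker] using hp
  have h4 := (height_origin (k := k) hr).trans ((Ideal.height_mono hge).trans hht)
  exact absurd h4 (by decide)

lemma exists_zero' [IsAlgClosed k] (hr : 4 ≤ r) (f g h : MvPolynomial (Fin r) k)
    (hf : eval 0 f = 0) (hg : eval 0 g = 0) (hh : eval 0 h = 0) :
    ∃ z : Fin r → k, z ≠ 0 ∧ eval z f = 0 ∧ eval z g = 0 ∧ eval z h = 0 := by
  obtain ⟨z, h0, h1, h2, h3, -⟩ := exists_zero hr f g h 1 hf hg hh (by simp)
  exact ⟨z, h0, h1, h2, h3⟩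

/-- extraction of the gcd -/
lemma extract (a b : MvPolynomial (Fin r) k) :
    ∃ g a' b', a = g * a' ∧ b = g * b' ∧ IsRelPrime a' b' := by
  classical
  let _ : GCDMonoid (MvPolynomial (Fin r) k) :=
    UniqueFactorizationMonoid.toGCDMonoid _
  obtain ⟨x', y', hx, hy, hu⟩ := extract_gcd a b
  exact ⟨gcd a b, x', y', hx, hy, gcd_isUnit_iff_isRelPrime.1 hu⟩

lemma syz {a b p q : MvPolynomial (Fin r) k} (h : IsRelPrime a b) (e : a * p + b * q = 0) :
    ∃ u, p = b * u ∧ q = -(a * u) := by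
  by_cases ha : a = 0
  · subst ha
    have hb : IsUnit b := isRelPrime_zero_left.1 h
    have hq : q = 0 := by
      have : b * q = 0 := by simpa using e
      exact (mul_eq_zero.1 this).resolve_left hb.ne_zero
    obtain ⟨c, hc⟩ := hb.exists_right_inv
    exact ⟨c * p, by rw [← mul_assoc, hc, one_mul], by simp [hq]⟩
  · have hd : a ∣ b * q := ⟨-p, by linear_combination e⟩
    obtain ⟨w, hw⟩ := h.dvd_of_dvd_mul_left hd
    refine ⟨-w, ?_, by rw [hw]; ring⟩
    apply mul_left_cancel₀ ha
    rw [hw] at e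
    linear_combination e

lemma X_pow_regular (i j l : Fin r) (hil : i ≠ l) (hjl : j ≠ l) (N : ℕ)
    (g a b : MvPolynomial (Fin r) k) (e : X l ^ N * g = X i ^ N * a + X j ^ N * b) :
    ∃ a' b', g = X i ^ N * a' + X j ^ N * b' := by
  classical
  let s : Set (Fin r →₀ ℕ) := {Finsupp.single i N, Finsupp.single j N}
  have hs : (fun s => monomial s (1 : k)) '' s = {X i ^ N, X j ^ N} := by
    simp [s, Set.image_pair, X_pow_eq_monomial]
  have h1 : X l ^ N * g ∈ Ideal.span ((fun s => monomial s (1 : k)) '' s) := by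
    rw [hs, Ideal.mem_span_pair]
    exact ⟨a, b, by rw [e]; ring⟩
  have h2 : g ∈ Ideal.span ((fun s => monomial s (1 : k)) '' s) := by
    rw [mem_ideal_span_monomial_image] at h1 ⊢
    intro m hm
    obtain ⟨t, ht, hle⟩ := h1 (Finsupp.single l N + m) (by
      rw [mem_support_iff, X_pow_eq_monomial, coeff_monomial_mul, one_mul]
      exact mem_support_iff.1 hm)
    refine ⟨t, ht, ?_⟩
    rcases ht with rfl | rfl
    · rw [Finsupp.single_le_iff] at hle ⊢
      simpa [Finsupp.single_apply, hil.symm] using hle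
    · rw [Finsupp.single_le_iff] at hle ⊢
      simpa [Finsupp.single_apply, hjl.symm] using hle
  rw [hs, Ideal.mem_span_pair] at h2
  obtain ⟨a', b', h⟩ := h2
  exact ⟨a', b', by rw [← h]; ring⟩

lemma X_pow_isRelPrime (i j : Fin r) (hij : i ≠ j) (N : ℕ) :
    IsRelPrime (X i ^ N : MvPolynomial (Fin r) k) (X j ^ N) := by
  apply IsRelPrime.pow
  rw [(MvPolynomial.X_prime (R := k) (i := i)).irreducible.isRelPrime_iff_not_dvd]
  rintro ⟨c, hc⟩
  have := congrArg (eval (fun l => if l = i then (0 : k) else 1)) hc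
  simp [hij.symm] at this

lemma dvd_of_relPrime {y v p q : MvPolynomial (Fin r) k} (hp : p ≠ 0) (hy : y ≠ 0)
    (h : IsRelPrime p q) (h1 : y ∣ v * p) (h2 : y ∣ v * q) : y ∣ v := by
  obtain ⟨m, hm⟩ := h1
  obtain ⟨n, hn⟩ := h2
  have e : m * q = p * n := by
    apply mul_left_cancel₀ hy
    linear_combination p * hn - q * hm
  obtain ⟨m', rfl⟩ := h.dvd_of_dvd_mul_right (Dvd.intro _ e.symm)
  exact ⟨m', mul_left_cancel₀ hp (by linear_combination hm)⟩

/-- the `3 × 3` minor of the matrix with rows `a, b, c` on three chosen columns -/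
def det3 {R : Type*} [CommRing R] {ι : Type*} (a b c : ι → R) (i j l : ι) : R :=
  a i * (b j * c l - b l * c j) - a j * (b i * c l - b l * c i) + a l * (b i * c j - b j * c i)

/-- explicit dot product -/
def dot4 {R : Type*} [CommRing R] (a u : Fin 4 → R) : R :=
  a 0 * u 0 + a 1 * u 1 + a 2 * u 2 + a 3 * u 3

/-- the vector of signed maximal minors -/
def minors {R : Type*} [CommRing R] (a b c : Fin 4 → R) : Fin 4 → R :=
  ![det3 a b c 1 2 3, -det3 a b c 0 2 3, det3 a b c 0 1 3, -det3 a b c 0 1 2]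

lemma dot_minors {R : Type*} [CommRing R] (a b c : Fin 4 → R) :
    dot4 a (minors a b c) = 0 := by
  simp [dot4, minors, det3]; ring

lemma exists_adj {R : Type*} [CommRing R] (a b c t : Fin 4 → R) :
    ∃ U, dot4 a U = dot4 t (minors a b c) ∧ dot4 b U = 0 ∧ dot4 c U = 0 := by
  let m : Fin 4 → Fin 4 → R := fun i j => b i * c j - b j * c i
  refine ⟨![- t 1 * m 2 3 + t 2 * m 1 3 - t 3 * m 1 2,
    t 0 * m 2 3 - t 2 * m 0 3 + t 3 * m 0 2,
    - t 0 * m 1 3 + t 1 * m 0 3 - t 3 * m 0 1,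
    t 0 * m 1 2 - t 1 * m 0 2 + t 2 * m 0 1], ?_, ?_, ?_⟩ <;>
  simp [dot4, minors, det3, m] <;> ring

lemma ker_minors {R : Type*} [CommRing R] (a b c v : Fin 4 → R)
    (ha : dot4 a v = 0) (hb : dot4 b v = 0) (hc : dot4 c v = 0) (i j : Fin 4) :
    v i * minors a b c j = v j * minors a b c i := by
  let m : Fin 4 → Fin 4 → (Fin 4 → R) → (Fin 4 → R) → R := fun i j b c => b i * c j - b j * c i
  have h01 : v 0 * minors a b c 1 = v 1 * minors a b c 0 := by
    simp only [dot4] at ha hb hc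
    simp [minors, det3]
    linear_combination (-m 2 3 b c) * ha + (m 2 3 a c) * hb - (m 2 3 a b) * hc
  have h02 : v 0 * minors a b c 2 = v 2 * minors a b c 0 := by
    simp only [dot4] at ha hb hc
    simp [minors, det3]
    linear_combination (m 1 3 b c) * ha - (m 1 3 a c) * hb + (m 1 3 a b) * hc
  have h03 : v 0 * minors a b c 3 = v 3 * minors a b c 0 := by
    simp only [dot4] at ha hb hc
    simp [minors, det3]
    linear_combination (-m 1 2 b c) * ha + (m 1 2 a c) * hb - (m 1 2 a b) * hc
  have h12 : v 1 * minors a b c 2 = v 2 * minors a b c 1 := by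
    simp only [dot4] at ha hb hc
    simp [minors, det3]
    linear_combination (-m 0 3 b c) * ha + (m 0 3 a c) * hb - (m 0 3 a b) * hc
  have h13 : v 1 * minors a b c 3 = v 3 * minors a b c 1 := by
    simp only [dot4] at ha hb hc
    simp [minors, det3]
    linear_combination (m 0 2 b c) * ha - (m 0 2 a c) * hb + (m 0 2 a b) * hc
  have h23 : v 2 * minors a b c 3 = v 3 * minors a b c 2 := by
    simp only [dot4] at ha hb hc
    simp [minors, det3]
    linear_combination (-m 0 1 b c) * ha + (m 0 1 a c) * hb - (m 0 1 a b) * hc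
  fin_cases i <;> fin_cases j <;> first | rfl | assumption | (symm; assumption)

/-- A `3 × 4` matrix of polynomials vanishing at the origin drops rank at a nonzero point. -/
lemma hilbert_burch [IsAlgClosed k] (hr : 3 ≤ r) (a b c : Fin 4 → MvPolynomial (Fin r) k)
    (ha : ∀ i, eval 0 (a i) = 0)
    (hm : ∀ z : Fin r → k, (∀ i, eval z (minors a b c i) = 0) → z = 0) : False := by
  classical
  set y := minors a b c with hy
  have hpow : ∀ i : Fin r, ∃ n, X i ^ n ∈ Ideal.span (Set.range y) := by
    intro i
    have : X i ∈ (Ideal.span (Set.range y)).radical := by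
      rw [← MvPolynomial.vanishingIdeal_zeroLocus_eq_radical (K := k), mem_vanishingIdeal_iff]
      intro z hz
      rw [zeroLocus_span] at hz
      have hz0 := hm z (fun i => by simpa using hz (y i) ⟨i, rfl⟩)
      simp [hz0]
    exact this
  choose n hn using hpow
  let N := ∑ i, n i
  have hN : ∀ i, ∃ t : Fin 4 → MvPolynomial (Fin r) k, X i ^ N = dot4 t y := by
    intro i
    have : X i ^ N ∈ Ideal.span (Set.range y) :=
      Ideal.pow_mem_of_pow_mem _ (hn i) (Finset.single_le_sum (fun _ _ => Nat.zero_le _) (Finset.mem_univ i))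
    rw [Ideal.mem_span_range_iff_exists_fun] at this
    obtain ⟨t, ht⟩ := this
    exact ⟨t, by rw [← ht, Fin.sum_univ_four]; rfl⟩
  choose t ht using hN
  have hU := fun i => exists_adj a b c (t i)
  choose U hUa hUb hUc using hU
  let i0 : Fin r := ⟨0, by omega⟩
  let i1 : Fin r := ⟨1, by omega⟩
  let i2 : Fin r := ⟨2, by omega⟩
  have h01 : i0 ≠ i1 := by simp [i0, i1]
  have h02 : i0 ≠ i2 := by simp [i0, i2]
  have h12 : i1 ≠ i2 := by simp [i1, i2]
  have hX : ∀ i : Fin r, (X i ^ N : MvPolynomial (Fin r) k) ≠ 0 := fun i => pow_ne_zero _ (X_ne_zero i)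
  obtain ⟨j0, hj0⟩ : ∃ j, y j ≠ 0 := by
    by_contra hcon
    push Not at hcon
    have := hX i0
    rw [ht] at this
    simp [dot4, hcon] at this
  -- the kernel is generated by the minors
  have hker : ∀ v, dot4 a v = 0 → dot4 b v = 0 → dot4 c v = 0 → ∃ g, ∀ j, v j = g * y j := by
    intro v h1 h2 h3
    have hk := ker_minors a b c v h1 h2 h3
    rw [← hy] at hk
    have hd : ∀ i, y j0 ∣ v j0 * X i ^ N := by
      intro i
      refine ⟨dot4 (t i) v, ?_⟩
      rw [ht]
      simp only [dot4]
      linear_combination t i 0 * hk j0 0 + t i 1 * hk j0 1 + t i 2 * hk j0 2 + t i 3 * hk j0 3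
    obtain ⟨g, hg⟩ := dvd_of_relPrime (hX i0) hj0 (X_pow_isRelPrime i0 i1 h01 N) (hd i0) (hd i1)
    refine ⟨g, fun j => mul_left_cancel₀ hj0 ?_⟩
    have := hk j j0
    rw [hg] at this
    linear_combination this
  have hco : ∀ i j, ∃ g, ∀ l, X j ^ N * U i l - X i ^ N * U j l = g * y l := by
    intro i j
    apply hker (fun l => X j ^ N * U i l - X i ^ N * U j l)
    · have e1 := hUa i
      have e2 := hUa j
      rw [← hy, ← ht] at e1 e2
      simp only [dot4] at e1 e2 ⊢
      linear_combination X j ^ N * e1 - X i ^ N * e2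
    · have e1 := hUb i
      have e2 := hUb j
      simp only [dot4] at e1 e2 ⊢
      linear_combination X j ^ N * e1 - X i ^ N * e2
    · have e1 := hUc i
      have e2 := hUc j
      simp only [dot4] at e1 e2 ⊢
      linear_combination X j ^ N * e1 - X i ^ N * e2
  obtain ⟨g01, hg01⟩ := hco i0 i1
  obtain ⟨g02, hg02⟩ := hco i0 i2
  obtain ⟨g12, hg12⟩ := hco i1 i2
  have hcc : X i2 ^ N * g01 = X i0 ^ N * (-g12) + X i1 ^ N * g02 := by
    apply mul_right_cancel₀ hj0
    linear_combination -X i2 ^ N * hg01 j0 + X i1 ^ N * hg02 j0 - X i0 ^ N * hg12 j0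
  obtain ⟨p, q, hpq⟩ := X_pow_regular i0 i1 i2 h02 h12 N _ _ _ hcc
  have hdv : ∀ l, ∃ u, U i0 l - q * y l = X i0 ^ N * u := by
    intro l
    have : X i0 ^ N ∣ X i1 ^ N * (U i0 l - q * y l) := by
      refine ⟨U i1 l + p * y l, ?_⟩
      have := hg01 l
      rw [hpq] at this
      linear_combination this
    exact (X_pow_isRelPrime i0 i1 h01 N).dvd_of_dvd_mul_left this
  choose u hu using hdv
  have e1 := hUa i0
  rw [← hy, ← ht] at e1
  have e2 := dot_minors a b c
  rw [← hy] at e2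
  have hone : dot4 a u = 1 := by
    apply mul_left_cancel₀ (hX i0)
    simp only [dot4] at e1 e2 ⊢
    linear_combination e1 - q * e2 - a 0 * hu 0 - a 1 * hu 1 - a 2 * hu 2 - a 3 * hu 3
  have := congrArg (eval (0 : Fin r → k)) hone
  simp only [dot4, map_add, map_mul, ha, map_one, zero_mul, add_zero] at this
  exact zero_ne_one this

end alg

section pointwise
variable {k : Type*} [Field k]

/-- block index -/
def blk : Fin 8 → ℕ := ![0, 1, 1, 2, 2, 3, 3, 4]

/-- properties of the evaluated matrix at a nonzero point -/
structure Pt (M : Matrix (Fin 8) (Fin 8) k) : Prop where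
  z : ∀ i j, blk j ≤ blk i → M i j = 0
  sq : M * M = 0
  rk : M.rank = 4

lemma Pt.exact {M : Matrix (Fin 8) (Fin 8) k} (h : Pt M) (v : Fin 8 → k) (hv : M.mulVec v = 0) :
    ∃ w, M.mulVec w = v := by
  have hle : LinearMap.range M.mulVecLin ≤ LinearMap.ker M.mulVecLin := by
    rintro _ ⟨w, rfl⟩
    simp [LinearMap.mem_ker, Matrix.mulVec_mulVec, h.sq]
  have hr : Module.finrank k (LinearMap.range M.mulVecLin) = 4 := h.rk
  have hn := LinearMap.finrank_range_add_finrank_ker M.mulVecLin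
  have he : LinearMap.range M.mulVecLin = LinearMap.ker M.mulVecLin := by
    apply Submodule.eq_of_le_of_finrank_eq hle
    rw [hr] at hn ⊢
    simp at hn
    omega
  have : v ∈ LinearMap.ker M.mulVecLin := by simpa [LinearMap.mem_ker] using hv
  rw [← he] at this
  obtain ⟨w, hw⟩ := this
  exact ⟨w, by simpa using hw⟩

lemma Pt.no_fac {M : Matrix (Fin 8) (Fin 8) k} (h : Pt M) (A : Fin 8 → Fin 3 → k)
    (B : Fin 3 → Fin 8 → k)
    (e : ∀ i j, M i j = A i 0 * B 0 j + A i 1 * B 1 j + A i 2 * B 2 j) : False := by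
  have h1 := Matrix.rank_mul_le_left (Matrix.of A) (Matrix.of B)
  have h2 := Matrix.rank_le_card_width (Matrix.of A)
  have e' : M = Matrix.of A * Matrix.of B := by
    ext i j
    simp [Matrix.mul_apply, Fin.sum_univ_three, e]
  rw [← e', h.rk] at h1
  simp at h2
  omega

lemma mulVec_eight (M : Matrix (Fin 8) (Fin 8) k) (v : Fin 8 → k) (i : Fin 8) :
    M.mulVec v i = M i 0 * v 0 + M i 1 * v 1 + M i 2 * v 2 + M i 3 * v 3 + M i 4 * v 4
      + M i 5 * v 5 + M i 6 * v 6 + M i 7 * v 7 := by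
  simp [Matrix.mulVec, dotProduct, Fin.sum_univ_eight]

/-- first five columns vanish -/
lemma Pt.cols {M : Matrix (Fin 8) (Fin 8) k} (h : Pt M) (h1 : M 0 1 = 0) (h2 : M 0 2 = 0)
    (h3 : ∀ i : Fin 8, blk i ≤ 1 → M i 3 = 0 ∧ M i 4 = 0) : False := by
  have h3' : ∀ i, M i 3 = 0 ∧ M i 4 = 0 := by
    intro i
    by_cases hi : blk i ≤ 1
    · exact h3 i hi
    · have : 2 ≤ blk i := by omega
      exact ⟨h.z _ _ this, h.z _ _ this⟩
  have h12 : ∀ i, M i 1 = 0 ∧ M i 2 = 0 := by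
    intro i
    by_cases hi : i = 0
    · subst hi; exact ⟨h1, h2⟩
    · have : 1 ≤ blk i := by
        revert hi; revert i; decide
      exact ⟨h.z _ _ this, h.z _ _ this⟩
  have h0 : ∀ i, M i 0 = 0 := fun i => h.z _ _ (Nat.zero_le _)
  apply h.no_fac (fun i j => ![M i 5, M i 6, M i 7] j)
    ![![0,0,0,0,0,1,0,0], ![0,0,0,0,0,0,1,0], ![0,0,0,0,0,0,0,1]]
  intro i j
  fin_cases j <;> simp [h0, h12, h3']

/-- rows from the third block on vanish -/
lemma Pt.rows {M : Matrix (Fin 8) (Fin 8) k} (h : Pt M) (h1 : ∀ i, 2 ≤ blk i → ∀ j, M i j = 0) :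
    False := by
  apply h.no_fac ![![1,0,0],![0,1,0],![0,0,1],![0,0,0],![0,0,0],![0,0,0],![0,0,0],![0,0,0]]
    (fun i j => ![M 0 j, M 1 j, M 2 j] i)
  intro i j
  have a3 := h1 3 (by decide) j
  have a4 := h1 4 (by decide) j
  have a5 := h1 5 (by decide) j
  have a6 := h1 6 (by decide) j
  have a7 := h1 7 (by decide) j
  fin_cases i <;> simp [a3, a4, a5, a6, a7]

lemma Pt.e_ker {M : Matrix (Fin 8) (Fin 8) k} (h : Pt M) (l : Fin 8) (hl : ∀ i, M i l = 0) :
    ∃ w, M.mulVec w = Pi.single l 1 := by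
  apply h.exact
  ext i
  simp [hl]

lemma Pt.col12 {M : Matrix (Fin 8) (Fin 8) k} (h : Pt M) (h1 : M 0 1 = 0) (h2 : M 0 2 = 0) :
    ∀ i, M i 1 = 0 ∧ M i 2 = 0 := by
  intro i
  by_cases hi : i = 0
  · subst hi; exact ⟨h1, h2⟩
  · have : 1 ≤ blk i := by
      revert hi; revert i; decide
    exact ⟨h.z _ _ this, h.z _ _ this⟩

lemma det3_mul {R : Type*} [CommRing R] (a b c u v w : Fin 8 → R) :
    det3 a b c 5 6 7 * det3 u v w 5 6 7 =
    (a 5 * u 5 + a 6 * u 6 + a 7 * u 7) *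
      ((b 5 * v 5 + b 6 * v 6 + b 7 * v 7) * (c 5 * w 5 + c 6 * w 6 + c 7 * w 7) -
       (b 5 * w 5 + b 6 * w 6 + b 7 * w 7) * (c 5 * v 5 + c 6 * v 6 + c 7 * v 7)) -
    (a 5 * v 5 + a 6 * v 6 + a 7 * v 7) *
      ((b 5 * u 5 + b 6 * u 6 + b 7 * u 7) * (c 5 * w 5 + c 6 * w 6 + c 7 * w 7) -
       (b 5 * w 5 + b 6 * w 6 + b 7 * w 7) * (c 5 * u 5 + c 6 * u 6 + c 7 * u 7)) +
    (a 5 * w 5 + a 6 * w 6 + a 7 * w 7) *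
      ((b 5 * u 5 + b 6 * u 6 + b 7 * u 7) * (c 5 * v 5 + c 6 * v 6 + c 7 * v 7) -
       (b 5 * v 5 + b 6 * v 6 + b 7 * v 7) * (c 5 * u 5 + c 6 * u 6 + c 7 * u 7)) := by
  simp only [det3]; ring

lemma Pt.caseI {M : Matrix (Fin 8) (Fin 8) k} (h : Pt M) (h1 : M 0 1 = 0) (h2 : M 0 2 = 0)
    (h13 : M 1 3 = 0) (h14 : M 1 4 = 0) (h23 : M 2 3 = 0) (h24 : M 2 4 = 0)
    (d3 : det3 (M 1) (M 2) (M 3) 5 6 7 = 0) (d4 : det3 (M 1) (M 2) (M 4) 5 6 7 = 0) : False := by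
  have hc := h.col12 h1 h2
  have h0 : ∀ i, M i 0 = 0 := fun i => h.z _ _ (Nat.zero_le _)
  have z33 := h.z 3 3 (by decide)
  have z34 := h.z 3 4 (by decide)
  have z43 := h.z 4 3 (by decide)
  have z44 := h.z 4 4 (by decide)
  obtain ⟨u, hu⟩ := h.e_ker 1 (fun i => (hc i).1)
  obtain ⟨v, hv⟩ := h.e_ker 2 (fun i => (hc i).2)
  have row : ∀ w : Fin 8 → k, ∀ i : Fin 8, (i = 1 ∨ i = 2 ∨ i = 3 ∨ i = 4) →
      M.mulVec w i = M i 5 * w 5 + M i 6 * w 6 + M i 7 * w 7 := by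
    intro w i hi
    rw [mulVec_eight]
    rcases hi with rfl | rfl | rfl | rfl <;> simp [h0, hc, h13, h14, h23, h24, z33, z34, z43, z44]
  have key : ∀ x y : k, (∃ w, M.mulVec w = Pi.single 3 x + Pi.single 4 y) → x = 0 ∧ y = 0 := by
    rintro x y ⟨w, hw⟩
    have E : ∀ (w' : Fin 8 → k) (i : Fin 8) (c : k) (f : Fin 8 → k), M.mulVec w' = f → f i = c →
        (i = 1 ∨ i = 2 ∨ i = 3 ∨ i = 4) → M i 5 * w' 5 + M i 6 * w' 6 + M i 7 * w' 7 = c := by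
      intro w' i c f hf hc hi
      rw [← row w' i hi, hf, hc]
    have u1 := E u 1 1 _ hu (by simp) (by simp)
    have u2 := E u 2 0 _ hu (by simp) (by simp)
    have u3 := E u 3 0 _ hu (by simp) (by simp)
    have u4 := E u 4 0 _ hu (by simp) (by simp)
    have v1 := E v 1 0 _ hv (by simp) (by simp)
    have v2 := E v 2 1 _ hv (by simp) (by simp)
    have v3 := E v 3 0 _ hv (by simp) (by simp)
    have v4 := E v 4 0 _ hv (by simp) (by simp)
    have w1 := E w 1 0 _ hw (by simp) (by simp)
    have w2 := E w 2 0 _ hw (by simp) (by simp)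
    have w3 := E w 3 x _ hw (by simp) (by simp)
    have w4 := E w 4 y _ hw (by simp) (by simp)
    have m3 := det3_mul (M 1) (M 2) (M 3) u v w
    have m4 := det3_mul (M 1) (M 2) (M 4) u v w
    rw [d3, u1, u2, u3, v1, v2, v3, w1, w2, w3] at m3
    rw [d4, u1, u2, u4, v1, v2, v4, w1, w2, w4] at m4
    constructor
    · linear_combination -m3
    · linear_combination -m4
  have k34 : ∀ x y : k, M 0 3 * x + M 0 4 * y = 0 → x = 0 ∧ y = 0 := by
    intro x y hxy
    apply key
    apply h.exact
    ext i
    rw [mulVec_eight]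
    have z3 : ∀ i, i ≠ 0 → M i 3 = 0 := by
      intro i hi
      by_cases hb : 2 ≤ blk i
      · exact h.z _ _ hb
      · have : i = 1 ∨ i = 2 := by revert hi hb; revert i; decide
        rcases this with rfl | rfl <;> assumption
    have z4 : ∀ i, i ≠ 0 → M i 4 = 0 := by
      intro i hi
      by_cases hb : 2 ≤ blk i
      · exact h.z _ _ hb
      · have : i = 1 ∨ i = 2 := by revert hi hb; revert i; decide
        rcases this with rfl | rfl <;> assumption
    by_cases hi : i = 0
    · subst hi; simpa [Pi.single_apply] using hxy
    · simp [z3 i hi, z4 i hi]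
  have a := k34 (M 0 4) (-M 0 3) (by ring)
  have b := k34 1 0 (by rw [neg_eq_zero.1 a.2]; simp)
  exact one_ne_zero b.1

/-- the terminal configuration -/
lemma Pt.caseU {M : Matrix (Fin 8) (Fin 8) k} (h : Pt M) (h1 : M 0 1 = 0) (h2 : M 0 2 = 0)
    (h35 : M 3 5 = 0) (h36 : M 3 6 = 0) (h45 : M 4 5 = 0) (h46 : M 4 6 = 0)
    (x y : k) (hxy : x ≠ 0 ∨ y ≠ 0)
    (hrow : ∀ j : Fin 8, j ≠ 7 → x * M 1 j + y * M 2 j = 0) : False := by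
  have hc := h.col12 h1 h2
  have h0 : ∀ i, M i 0 = 0 := fun i => h.z _ _ (Nat.zero_le _)
  have hlow : ∀ i : Fin 8, 2 ≤ blk i → ∀ j, j ≠ 7 → M i j = 0 := by
    intro i hi j hj
    by_cases hb : blk j ≤ blk i
    · exact h.z _ _ hb
    · have : (i = 3 ∨ i = 4) ∧ (j = 5 ∨ j = 6) := by
        revert hi hj hb; revert i j; decide
      rcases this with ⟨rfl | rfl, rfl | rfl⟩ <;> assumption
  rcases hxy with hx | hy
  · apply h.no_fac (fun i j => ![![1,0,0], ![0, -y/x, (x * M 1 7 + y * M 2 7)/x], ![0,1,0],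
      ![0,0,M 3 7], ![0,0,M 4 7], ![0,0,M 5 7], ![0,0,M 6 7], ![0,0,M 7 7]] i j)
      (fun i j => ![M 0 j, M 2 j, if j = 7 then 1 else 0] i)
    intro i j
    by_cases hj : j = 7
    · subst hj
      fin_cases i <;> simp
      field_simp; ring
    · have a1 := hrow j hj
      have a3 := hlow 3 (by decide) j hj
      have a4 := hlow 4 (by decide) j hj
      have a5 := hlow 5 (by decide) j hj
      have a6 := hlow 6 (by decide) j hj
      have a7 := hlow 7 (by decide) j hj
      fin_cases i <;> simp [a3, a4, a5, a6, a7, hj]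
      field_simp; linear_combination a1
  · apply h.no_fac (fun i j => ![![1,0,0], ![0,1,0], ![0, -x/y, (x * M 1 7 + y * M 2 7)/y],
      ![0,0,M 3 7], ![0,0,M 4 7], ![0,0,M 5 7], ![0,0,M 6 7], ![0,0,M 7 7]] i j)
      (fun i j => ![M 0 j, M 1 j, if j = 7 then 1 else 0] i)
    intro i j
    by_cases hj : j = 7
    · subst hj
      fin_cases i <;> simp
      field_simp; ring
    · have a1 := hrow j hj
      have a3 := hlow 3 (by decide) j hj
      have a4 := hlow 4 (by decide) j hj
      have a5 := hlow 5 (by decide) j hj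
      have a6 := hlow 6 (by decide) j hj
      have a7 := hlow 7 (by decide) j hj
      fin_cases i <;> simp [a3, a4, a5, a6, a7, hj]
      field_simp; linear_combination a1

lemma cauchy_binet {R : Type*} [CommRing R] (a b c u v w : Fin 4 → R) :
    det3 ![dot4 a u, dot4 a v, dot4 a w] ![dot4 b u, dot4 b v, dot4 b w]
      ![dot4 c u, dot4 c v, dot4 c w] 0 1 2 = dot4 (minors a b c) (minors u v w) := by
  simp [det3, dot4, minors]; ring

/-- the configuration with vanishing middle block: the `3 × 4` block has rank `3` -/
lemma Pt.caseZ {M : Matrix (Fin 8) (Fin 8) k} (h : Pt M) (h1 : M 0 1 = 0) (h2 : M 0 2 = 0)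
    (h35 : M 3 5 = 0) (h36 : M 3 6 = 0) (h45 : M 4 5 = 0) (h46 : M 4 6 = 0)
    (hm : ∀ i, minors (![M 0 3, M 0 4, M 0 5, M 0 6]) (![M 1 3, M 1 4, M 1 5, M 1 6])
      (![M 2 3, M 2 4, M 2 5, M 2 6]) i = 0) : False := by
  have hc := h.col12 h1 h2
  have h0 : ∀ i, M i 0 = 0 := fun i => h.z _ _ (Nat.zero_le _)
  have hlow : ∀ i : Fin 8, 2 ≤ blk i → ∀ j, j ≠ 7 → M i j = 0 := by
    intro i hi j hj
    by_cases hb : blk j ≤ blk i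
    · exact h.z _ _ hb
    · have : (i = 3 ∨ i = 4) ∧ (j = 5 ∨ j = 6) := by
        revert hi hj hb; revert i j; decide
      rcases this with ⟨rfl | rfl, rfl | rfl⟩ <;> assumption
  have h7 : ∀ (l : Fin 8) (w : Fin 8 → k), blk l ≤ 1 → M.mulVec w = Pi.single l 1 → w 7 = 0 := by
    intro l w hl hw
    by_contra hw7
    apply h.rows
    intro i hi j
    by_cases hj : j = 7
    · subst hj
      have := congrFun hw i
      rw [mulVec_eight] at this
      have hil : i ≠ l := by rintro rfl; omega
      simpa [hlow i hi, hw7, hil] using this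
    · exact hlow i hi j hj
  obtain ⟨u, hu⟩ := h.e_ker 0 h0
  obtain ⟨v, hv⟩ := h.e_ker 1 (fun i => (hc i).1)
  obtain ⟨w, hw⟩ := h.e_ker 2 (fun i => (hc i).2)
  have u7 := h7 0 u (by decide) hu
  have v7 := h7 1 v (by decide) hv
  have w7 := h7 2 w (by decide) hw
  have E : ∀ (l : Fin 8) (w : Fin 8 → k) (i : Fin 8), M.mulVec w = Pi.single l 1 → w 7 = 0 →
      dot4 ![M i 3, M i 4, M i 5, M i 6] ![w 3, w 4, w 5, w 6] = if i = l then 1 else 0 := by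
    intro l w i hw h7
    have := congrFun hw i
    rw [mulVec_eight] at this
    simpa [h7, h0, hc, dot4, Pi.single_apply] using this
  have cb := cauchy_binet ![M 0 3, M 0 4, M 0 5, M 0 6] ![M 1 3, M 1 4, M 1 5, M 1 6]
    ![M 2 3, M 2 4, M 2 5, M 2 6] ![u 3, u 4, u 5, u 6] ![v 3, v 4, v 5, v 6] ![w 3, w 4, w 5, w 6]
  rw [E 0 u 0 hu u7, E 0 u 1 hu u7, E 0 u 2 hu u7, E 1 v 0 hv v7, E 1 v 1 hv v7, E 1 v 2 hv v7,
    E 2 w 0 hw w7, E 2 w 1 hw w7, E 2 w 2 hw w7] at cb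
  generalize minors ![u 3, u 4, u 5, u 6] ![v 3, v 4, v 5, v 6] ![w 3, w 4, w 5, w 6] = U at cb
  simp only [dot4, hm] at cb
  simp [det3] at cb

end pointwise

section global
variable {k : Type*} [Field k] {r : ℕ}

/-- the hypotheses actually used -/
structure Good (D : Matrix (Fin 8) (Fin 8) (MvPolynomial (Fin r) k)) : Prop where
  z : ∀ i j, blk j ≤ blk i → D i j = 0
  sq : D * D = 0
  e0 : ∀ i j, eval (0 : Fin r → k) (D i j) = 0
  rk : ∀ a : Fin r → k, a ≠ 0 → (D.map (eval a)).rank = 4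

variable {D : Matrix (Fin 8) (Fin 8) (MvPolynomial (Fin r) k)}

lemma Good.pt (h : Good D) (a : Fin r → k) (ha : a ≠ 0) : Pt (D.map (eval a)) where
  z i j hij := by simp [h.z i j hij]
  sq := by
    rw [← Matrix.map_mul, h.sq]
    ext; simp
  rk := h.rk a ha

lemma Good.sq_apply (h : Good D) (i j : Fin 8) :
    D i 0 * D 0 j + D i 1 * D 1 j + D i 2 * D 2 j + D i 3 * D 3 j + D i 4 * D 4 j
      + D i 5 * D 5 j + D i 6 * D 6 j + D i 7 * D 7 j = 0 := by
  have := congrFun (congrFun h.sq i) j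
  simpa [Matrix.mul_apply, Fin.sum_univ_eight] using this

/-- the anti-transpose -/
def dual (D : Matrix (Fin 8) (Fin 8) (MvPolynomial (Fin r) k)) :
    Matrix (Fin 8) (Fin 8) (MvPolynomial (Fin r) k) :=
  D.transpose.submatrix Fin.revPerm Fin.revPerm

lemma dual_apply (i j : Fin 8) : dual D i j = D j.rev i.rev := rfl

lemma Good.dual (h : Good D) : Good (dual D) where
  z i j hij := by
    rw [dual_apply]
    apply h.z
    revert hij; revert i j; decide
  sq := by
    unfold Sq8.dual
    rw [Matrix.submatrix_mul_equiv, ← Matrix.transpose_mul, h.sq]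
    ext; simp
  e0 i j := h.e0 _ _
  rk a ha := by
    have : (Sq8.dual D).map (eval a) =
        (D.map (eval a)).transpose.submatrix Fin.revPerm Fin.revPerm := rfl
    rw [this, Matrix.rank_submatrix, Matrix.rank_transpose, h.rk a ha]

lemma Good.row3 (h : Good D) (i : Fin 8) (hi : blk i = 1) :
    D i 3 * D 3 5 + D i 4 * D 4 5 = 0 ∧ D i 3 * D 3 6 + D i 4 * D 4 6 = 0 := by
  have e5 := h.sq_apply i 5
  have e6 := h.sq_apply i 6
  have z0 := h.z i 0 (by rw [hi]; decide)
  have z1 := h.z i 1 (by rw [hi]; decide)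
  have z2 := h.z i 2 (by rw [hi]; decide)
  have z55 := h.z 5 5 (by decide)
  have z65 := h.z 6 5 (by decide)
  have z75 := h.z 7 5 (by decide)
  have z56 := h.z 5 6 (by decide)
  have z66 := h.z 6 6 (by decide)
  have z76 := h.z 7 6 (by decide)
  simp only [z0, z1, z2, z55, z65, z75, z56, z66, z76, zero_mul, mul_zero, zero_add, add_zero]
    at e5 e6
  exact ⟨e5, e6⟩

lemma Good.row0 (h : Good D) (j : Fin 8) (hj : blk j = 3) :
    D 0 1 * D 1 j + D 0 2 * D 2 j + D 0 3 * D 3 j + D 0 4 * D 4 j = 0 := by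
  have e := h.sq_apply 0 j
  have z0 := h.z 0 0 (by decide)
  have z5 := h.z 5 j (by rw [hj]; decide)
  have z6 := h.z 6 j (by rw [hj]; decide)
  have z7 := h.z 7 j (by rw [hj]; decide)
  simpa only [z0, z5, z6, z7, zero_mul, mul_zero, zero_add, add_zero] using e

lemma Good.row0' (h : Good D) (j : Fin 8) (hj : blk j = 2) :
    D 0 1 * D 1 j + D 0 2 * D 2 j = 0 := by
  have e := h.sq_apply 0 j
  have z0 := h.z 0 0 (by decide)
  have z3 := h.z 3 j (by rw [hj]; decide)
  have z4 := h.z 4 j (by rw [hj]; decide)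
  have z5 := h.z 5 j (by rw [hj]; decide)
  have z6 := h.z 6 j (by rw [hj]; decide)
  have z7 := h.z 7 j (by rw [hj]; decide)
  simpa only [z0, z3, z4, z5, z6, z7, zero_mul, mul_zero, zero_add, add_zero] using e

lemma Good.col7 (h : Good D) (i : Fin 8) (hi : blk i = 1) :
    D i 3 * D 3 7 + D i 4 * D 4 7 + D i 5 * D 5 7 + D i 6 * D 6 7 = 0 := by
  have e := h.sq_apply i 7
  have z0 := h.z i 0 (by rw [hi]; decide)
  have z1 := h.z i 1 (by rw [hi]; decide)
  have z2 := h.z i 2 (by rw [hi]; decide)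
  have z7 := h.z 7 7 (by decide)
  simpa only [z0, z1, z2, z7, zero_mul, mul_zero, zero_add, add_zero] using e

lemma Good.col7' (h : Good D) (i : Fin 8) (hi : blk i = 2) :
    D i 5 * D 5 7 + D i 6 * D 6 7 = 0 := by
  have e := h.sq_apply i 7
  have z0 := h.z i 0 (by rw [hi]; decide)
  have z1 := h.z i 1 (by rw [hi]; decide)
  have z2 := h.z i 2 (by rw [hi]; decide)
  have z3 := h.z i 3 (by rw [hi]; decide)
  have z4 := h.z i 4 (by rw [hi]; decide)
  have z7 := h.z 7 7 (by decide)
  simpa only [z0, z1, z2, z3, z4, z7, zero_mul, mul_zero, zero_add, add_zero] using e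

/-- a nonzero column of the middle block is impossible when the first block vanishes -/
lemma Good.caseZ_aux [IsAlgClosed k] (hr : 4 ≤ r) (h : Good D) (h1 : D 0 1 = 0) (h2 : D 0 2 = 0)
    (s t : MvPolynomial (Fin r) k) (hst : s ≠ 0 ∨ t ≠ 0)
    (e : ∀ i : Fin 8, blk i ≤ 1 → D i 3 * s + D i 4 * t = 0) : False := by
  obtain ⟨f, s', t', hs, ht, hrel⟩ := extract s t
  have hf : f ≠ 0 := by
    rintro rfl
    simp [hs, ht] at hst
  have e' : ∀ i : Fin 8, ∃ α, blk i ≤ 1 → D i 3 = t' * α ∧ D i 4 = -(s' * α) := by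
    intro i
    by_cases hi : blk i ≤ 1
    · have : s' * D i 3 + t' * D i 4 = 0 := by
        apply mul_left_cancel₀ hf
        have := e i hi
        rw [hs, ht] at this
        linear_combination this
      obtain ⟨α, hα⟩ := syz hrel this
      exact ⟨α, fun _ => hα⟩
    · exact ⟨0, fun h => absurd h hi⟩
  choose α hα using e'
  have fin : ∀ z : Fin r → k, z ≠ 0 →
      ((eval z s' = 0 ∧ eval z t' = 0) ∨ ∀ i, blk i ≤ 1 → eval z (α i) = 0) → False := by
    intro z hz hcase
    apply (h.pt z hz).cols
    · simp [h1]
    · simp [h2]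
    · intro i hi
      simp only [Matrix.map_apply, (hα i hi).1, (hα i hi).2, map_mul, map_neg]
      rcases hcase with ⟨h3, h4⟩ | h5
      · simp [h3, h4]
      · simp [h5 i hi]
  by_cases h0 : eval 0 s' = 0 ∧ eval 0 t' = 0
  · obtain ⟨z, hz, a, b, -⟩ := exists_zero' hr s' t' 0 h0.1 h0.2 (by simp)
    exact fin z hz (Or.inl ⟨a, b⟩)
  · have hα0 : ∀ i, blk i ≤ 1 → eval 0 (α i) = 0 := by
      intro i hi
      have a3 := h.e0 i 3
      have a4 := h.e0 i 4
      rw [(hα i hi).1, map_mul, mul_eq_zero] at a3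
      rw [(hα i hi).2, map_neg, neg_eq_zero, map_mul, mul_eq_zero] at a4
      tauto
    obtain ⟨z, hz, a, b, c⟩ := exists_zero' hr (α 0) (α 1) (α 2) (hα0 0 (by decide))
      (hα0 1 (by decide)) (hα0 2 (by decide))
    refine fin z hz (Or.inr fun i hi => ?_)
    have : i = 0 ∨ i = 1 ∨ i = 2 := by revert hi; revert i; decide
    rcases this with rfl | rfl | rfl <;> assumption

lemma Good.caseZ [IsAlgClosed k] (hr : 4 ≤ r) (h : Good D) (h1 : D 0 1 = 0) (h2 : D 0 2 = 0) :
    False := by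
  have col : ∀ j : Fin 8, j = 5 ∨ j = 6 → ∀ i : Fin 8, blk i ≤ 1 →
      D i 3 * D 3 j + D i 4 * D 4 j = 0 := by
    intro j hj i hi
    by_cases hi1 : blk i = 1
    · rcases hj with rfl | rfl
      · exact (h.row3 i hi1).1
      · exact (h.row3 i hi1).2
    · have hi0 : i = 0 := by revert hi hi1; revert i; decide
      subst hi0
      have := h.row0 j (by rcases hj with rfl | rfl <;> rfl)
      simpa [h1, h2] using this
  by_cases c5 : D 3 5 ≠ 0 ∨ D 4 5 ≠ 0
  · exact h.caseZ_aux hr h1 h2 _ _ c5 (col 5 (Or.inl rfl))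
  by_cases c6 : D 3 6 ≠ 0 ∨ D 4 6 ≠ 0
  · exact h.caseZ_aux hr h1 h2 _ _ c6 (col 6 (Or.inr rfl))
  push Not at c5 c6
  apply hilbert_burch (k := k) (r := r) (by omega) ![D 0 3, D 0 4, D 0 5, D 0 6]
    ![D 1 3, D 1 4, D 1 5, D 1 6] ![D 2 3, D 2 4, D 2 5, D 2 6]
  · intro i
    fin_cases i <;> exact h.e0 _ _
  · intro z hm
    by_contra hz
    apply (h.pt z hz).caseZ
    any_goals simp [h1, h2, c5, c6]
    intro i
    rw [← hm i]
    fin_cases i <;> simp [minors, det3]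

lemma Good.caseI [IsAlgClosed k] (hr : 4 ≤ r) (h : Good D) (g a b : MvPolynomial (Fin r) k)
    (hg : g ≠ 0) (h1 : D 0 1 = g * a) (h2 : D 0 2 = g * b) (hab : IsRelPrime a b)
    (ha : eval 0 a = 0) (hb : eval 0 b = 0) (hc : D 5 7 ≠ 0 ∨ D 6 7 ≠ 0) : False := by
  obtain ⟨q, c, d, h57, h67, hcd⟩ := extract (D 5 7) (D 6 7)
  have hq : q ≠ 0 := by
    rintro rfl
    simp [h57, h67] at hc
  have hA : ∀ j, blk j = 2 → ∃ u, D 1 j = b * u ∧ D 2 j = -(a * u) := by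
    intro j hj
    apply syz hab
    apply mul_left_cancel₀ hg
    have := h.row0' j hj
    rw [h1, h2] at this
    linear_combination this
  have hB : ∀ i, blk i = 2 → ∃ u, D i 5 = d * u ∧ D i 6 = -(c * u) := by
    intro i hi
    apply syz hcd
    apply mul_left_cancel₀ hq
    have := h.col7' i hi
    rw [h57, h67] at this
    linear_combination this
  obtain ⟨u, hu1, hu2⟩ := hA 3 rfl
  obtain ⟨v, hv1, hv2⟩ := hA 4 rfl
  obtain ⟨s, hs1, hs2⟩ := hB 3 rfl
  obtain ⟨t, ht1, ht2⟩ := hB 4 rfl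
  have e1 := h.col7 1 rfl
  have e2 := h.col7 2 rfl
  rw [h57, h67, hu1, hv1] at e1
  rw [h57, h67, hu2, hv2] at e2
  obtain ⟨w, hw1, hw2⟩ : ∃ w, D 1 5 * c + D 1 6 * d = b * w ∧ D 2 5 * c + D 2 6 * d = -(a * w) := by
    apply syz hab
    apply mul_left_cancel₀ hq
    linear_combination a * e1 + b * e2
  obtain ⟨z, hz, za, zb, zd⟩ := exists_zero' hr a b (D 1 5 * D 2 6 - D 1 6 * D 2 5) ha hb
    (by simp only [map_sub, map_mul, h.e0]; ring)
  have w1 := congrArg (eval z) hw1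
  have w2 := congrArg (eval z) hw2
  simp only [map_add, map_mul, map_neg, map_sub, za, zb, zero_mul, neg_zero] at w1 w2 zd
  apply (h.pt z hz).caseI
  any_goals simp [h1, h2, hu1, hu2, hv1, hv2, za, zb]
  · simp only [det3, Matrix.map_apply, hs1, hs2, map_mul, map_neg]
    linear_combination eval z s * (eval z (D 2 7)) * w1 - eval z s * (eval z (D 1 7)) * w2
      + eval z (D 3 7) * zd
  · simp only [det3, Matrix.map_apply, ht1, ht2, map_mul, map_neg]
    linear_combination eval z t * (eval z (D 2 7)) * w1 - eval z t * (eval z (D 1 7)) * w2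
      + eval z (D 4 7) * zd

lemma Good.caseU [IsAlgClosed k] (hr : 4 ≤ r) (h : Good D) (g a b q c d : MvPolynomial (Fin r) k)
    (hg : g ≠ 0) (h1 : D 0 1 = g * a) (h2 : D 0 2 = g * b)
    (hab : eval 0 a ≠ 0 ∨ eval 0 b ≠ 0)
    (hq : q ≠ 0) (h57 : D 5 7 = q * c) (h67 : D 6 7 = q * d) (hcd : IsRelPrime c d)
    (hcd0 : eval 0 c ≠ 0 ∨ eval 0 d ≠ 0) : False := by
  have hA : ∀ j, blk j = 2 → a * D 1 j + b * D 2 j = 0 := by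
    intro j hj
    apply mul_left_cancel₀ hg
    have := h.row0' j hj
    rw [h1, h2] at this
    linear_combination this
  have hB : ∀ i, blk i = 2 → ∃ u, D i 5 = d * u ∧ D i 6 = -(c * u) := by
    intro i hi
    apply syz hcd
    apply mul_left_cancel₀ hq
    have := h.col7' i hi
    rw [h57, h67] at this
    linear_combination this
  obtain ⟨s, hs1, hs2⟩ := hB 3 rfl
  obtain ⟨t, ht1, ht2⟩ := hB 4 rfl
  have e1 := h.col7 1 rfl
  have e2 := h.col7 2 rfl
  rw [h57, h67] at e1 e2
  obtain ⟨l, hl1, hl2⟩ : ∃ l, a * D 1 5 + b * D 2 5 = d * l ∧ a * D 1 6 + b * D 2 6 = -(c * l) := by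
    apply syz hcd
    apply mul_left_cancel₀ hq
    linear_combination a * e1 + b * e2 - D 3 7 * hA 3 rfl - D 4 7 * hA 4 rfl
  have f5 := h.row0 5 rfl
  have f6 := h.row0 6 rfl
  rw [h1, h2, hs1, ht1] at f5
  rw [h1, h2, hs2, ht2] at f6
  have hgl : g * l + D 0 3 * s + D 0 4 * t = 0 := by
    rcases hcd0 with hc | hd
    · have hc' : c ≠ 0 := by rintro rfl; simp at hc
      apply mul_left_cancel₀ hc'
      linear_combination -f6 + g * hl2
    · have hd' : d ≠ 0 := by rintro rfl; simp at hd
      apply mul_left_cancel₀ hd'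
      linear_combination f5 - g * hl1
  -- vanishing at the origin
  have dv : ∀ x, eval 0 (d * x) = 0 → eval 0 (-(c * x)) = 0 → eval (0 : Fin r → k) x = 0 := by
    intro x hx1 hx2
    rw [map_mul, mul_eq_zero] at hx1
    rw [map_neg, neg_eq_zero, map_mul, mul_eq_zero] at hx2
    tauto
  have s0 : eval 0 s = 0 := dv s (hs1 ▸ h.e0 _ _) (hs2 ▸ h.e0 _ _)
  have t0 : eval 0 t = 0 := dv t (ht1 ▸ h.e0 _ _) (ht2 ▸ h.e0 _ _)
  have l0 : eval 0 l = 0 := by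
    apply dv l
    · rw [← hl1]; simp only [map_add, map_mul, h.e0]; ring
    · rw [← hl2]; simp only [map_add, map_mul, h.e0]; ring
  have g0 : eval 0 g = 0 := by
    have a1 := h.e0 0 1
    have a2 := h.e0 0 2
    rw [h1, map_mul, mul_eq_zero] at a1
    rw [h2, map_mul, mul_eq_zero] at a2
    tauto
  have hgl0 : eval 0 (g + l) = 0 := by rw [map_add, g0, l0, add_zero]
  obtain ⟨z, hz, zs, zt, zgl, zab⟩ : ∃ z : Fin r → k, z ≠ 0 ∧ eval z s = 0 ∧ eval z t = 0 ∧
      eval z (g + l) = 0 ∧ (eval z a ≠ 0 ∨ eval z b ≠ 0) := by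
    rcases hab with ha | hb
    · obtain ⟨z, x1, x2, x3, x4, x5⟩ := exists_zero hr s t (g + l) a s0 t0 hgl0 ha
      exact ⟨z, x1, x2, x3, x4, Or.inl x5⟩
    · obtain ⟨z, x1, x2, x3, x4, x5⟩ := exists_zero hr s t (g + l) b s0 t0 hgl0 hb
      exact ⟨z, x1, x2, x3, x4, Or.inr x5⟩
  have hprod := congrArg (eval z) hgl
  simp only [map_add, map_mul, zs, zt, mul_zero, add_zero, map_zero] at hprod
  rw [map_add] at zgl
  have zg : eval z g = 0 := by
    rcases mul_eq_zero.1 hprod with hh | hh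
    · exact hh
    · simpa [hh] using zgl
  have zl : eval z l = 0 := by simpa [zg] using zgl
  apply (h.pt z hz).caseU (x := eval z a) (y := eval z b) (hxy := zab)
  any_goals simp [h1, h2, hs1, hs2, ht1, ht2, zg, zs, zt]
  intro j hj
  have p3 := congrArg (eval z) (hA 3 rfl)
  have p4 := congrArg (eval z) (hA 4 rfl)
  have p5 := congrArg (eval z) hl1
  have p6 := congrArg (eval z) hl2
  simp only [map_add, map_mul, map_neg, map_zero, zl, mul_zero, neg_zero] at p3 p4 p5 p6
  by_cases hb : blk j ≤ 1
  · rw [h.z 1 j hb, h.z 2 j hb]; simp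
  · have : j = 3 ∨ j = 4 ∨ j = 5 ∨ j = 6 := by revert hj hb; revert j; decide
    rcases this with rfl | rfl | rfl | rfl <;> assumption

theorem Good.lt [IsAlgClosed k] (h : Good D) : r < 4 := by
  by_contra hr
  push Not at hr
  have hd := h.dual
  by_cases c1 : D 0 1 = 0 ∧ D 0 2 = 0
  · exact h.caseZ hr c1.1 c1.2
  by_cases c2 : D 5 7 = 0 ∧ D 6 7 = 0
  · exact hd.caseZ hr c2.2 c2.1
  have c1' : D 0 1 ≠ 0 ∨ D 0 2 ≠ 0 := by tauto
  have c2' : D 5 7 ≠ 0 ∨ D 6 7 ≠ 0 := by tauto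
  obtain ⟨g, a, b, h1, h2, hab⟩ := extract (D 0 1) (D 0 2)
  obtain ⟨q, c, d, h57, h67, hcd⟩ := extract (D 5 7) (D 6 7)
  have hg : g ≠ 0 := by
    rintro rfl
    simp [h1, h2] at c1'
  have hq : q ≠ 0 := by
    rintro rfl
    simp [h57, h67] at c2'
  by_cases hab0 : eval 0 a = 0 ∧ eval 0 b = 0
  · exact h.caseI hr g a b hg h1 h2 hab hab0.1 hab0.2 c2'
  by_cases hcd0 : eval 0 c = 0 ∧ eval 0 d = 0
  · exact hd.caseI hr q d c hq h67 h57 hcd.symm hcd0.2 hcd0.1 c1'.symm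
  exact h.caseU hr g a b q c d hg h1 h2 (by tauto) hq h57 h67 hcd (by tauto)

end global
end Sq8

theorem statement_7 {k : Type*} [Field k] [IsAlgClosed k] {r : ℕ}
    (D : Matrix (Fin 8) (Fin 8) (MvPolynomial (Fin r) k))
    (hstd : StandardConditions D)
    (hzero : ∀ i j : Fin 8,
        ¬((1 ≤ (i : ℕ) + 1 ∧ (i : ℕ) + 1 ≤ 1 ∧ 2 ≤ (j : ℕ) + 1 ∧ (j : ℕ) + 1 ≤ 8) ∨
          (2 ≤ (i : ℕ) + 1 ∧ (i : ℕ) + 1 ≤ 3 ∧ 4 ≤ (j : ℕ) + 1 ∧ (j : ℕ) + 1 ≤ 8) ∨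
          (4 ≤ (i : ℕ) + 1 ∧ (i : ℕ) + 1 ≤ 5 ∧ 6 ≤ (j : ℕ) + 1 ∧ (j : ℕ) + 1 ≤ 8) ∨
          (6 ≤ (i : ℕ) + 1 ∧ (i : ℕ) + 1 ≤ 7 ∧ 8 ≤ (j : ℕ) + 1 ∧ (j : ℕ) + 1 ≤ 8)) →
        D i j = 0) :
    r < 4 := by
  obtain ⟨-, h2, h3, h4, -⟩ := hstd
  refine Sq8.Good.lt (D := D) ⟨?_, h2, h3, h4⟩
  intro i j hij
  apply hzero
  revert hij
  revert i j
  decide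
end

section
/- Let k be an algebraically closed field and S = k[x_1,...,x_r]. Suppose D = (p_{ij}) is an 8×8 matrix with entries in S satisfying the standard conditions, and suppose moreover that p_{ij} = 0 unless (1 ≤ i ≤ 2 and 3 ≤ j ≤ 8) or (3 ≤ i ≤ 4 and 5 ≤ j ≤ 8) or (5 ≤ i ≤ 6 and 7 ≤ j ≤ 8). Then r < 3, i.e., r ≤ 2. -/
open MvPolynomial

section helpers
variable {k : Type*} [Field k] {r : ℕ}

lemma koszul_one (i j : Fin r) (hij : i ≠ j) (N : ℕ) (a b : MvPolynomial (Fin r) k)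
    (h : X j ^ N * a = X i ^ N * b) : ∃ c, a = X i ^ N * c ∧ b = X j ^ N * c := by
  have hp : IsRelPrime (X i ^ N : MvPolynomial (Fin r) k) (X j ^ N) := by
    apply IsRelPrime.pow
    refine (Irreducible.isRelPrime_iff_not_dvd (X_prime (R := k) (i := i)).irreducible).2 ?_
    rw [X_dvd_X]; simpa using hij
  have h1 : (X i ^ N : MvPolynomial (Fin r) k) ∣ a := hp.dvd_of_dvd_mul_left ⟨b, h⟩
  obtain ⟨c, rfl⟩ := h1
  refine ⟨c, rfl, ?_⟩
  have : (X i ^ N : MvPolynomial (Fin r) k) ≠ 0 := pow_ne_zero _ (X_ne_zero i)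
  apply mul_left_cancel₀ this
  rw [← h]; ring

lemma nzd_pow (i j l : Fin r) (hil : i ≠ l) (hjl : j ≠ l) (N : ℕ)
    (c : MvPolynomial (Fin r) k)
    (h : X l ^ N * c ∈ Ideal.span ({X i ^ N, X j ^ N} : Set (MvPolynomial (Fin r) k))) :
    c ∈ Ideal.span ({X i ^ N, X j ^ N} : Set (MvPolynomial (Fin r) k)) := by
  have e : ({X i ^ N, X j ^ N} : Set (MvPolynomial (Fin r) k)) =
      (fun s => monomial s (1 : k)) '' {Finsupp.single i N, Finsupp.single j N} := by
    rw [Set.image_pair, X_pow_eq_monomial, X_pow_eq_monomial]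
  rw [e, mem_ideal_span_monomial_image] at h ⊢
  intro m hm
  obtain ⟨s, hs, hle⟩ := h (m + Finsupp.single l N) (by
    rw [mem_support_iff, X_pow_eq_monomial, mul_comm, coeff_mul_monomial]
    simpa using hm)
  refine ⟨s, hs, ?_⟩
  rcases hs with rfl | rfl
  · have := hle i
    rw [Finsupp.single_le_iff]
    simpa [Finsupp.single_apply, hil.symm] using this
  · have := hle j
    rw [Finsupp.single_le_iff]
    simpa [Finsupp.single_apply, hjl.symm] using this

lemma koszul_two (x y z : Fin r) (hxy : x ≠ y) (hxz : x ≠ z) (hyz : y ≠ z) (N : ℕ)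
    (c12 c23 c31 : MvPolynomial (Fin r) k)
    (h : X z ^ N * c12 + X x ^ N * c23 + X y ^ N * c31 = 0) :
    ∃ d1 d2 d3, c12 = X y ^ N * d1 - X x ^ N * d2 ∧ c23 = X z ^ N * d2 - X y ^ N * d3 ∧
      c31 = X x ^ N * d3 - X z ^ N * d1 := by
  have h1 := nzd_pow x y z hxz hyz N c12 (by
    rw [Ideal.mem_span_pair]
    exact ⟨-c23, -c31, by linear_combination -h⟩)
  rw [Ideal.mem_span_pair] at h1
  obtain ⟨d2, d1, hd⟩ := h1
  obtain ⟨d3, h3, h4⟩ := koszul_one x y hxy N (c31 + X z ^ N * d1) (-c23 - X z ^ N * d2) (by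
    linear_combination h + X z ^ N * hd)
  exact ⟨d1, -d2, d3, by linear_combination -hd, by linear_combination -h4,
    by linear_combination h3⟩

/-- Torsion lemma. -/
lemma torsion_lemma {ι κ M : Type*} [AddCommGroup M] [Module (MvPolynomial (Fin r) k) M]
    [Module.IsTorsionFree (MvPolynomial (Fin r) k) M]
    (x y z : Fin r) (hxy : x ≠ y) (hxz : x ≠ z) (hyz : y ≠ z) (N : ℕ)
    (Y : (ι → MvPolynomial (Fin r) k) →ₗ[MvPolynomial (Fin r) k] (κ → MvPolynomial (Fin r) k))
    (Z : (κ → MvPolynomial (Fin r) k) →ₗ[MvPolynomial (Fin r) k] M)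
    (hY : Function.Injective Y) (hZY : ∀ p, Z (Y p) = 0)
    (hZ : ∀ w, Z w = 0 → ∃ p, Y p = w) (m : M)
    (h : ∀ i, ∃ w, Z w = (X i ^ N : MvPolynomial (Fin r) k) • m) : ∃ w, Z w = m := by
  choose a ha using h
  have key : ∀ i j, ∃ p, Y p = (X j ^ N : MvPolynomial (Fin r) k) • a i
      - (X i ^ N : MvPolynomial (Fin r) k) • a j := by
    intro i j
    apply hZ
    rw [map_sub, map_smul, map_smul, ha, ha, smul_smul, smul_smul, mul_comm, sub_self]
  obtain ⟨c12, h12⟩ := key x y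
  obtain ⟨c23, h23⟩ := key y z
  obtain ⟨c31, h31⟩ := key z x
  have hc : (X z ^ N : MvPolynomial (Fin r) k) • c12 + (X x ^ N : MvPolynomial (Fin r) k) • c23
      + (X y ^ N : MvPolynomial (Fin r) k) • c31 = 0 := by
    apply hY
    rw [map_add, map_add, map_smul, map_smul, map_smul, h12, h23, h31, map_zero]
    module
  have hc' : ∀ i, ∃ d1 d2 d3, c12 i = X y ^ N * d1 - X x ^ N * d2 ∧
      c23 i = X z ^ N * d2 - X y ^ N * d3 ∧ c31 i = X x ^ N * d3 - X z ^ N * d1 := fun i =>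
    koszul_two x y z hxy hxz hyz N _ _ _ (congrFun hc i)
  choose d1 d2 d3 e1 e2 e3 using hc'
  have e1' : c12 = (X y ^ N : MvPolynomial (Fin r) k) • d1
    - (X x ^ N : MvPolynomial (Fin r) k) • d2 := funext e1
  rw [e1', map_sub, map_smul, map_smul] at h12
  have hb : ∀ l, ∃ c, (a x - Y d1) l = X x ^ N * c ∧ (a y - Y d2) l = X y ^ N * c := by
    intro l
    apply koszul_one x y hxy
    have := congrFun h12 l
    simp only [Pi.sub_apply, Pi.smul_apply, smul_eq_mul] at this ⊢
    linear_combination -this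
  choose w hw1 hw2 using hb
  have hw : a x - Y d1 = (X x ^ N : MvPolynomial (Fin r) k) • w := funext hw1
  refine ⟨w, ?_⟩
  have hne : (X x ^ N : MvPolynomial (Fin r) k) ≠ 0 := pow_ne_zero _ (X_ne_zero x)
  apply smul_right_injective M hne
  show (X x ^ N : MvPolynomial (Fin r) k) • Z w = (X x ^ N : MvPolynomial (Fin r) k) • m
  rw [← map_smul, ← hw, map_sub, ha, hZY, sub_zero]

lemma null_pow [IsAlgClosed k] (I : Ideal (MvPolynomial (Fin r) k))
    (h : ∀ a : Fin r → k, a ≠ 0 → ∃ f ∈ I, eval a f ≠ 0) :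
    ∃ N : ℕ, ∀ i, (X i ^ N : MvPolynomial (Fin r) k) ∈ I := by
  have h1 : ∀ i, (X i : MvPolynomial (Fin r) k) ∈ I.radical := by
    intro i
    rw [← vanishingIdeal_zeroLocus_eq_radical (K := k)]
    rw [mem_vanishingIdeal_iff]
    intro a ha
    by_cases h0 : a = 0
    · simp [h0]
    · obtain ⟨f, hf, hfa⟩ := h a h0
      exact absurd (ha f hf) hfa
  choose n hn using h1
  refine ⟨∑ i, n i, fun i => ?_⟩
  exact Ideal.pow_mem_of_pow_mem _ (hn i) (Finset.single_le_sum (fun _ _ => Nat.zero_le _) (Finset.mem_univ i))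

lemma hyper [IsAlgClosed k] (i j : Fin r) (hij : i ≠ j) (p w : MvPolynomial (Fin r) k)
    (hp : Prime p) (h : ∀ a : Fin r → k, a ≠ 0 → eval a p = 0 → eval a w = 0) : p ∣ w := by
  have h1 : ∀ i, p ∣ X i * w := by
    intro i
    have : X i * w ∈ (Ideal.span {p}).radical := by
      rw [← vanishingIdeal_zeroLocus_eq_radical (K := k), mem_vanishingIdeal_iff]
      intro a ha
      by_cases h0 : a = 0
      · simp [h0]
      · have := h a h0 (ha p (Ideal.mem_span_singleton_self p))
        simp [this]
    obtain ⟨n, hn⟩ := this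
    rw [Ideal.mem_span_singleton] at hn
    exact hp.dvd_of_dvd_pow hn
  by_contra hw
  have hi := (hp.dvd_or_dvd (h1 i)).resolve_right hw
  have hj := (hp.dvd_or_dvd (h1 j)).resolve_right hw
  have a1 := hp.associated_of_dvd X_prime hi
  have : (X i : MvPolynomial (Fin r) k) ∣ X j := a1.symm.dvd.trans hj
  rw [X_dvd_X] at this
  simp [hij] at this

lemma exists_prime_dvd_of_not_unit (i : Fin r) (f : MvPolynomial (Fin r) k) (hf : ¬ IsUnit f) :
    ∃ p, Prime p ∧ p ∣ f := by
  by_cases h0 : f = 0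
  · exact ⟨X i, X_prime, by simp [h0]⟩
  · obtain ⟨p, hp, hd⟩ := WfDvdMonoid.exists_irreducible_factor hf h0
    exact ⟨p, hp.prime, hd⟩

end helpers
section points
set_option linter.all false
open Matrix
variable {K : Type*} [Field K]

/-- Exactness of the evaluated differential, written in `2 × 2` blocks. -/
structure PointExact (A B C E F G : Matrix (Fin 2) (Fin 2) K) : Prop where
  ex : ∀ x1 x2 x3 x4 : Fin 2 → K, A *ᵥ x2 + E *ᵥ x3 + G *ᵥ x4 = 0 → B *ᵥ x3 + F *ᵥ x4 = 0 →
    C *ᵥ x4 = 0 → ∃ y2 y3 y4 : Fin 2 → K, x1 = A *ᵥ y2 + E *ᵥ y3 + G *ᵥ y4 ∧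
      x2 = B *ᵥ y3 + F *ᵥ y4 ∧ x3 = C *ᵥ y4 ∧ x4 = 0
  exL : ∀ x1 x2 x3 x4 : Fin 2 → K, Cᵀ *ᵥ x3 + Fᵀ *ᵥ x2 + Gᵀ *ᵥ x1 = 0 →
    Bᵀ *ᵥ x2 + Eᵀ *ᵥ x1 = 0 →
    Aᵀ *ᵥ x1 = 0 → ∃ y3 y2 y1 : Fin 2 → K, x4 = Cᵀ *ᵥ y3 + Fᵀ *ᵥ y2 + Gᵀ *ᵥ y1 ∧
      x3 = Bᵀ *ᵥ y2 + Eᵀ *ᵥ y1 ∧ x2 = Aᵀ *ᵥ y1 ∧ x1 = 0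

variable {A B C E F G : Matrix (Fin 2) (Fin 2) K}

lemma PointExact.symm (h : PointExact A B C E F G) : PointExact Cᵀ Bᵀ Aᵀ Fᵀ Eᵀ Gᵀ where
  ex := fun x1 x2 x3 x4 h1 h2 h3 => h.exL x4 x3 x2 x1 h1 h2 h3
  exL := fun x1 x2 x3 x4 h1 h2 h3 => by
    simp only [transpose_transpose] at *
    exact h.ex x4 x3 x2 x1 h1 h2 h3

lemma PointExact.det_ne (h : PointExact A B C E F G) (hA : A = 0) :
    (fromBlocks E G B F).det ≠ 0 := by
  have hs : Function.Surjective (fromBlocks E G B F).mulVec := by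
    intro w
    obtain ⟨y2, y3, y4, h1, h2, h3, h4⟩ := h.ex (w ∘ Sum.inl) (w ∘ Sum.inr) 0 0
      (by simp [hA]) (by simp) (by simp)
    refine ⟨Sum.elim y3 y4, ?_⟩
    rw [fromBlocks_mulVec]
    simp only [Sum.elim_comp_inl, Sum.elim_comp_inr]
    rw [← h2]
    rw [hA, zero_mulVec, zero_add] at h1
    rw [← h1]
    exact Sum.elim_comp_inl_inr w
  rw [mulVec_surjective_iff_isUnit, isUnit_iff_isUnit_det] at hs
  exact hs.ne_zero

lemma PointExact.false_of (h : PointExact A B C E F G) (hA : A = 0) (hB : B = 0)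
    (hE : E.det = 0) : False := by
  obtain ⟨x, hx, hEx⟩ := exists_mulVec_eq_zero_iff.2 hE
  have hF : Function.Surjective F.mulVec := by
    intro w
    obtain ⟨y2, y3, y4, h1, h2, h3, h4⟩ := h.ex 0 w 0 0 (by simp [hA]) (by simp) (by simp)
    exact ⟨y4, by simpa [hB] using h2.symm⟩
  have hFi : Function.Injective F.mulVec := by
    rw [mulVec_surjective_iff_isUnit] at hF
    exact mulVec_injective_iff_isUnit.2 hF
  have hC : ∀ w, C *ᵥ w = 0 := by
    intro w
    obtain ⟨y2, y3, y4, h1, h2, h3, h4⟩ := h.ex 0 (F *ᵥ w) 0 0 (by simp [hA]) (by simp) (by simp)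
    have : w = y4 := hFi (by simpa [hB] using h2)
    rw [this, ← h3]
  obtain ⟨y2, y3, y4, h1, h2, h3, h4⟩ := h.ex 0 0 x 0 (by simp [hEx]) (by simp [hB]) (by simp)
  exact hx (by rw [h3, hC])

lemma PointExact.false_of_e_h (h : PointExact A B C E F G)
    (u v al : Fin 2 → K) (c g s : K) (hC : C = 0)
    (hF : ∀ j, u 0 * F 1 j - u 1 * F 0 j = 0)
    (hB : ∀ i j, B i j = g * u i * v j)
    (hA0 : ∀ i, A i 0 = - (c * al i * u 1)) (hA1 : ∀ i, A i 1 = c * al i * u 0)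
    (hs : ∀ j, al 0 * E 1 j - al 1 * E 0 j = s * v j) : u = 0 := by
  by_contra hu
  obtain ⟨z3, z2, z1, h1, h2, h3, h4⟩ := h.exL 0 ![-u 1, u 0] 0 0
    (by
      ext j; fin_cases j
      · simp [mulVec, dotProduct, Fin.sum_univ_two]; linear_combination hF 0
      · simp [mulVec, dotProduct, Fin.sum_univ_two]; linear_combination hF 1)
    (by
      ext j; fin_cases j <;> simp [mulVec, dotProduct, Fin.sum_univ_two, hB] <;> ring)
    (by simp)
  have e0 := congrFun h3 0
  have e1 := congrFun h3 1
  simp [mulVec, dotProduct, Fin.sum_univ_two, hA0, hA1] at e0 e1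
  have hc : c * (al 0 * z1 0 + al 1 * z1 1) = 1 := by
    by_contra hne
    have hne' : c * (al 0 * z1 0 + al 1 * z1 1) - 1 ≠ 0 := sub_ne_zero.2 hne
    apply hu
    ext i; fin_cases i
    · exact (mul_eq_zero.1 (show _ * u 0 = 0 by linear_combination -e1)).resolve_left hne'
    · exact (mul_eq_zero.1 (show _ * u 1 = 0 by linear_combination e0)).resolve_left hne'
  have hc0 : c ≠ 0 := by rintro rfl; simp at hc
  have key : ∀ p : Fin 2 → K, ∃ m0 m1 : K, (∀ j, al 0 * p j = m0 * v j) ∧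
      (∀ j, al 1 * p j = m1 * v j) := by
    intro p
    obtain ⟨w3, w2, w1, k1, k2, k3, k4⟩ := h.exL 0 0 p 0 (by simp [hC]) (by simp) (by simp)
    have f0 := congrFun k3 0
    have f1 := congrFun k3 1
    simp [mulVec, dotProduct, Fin.sum_univ_two, hA0, hA1] at f0 f1
    have hw : al 0 * w1 0 + al 1 * w1 1 = 0 := by
      by_contra hne
      have hne' := mul_ne_zero hc0 hne
      apply hu
      ext i; fin_cases i
      · exact (mul_eq_zero.1 (show _ * u 0 = 0 by linear_combination -f1)).resolve_left hne'
      · exact (mul_eq_zero.1 (show _ * u 1 = 0 by linear_combination f0)).resolve_left hne'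
    have hp : ∀ j, p j = g * (u 0 * w2 0 + u 1 * w2 1) * v j + (E 0 j * w1 0 + E 1 j * w1 1) := by
      intro j
      have := congrFun k2 j
      simp only [mulVec, dotProduct, Fin.sum_univ_two, hB, Pi.add_apply, transpose_apply] at this
      linear_combination this
    refine ⟨al 0 * (g * (u 0 * w2 0 + u 1 * w2 1)) + w1 1 * s,
      al 1 * (g * (u 0 * w2 0 + u 1 * w2 1)) - w1 0 * s, fun j => ?_, fun j => ?_⟩
    · linear_combination al 0 * hp j + w1 1 * hs j + E 0 j * hw
    · linear_combination al 1 * hp j - w1 0 * hs j + E 1 j * hw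
  obtain ⟨m0, m1, n0, n1⟩ := key ![1, 0]
  obtain ⟨m2, m3, n2, n3⟩ := key ![0, 1]
  have n00 := n0 0
  have n01 := n0 1
  have n10 := n1 0
  have n11 := n1 1
  have n20 := n2 0
  have n21 := n2 1
  have n30 := n3 0
  have n31 := n3 1
  simp at n00 n01 n10 n11 n20 n21 n30 n31
  have a0 : al 0 = 0 := by grind
  have a1 : al 1 = 0 := by grind
  simp [a0, a1] at hc

lemma exists_dual (v : Fin 2 → K) (hv : v ≠ 0) : ∃ w : Fin 2 → K, v 0 * w 0 + v 1 * w 1 = 1 := by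
  by_cases h0 : v 0 = 0
  · have h1 : v 1 ≠ 0 := by
      intro h1; apply hv; ext i; fin_cases i <;> simp [h0, h1]
    exact ⟨![0, (v 1)⁻¹], by simp [h1]⟩
  · exact ⟨![(v 0)⁻¹, 0], by simp [h0]⟩

lemma exists_par (v w : Fin 2 → K) (hv : v ≠ 0) (h : v 0 * w 1 - v 1 * w 0 = 0) :
    ∃ n, ∀ i, w i = n * v i := by
  obtain ⟨d, hd⟩ := exists_dual v hv
  refine ⟨d 0 * w 0 + d 1 * w 1, fun i => ?_⟩
  fin_cases i
  · simp; linear_combination -w 0 * hd - d 1 * h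
  · simp; linear_combination -w 1 * hd + d 0 * h

lemma PointExact.false_of_delta (h : PointExact A B C E F G)
    (u v al ga : Fin 2 → K) (c e g s t hh h' : K)
    (hu : u ≠ 0) (hv : v ≠ 0) (hal : al ≠ 0) (hga : ga ≠ 0)
    (hA0 : ∀ i, A i 0 = - (c * al i * u 1)) (hA1 : ∀ i, A i 1 = c * al i * u 0)
    (hB : ∀ i j, B i j = g * u i * v j)
    (hC0 : ∀ j, C 0 j = - (e * v 1 * ga j)) (hC1 : ∀ j, C 1 j = e * v 0 * ga j)
    (hf : ∀ j, u 0 * F 1 j - u 1 * F 0 j = hh * ga j)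
    (he : ∀ i, E i 1 * v 0 - E i 0 * v 1 = h' * al i)
    (hs : ∀ j, al 0 * E 1 j - al 1 * E 0 j = s * v j)
    (ht : ∀ i, ga 0 * F i 1 - ga 1 * F i 0 = t * u i)
    (hD : g * (al 0 * (ga 0 * G 1 1 - ga 1 * G 1 0) - al 1 * (ga 0 * G 0 1 - ga 1 * G 0 0))
      - s * t = 0) : False := by
  obtain ⟨u', hu'⟩ := exists_dual u hu
  obtain ⟨v', hv'⟩ := exists_dual v hv
  by_cases hc : c = 0 ∧ h' = 0
  · obtain ⟨rfl, rfl⟩ := hc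
    have hA : A = 0 := by
      ext i j; fin_cases j
      · simp [hA0]
      · simp [hA1]
    obtain ⟨y2, y3, y4, h1, h2, h3, h4⟩ := h.ex 0 ![-u' 1, u' 0] 0 0 (by simp [hA]) (by simp)
      (by simp)
    have a0 := congrFun h2 0
    have a1 := congrFun h2 1
    have b0 := congrFun h3 0
    have b1 := congrFun h3 1
    simp [mulVec, dotProduct, Fin.sum_univ_two, hB, hC0, hC1] at a0 a1 b0 b1
    have k1 : hh * (ga 0 * y4 0 + ga 1 * y4 1) = 1 := by
      linear_combination hu' - u 0 * a1 + u 1 * a0 - y4 0 * hf 0 - y4 1 * hf 1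
    have k2 : e * (ga 0 * y4 0 + ga 1 * y4 1) = 0 := by
      linear_combination -e * (ga 0 * y4 0 + ga 1 * y4 1) * hv' + v' 1 * b0 - v' 0 * b1
    have k3 : e = 0 := by
      rcases mul_eq_zero.1 k2 with h | h
      · exact h
      · simp [h] at k1
    obtain ⟨y2, y3, y4, h1, h2, h3, h4⟩ := h.ex 0 0 ![-v 1, v 0] 0
      (by
        ext i
        have := he i
        simp only [hA, mulVec, dotProduct, Fin.sum_univ_two, Pi.add_apply, Pi.zero_apply,
          cons_val_zero, cons_val_one, Matrix.zero_apply]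
        linear_combination this)
      (by
        ext i
        simp only [mulVec, dotProduct, Fin.sum_univ_two, hB, Pi.add_apply, Pi.zero_apply,
          cons_val_zero, cons_val_one]
        ring) (by simp)
    have b0 := congrFun h3 0
    have b1 := congrFun h3 1
    simp [mulVec, dotProduct, Fin.sum_univ_two, hC0, hC1, k3] at b0 b1
    simp [b0, b1] at hv'
  · set q := (al 0 * (ga 0 * G 1 1 - ga 1 * G 1 0) - al 1 * (ga 0 * G 0 1 - ga 1 * G 0 0)) with hq
    obtain ⟨l, m, hlm, e1, e2⟩ : ∃ l m : K, ¬ (l = 0 ∧ m = 0) ∧ l * s + m * q = 0 ∧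
        l * g + m * t = 0 := by
      by_cases h1 : q = 0 ∧ s = 0
      · by_cases h2 : t = 0 ∧ g = 0
        · exact ⟨1, 0, by simp, by simp [h1.2], by simp [h2.2]⟩
        · exact ⟨t, -g, by simpa using h2, by simp [h1.1, h1.2], by ring⟩
      · exact ⟨q, -s, by simpa using h1, by ring, by linear_combination hD⟩
    obtain ⟨n, hn⟩ := exists_par al
      (fun i => l * (E i 0 * v' 0 + E i 1 * v' 1) + m * (ga 0 * G i 1 - ga 1 * G i 0)) hal
      (by linear_combination e1 + l * v' 0 * hs 0 + l * v' 1 * hs 1 + l * s * hv' + m * hq)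
    obtain ⟨z, o, hz⟩ : ∃ z o : K, n + c * z + h' * o = 0 := by
      by_cases hc0 : c = 0
      · have : h' ≠ 0 := fun h => hc ⟨hc0, h⟩
        exact ⟨0, -n / h', by field_simp; ring⟩
      · exact ⟨-n / c, 0, by field_simp; ring⟩
    obtain ⟨y2, y3, y4, h1, h2, h3, h4⟩ := h.ex 0 ![-z * u' 1, z * u' 0]
      ![l * v' 0 - o * v 1, l * v' 1 + o * v 0] ![-m * ga 1, m * ga 0]
      (by
        ext i
        have a1 := hn i
        have a2 := he i
        simp only [mulVec, dotProduct, Fin.sum_univ_two, hA0, hA1, Pi.add_apply, Pi.zero_apply,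
          cons_val_zero, cons_val_one]
        linear_combination a1 + o * a2 + al i * hz + c * al i * z * hu')
      (by
        ext i
        have a1 := ht i
        simp only [mulVec, dotProduct, Fin.sum_univ_two, hB, Pi.add_apply, Pi.zero_apply,
          cons_val_zero, cons_val_one]
        linear_combination m * a1 + u i * e2 + g * u i * l * hv')
      (by
        ext i; fin_cases i
        · simp [mulVec, dotProduct, Fin.sum_univ_two, hC0]; ring
        · simp [mulVec, dotProduct, Fin.sum_univ_two, hC1]; ring)
    have a0 := congrFun h4 0
    have a1 := congrFun h4 1
    have b0 := congrFun h3 0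
    have b1 := congrFun h3 1
    simp [mulVec, dotProduct, Fin.sum_univ_two, hC0, hC1] at a0 a1 b0 b1
    have hl : l = 0 := by linear_combination -l * hv' + v 0 * b0 + v 1 * b1
    apply hlm
    refine ⟨hl, ?_⟩
    by_contra hm
    apply hga
    ext i; fin_cases i
    · simpa [hm] using a1
    · simpa [hm] using a0

/-- the case `B = 0` at a point -/
lemma PointExact.of_B (h : PointExact A B C E F G) (hB : B = 0) :
    (∀ y, F *ᵥ y = 0 → C *ᵥ y = 0 → y = 0) ∧ ∀ x, ∃ y2 y3, A *ᵥ y2 + E *ᵥ y3 = x := by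
  let X : ((Fin 2 → K) × (Fin 2 → K)) →ₗ[K] (Fin 2 → K) := A.mulVecLin.coprod E.mulVecLin
  let Y : (Fin 2 → K) →ₗ[K] ((Fin 2 → K) × (Fin 2 → K)) := F.mulVecLin.prod C.mulVecLin
  have hXY : LinearMap.ker X ≤ LinearMap.range Y := by
    rintro ⟨p, q⟩ hpq
    have hpq' : A *ᵥ p + E *ᵥ q = 0 := by simpa [X] using hpq
    obtain ⟨y2, y3, y4, h1, h2, h3, h4⟩ := h.ex 0 p q 0 (by rw [mulVec_zero, add_zero, hpq']) (by simp [hB]) (by simp)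
    exact ⟨y4, by simp [Y, h2, h3, hB]⟩
  have r1 := X.finrank_range_add_finrank_ker
  have r2 := Y.finrank_range_add_finrank_ker
  have r3 := Submodule.finrank_mono hXY
  have r4 := (LinearMap.range X).finrank_le
  simp at r1 r2 r4
  have r5 : Module.finrank K (LinearMap.ker Y) = 0 := by omega
  have r6 : Module.finrank K (LinearMap.range X) = Module.finrank K (Fin 2 → K) := by simp; omega
  constructor
  · intro y h1 h2
    have : y ∈ LinearMap.ker Y := by simp [Y, h1, h2]
    rwa [Submodule.finrank_eq_zero.1 r5] at this
  · intro x
    have : x ∈ LinearMap.range X := by rw [Submodule.eq_top_of_finrank_eq r6]; trivial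
    obtain ⟨⟨p, q⟩, hpq⟩ := this
    exact ⟨p, q, by simpa [X] using hpq⟩

end points
section ufd
set_option linter.all false
variable {R : Type*} [CommRing R] [IsDomain R] [UniqueFactorizationMonoid R]

lemma ufd_par (v w : Fin 2 → R) (hv : IsRelPrime (v 0) (v 1)) (h : w 0 * v 1 = w 1 * v 0) :
    ∃ s, ∀ i, w i = s * v i := by
  have h1 : v 0 ∣ w 0 := hv.dvd_of_dvd_mul_right ⟨w 1, by rw [h]; ring⟩
  obtain ⟨s, hs⟩ := h1
  by_cases h0 : v 0 = 0
  · have hu : IsUnit (v 1) := hv (by simp [h0]) dvd_rfl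
    obtain ⟨z, hz⟩ := hu.exists_left_inv
    refine ⟨w 1 * z, fun i => ?_⟩
    fin_cases i
    · simp [hs, h0]
    · simp; linear_combination -w 1 * hz
  · refine ⟨s, fun i => ?_⟩
    fin_cases i
    · simp; linear_combination hs
    · simp; apply mul_right_cancel₀ h0; linear_combination -h + v 1 * hs

lemma ufd_perp (v w : Fin 2 → R) (hv : IsRelPrime (v 0) (v 1)) (h : w 0 * v 0 + w 1 * v 1 = 0) :
    ∃ s, w 0 = -(s * v 1) ∧ w 1 = s * v 0 := by
  obtain ⟨s, hs⟩ := ufd_par v ![w 1, - w 0] hv (by simp; linear_combination h)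
  have a := hs 0
  have b := hs 1
  simp at a b
  exact ⟨s, by linear_combination -b, a⟩

lemma ufd_reduce (w : Fin 2 → R) (hw : w ≠ 0) :
    ∃ (d : R) (v : Fin 2 → R), d ≠ 0 ∧ IsRelPrime (v 0) (v 1) ∧ ∀ i, w i = d * v i := by
  have : ∃ a' b' c', IsRelPrime a' b' ∧ c' * a' = w 0 ∧ c' * b' = w 1 := by
    by_cases h0 : w 0 = 0
    · have h1 : w 1 ≠ 0 := by
        intro h1; apply hw; ext i; fin_cases i <;> simp [h0, h1]
      exact UniqueFactorizationMonoid.exists_reduced_factors' _ _ h1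
    · exact UniqueFactorizationMonoid.exists_reduced_factors _ h0 _
  obtain ⟨a, b, c, hab, ha, hb⟩ := this
  refine ⟨c, ![a, b], ?_, by simpa using hab, ?_⟩
  · rintro rfl
    apply hw; ext i; fin_cases i <;> simp [← ha, ← hb]
  · intro i; fin_cases i <;> simp [ha, hb]

lemma relPrime_ne {v : Fin 2 → R} (hv : IsRelPrime (v 0) (v 1)) : v ≠ 0 := by
  rintro rfl
  exact not_isUnit_zero (hv (dvd_refl 0) (dvd_refl 0))

lemma ufd_factor (B : Matrix (Fin 2) (Fin 2) R) (hB : B ≠ 0) (hd : B.det = 0) :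
    ∃ (g : R) (u v : Fin 2 → R), g ≠ 0 ∧ IsRelPrime (u 0) (u 1) ∧ IsRelPrime (v 0) (v 1) ∧
      ∀ i j, B i j = g * u i * v j := by
  rw [Matrix.det_fin_two] at hd
  have : ∃ v : Fin 2 → R, IsRelPrime (v 0) (v 1) ∧ ∃ w : Fin 2 → R, ∀ i j, B i j = w i * v j := by
    by_cases h0 : B 0 = 0
    · have h1 : B 1 ≠ 0 := by
        intro h1; apply hB; ext i j; fin_cases i
        · exact congrFun h0 j
        · exact congrFun h1 j
      obtain ⟨d, v, hd, hv, h⟩ := ufd_reduce (B 1) h1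
      refine ⟨v, hv, ![0, d], fun i j => ?_⟩
      fin_cases i
      · simpa using congrFun h0 j
      · simpa using h j
    · obtain ⟨d, v, hd', hv, h⟩ := ufd_reduce (B 0) h0
      obtain ⟨s, hs⟩ := ufd_par v (B 1) hv (by
        apply mul_left_cancel₀ hd'
        linear_combination -hd - B 1 0 * h 1 + B 1 1 * h 0)
      refine ⟨v, hv, ![d, s], fun i j => ?_⟩
      fin_cases i
      · simpa using h j
      · simpa using hs j
  obtain ⟨v, hv, w, hw⟩ := this
  have hw0 : w ≠ 0 := by
    rintro rfl; apply hB; ext i j; simp [hw]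
  obtain ⟨g, u, hg, hu, h⟩ := ufd_reduce w hw0
  exact ⟨g, u, v, hg, hu, hv, fun i j => by rw [hw, h]⟩

lemma ne_zero_cases {v : Fin 2 → R} (hv : v ≠ 0) : ∃ i, v i ≠ 0 := Function.ne_iff.1 hv

end ufd

section bzero
set_option linter.all false
open Matrix
variable {k : Type*} [Field k] [IsAlgClosed k] {r : ℕ}
local notation "SS" => MvPolynomial (Fin r) k

lemma no_B (x y z : Fin r) (hxy : x ≠ y) (hxz : x ≠ z) (hyz : y ≠ z)
    (P : Matrix (Fin 2) (Fin 2 ⊕ Fin 2) SS) (Q : Matrix (Fin 2 ⊕ Fin 2) (Fin 2) SS)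
    (hPQ : P * Q = 0) (h0 : ∀ i j, constantCoeff (P i j) = 0)
    (hinj : ∀ a : Fin r → k, a ≠ 0 → ∀ y, Q.map (eval a) *ᵥ y = 0 → y = 0)
    (hsurj : ∀ a : Fin r → k, a ≠ 0 → Function.Surjective (P.map (eval a)).mulVec) : False := by
  have key : ∀ a : Fin r → k, a ≠ 0 → ∃ R : Matrix (Fin 2 ⊕ Fin 2) (Fin 2) SS,
      eval a (P * R).det ≠ 0 ∧ eval a (fromCols Q R).det ≠ 0 := by
    intro a ha
    obtain ⟨R0, hR0⟩ := mulVec_surjective_iff_exists_right_inverse.1 (hsurj a ha)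
    have hR : (R0.map (C : k → SS)).map (eval a) = R0 := by ext i j; simp
    refine ⟨R0.map C, ?_, ?_⟩
    · rw [RingHom.map_det, RingHom.mapMatrix_apply, Matrix.map_mul, hR, hR0]
      simp
    · rw [RingHom.map_det, RingHom.mapMatrix_apply]
      have : (fromCols Q (R0.map (C : k → SS))).map (eval a) = fromCols (Q.map (eval a)) R0 := by
        ext i (j | j) <;> simp
      rw [this]
      intro hdet
      obtain ⟨w, hw, hw0⟩ := exists_mulVec_eq_zero_iff.2 hdet
      rw [fromCols_mulVec] at hw0
      have h1 := congrArg ((P.map (eval a)) *ᵥ ·) hw0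
      simp only [mulVec_add, mulVec_mulVec, hR0, mulVec_zero, one_mulVec, ← Matrix.map_mul, hPQ]
        at h1
      have h2 : w ∘ Sum.inr = 0 := by simpa using h1
      rw [h2, mulVec_zero, add_zero] at hw0
      have h3 := hinj a ha _ hw0
      apply hw
      ext (i | i)
      · exact congrFun h3 i
      · exact congrFun h2 i
  have hpt : (fun _ => 1 : Fin r → k) ≠ 0 := fun h => one_ne_zero (congrFun h x)
  have hQ : Function.Injective Q.mulVecLin := by
    rw [← LinearMap.ker_eq_bot, LinearMap.ker_eq_bot']
    intro p hp
    obtain ⟨R, -, hR⟩ := key _ hpt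
    by_contra hne
    have : (fromCols Q R).det = 0 := exists_mulVec_eq_zero_iff.1 ⟨Sum.elim p 0, by
      intro h; apply hne; ext1 i; exact congrFun h (Sum.inl i), by
      rw [fromCols_mulVec]; simpa using hp⟩
    simp [this] at hR
  have hPQ' : ∀ p, P.mulVecLin (Q.mulVecLin p) = 0 := by
    intro p; simp [mulVec_mulVec, hPQ]
  have hker : ∀ w, P.mulVecLin w = 0 → ∃ p, Q.mulVecLin p = w := by
    intro w hw
    obtain ⟨N, hN⟩ := null_pow ((LinearMap.range Q.mulVecLin).comap
      (LinearMap.toSpanSingleton SS _ w)) (by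
        intro a ha
        obtain ⟨R, h1, h2⟩ := key a ha
        refine ⟨_, ?_, h2⟩
        rw [Submodule.mem_comap, LinearMap.toSpanSingleton_apply]
        have e1 : (fromCols Q R) *ᵥ ((fromCols Q R).adjugate *ᵥ w) = (fromCols Q R).det • w := by
          rw [mulVec_mulVec, mul_adjugate, smul_mulVec, one_mulVec]
        rw [fromCols_mulVec] at e1
        set q := ((fromCols Q R).adjugate *ᵥ w) ∘ Sum.inr with hq
        have e2 := congrArg (P *ᵥ ·) e1
        have hw' : P *ᵥ w = 0 := hw
        simp only [mulVec_add, mulVec_mulVec, hPQ, mulVec_smul, hw', zero_mulVec, zero_add,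
          smul_zero] at e2
        have e3 : q = 0 := by
          by_contra hne
          have := exists_mulVec_eq_zero_iff.1 ⟨q, hne, e2⟩
          simp [this] at h1
        rw [e3, mulVec_zero, add_zero] at e1
        exact ⟨_, e1⟩)
    obtain ⟨b1, hb1⟩ := hN x
    obtain ⟨b2, hb2⟩ := hN y
    rw [LinearMap.toSpanSingleton_apply] at hb1 hb2
    have hb : (X y ^ N : SS) • b1 = (X x ^ N : SS) • b2 := by
      apply hQ
      rw [map_smul, map_smul, hb1, hb2, smul_smul, smul_smul, mul_comm]
    have hb' : ∀ l, ∃ c, b1 l = X x ^ N * c ∧ b2 l = X y ^ N * c := fun l =>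
      koszul_one x y hxy N _ _ (congrFun hb l)
    choose b hb3 hb4 using hb'
    have hb5 : b1 = (X x ^ N : SS) • b := funext hb3
    refine ⟨b, ?_⟩
    have hne : (X x ^ N : SS) ≠ 0 := pow_ne_zero _ (X_ne_zero x)
    apply smul_right_injective _ hne
    show (X x ^ N : SS) • Q.mulVecLin b = (X x ^ N : SS) • w
    rw [← map_smul, ← hb5, hb1]
  obtain ⟨N, hN⟩ := null_pow ((LinearMap.range P.mulVecLin).comap
      (LinearMap.toSpanSingleton SS _ (fun _ => 1))) (by
        intro a ha
        obtain ⟨R, h1, h2⟩ := key a ha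
        refine ⟨_, ?_, h1⟩
        rw [Submodule.mem_comap, LinearMap.toSpanSingleton_apply]
        refine ⟨R *ᵥ ((P * R).adjugate *ᵥ (fun _ => 1)), ?_⟩
        rw [mulVecLin_apply, mulVec_mulVec, mulVec_mulVec, mul_adjugate, smul_mulVec, one_mulVec])
  obtain ⟨w, hw⟩ := torsion_lemma x y z hxy hxz hyz N Q.mulVecLin P.mulVecLin hQ hPQ' hker
    (fun _ => 1) (fun i => hN i)
  have e := congrArg constantCoeff (congrFun hw 0)
  simp [mulVec, dotProduct, h0] at e

lemma torsion_pair (x y z : Fin r) (hxy : x ≠ y) (hxz : x ≠ z) (hyz : y ≠ z)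
    (u : Fin 2 → SS) (hu : IsRelPrime (u 0) (u 1)) (N : ℕ) (m : SS)
    (h : ∀ i, ∃ w : Fin 2 → SS, w 0 * u 0 + w 1 * u 1 = X i ^ N * m) :
    ∃ w : Fin 2 → SS, w 0 * u 0 + w 1 * u 1 = m := by
  have hu0 := relPrime_ne hu
  let Z : (Fin 2 → SS) →ₗ[SS] SS :=
    LinearMap.toSpanSingleton SS SS (u 0) ∘ₗ LinearMap.proj 0 +
    LinearMap.toSpanSingleton SS SS (u 1) ∘ₗ LinearMap.proj 1
  have hZ : ∀ w, Z w = w 0 * u 0 + w 1 * u 1 := by intro w; simp [Z]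
  let Y : (Fin 1 → SS) →ₗ[SS] (Fin 2 → SS) :=
    LinearMap.toSpanSingleton SS (Fin 2 → SS) ![-u 1, u 0] ∘ₗ LinearMap.proj 0
  have hY : ∀ p, Y p = ![-(p 0 * u 1), p 0 * u 0] := by
    intro p; ext i; fin_cases i <;> simp [Y]
  obtain ⟨w, hw⟩ := torsion_lemma x y z hxy hxz hyz N Y Z
    (by
      rw [← LinearMap.ker_eq_bot, LinearMap.ker_eq_bot']
      intro p hp
      rw [hY] at hp
      have a := congrFun hp 0
      have b := congrFun hp 1
      obtain ⟨i, hi⟩ := ne_zero_cases hu0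
      ext1 j
      rw [Subsingleton.elim j 0]
      fin_cases i
      · exact (mul_eq_zero.1 (by simpa using b)).resolve_right hi
      · exact (mul_eq_zero.1 (by simpa using a)).resolve_right hi)
    (by intro p; rw [hZ, hY]; simp; ring)
    (by
      intro w hw
      rw [hZ] at hw
      obtain ⟨s, h1, h2⟩ := ufd_perp u w hu hw
      refine ⟨fun _ => s, ?_⟩
      rw [hY]; ext1 i; fin_cases i <;> simp [h1, h2])
    m (by
      intro i; obtain ⟨w, hw⟩ := h i
      exact ⟨w, by rw [hZ, hw, smul_eq_mul]⟩)
  exact ⟨w, by rw [← hZ, hw]⟩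

end bzero
section main
open Matrix
set_option linter.all false
variable {k : Type*} [Field k] [IsAlgClosed k] {r : ℕ}
local notation "SS" => MvPolynomial (Fin r) k

lemma A_ne_zero (x y : Fin r) (hxy : x ≠ y) (A B C E F G : Matrix (Fin 2) (Fin 2) SS)
    (hE : ∀ i j, constantCoeff (E i j) = 0) (hG : ∀ i j, constantCoeff (G i j) = 0)
    (pt : ∀ a : Fin r → k, a ≠ 0 → PointExact (A.map (eval a)) (B.map (eval a)) (C.map (eval a))
      (E.map (eval a)) (F.map (eval a)) (G.map (eval a))) : A ≠ 0 := by
  intro hA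
  have hcc : constantCoeff (fromBlocks E G B F).det = 0 := by
    rw [RingHom.map_det]
    apply det_eq_zero_of_row_eq_zero (Sum.inl 0)
    rintro (j | j) <;> simp [hE, hG]
  obtain ⟨p, hp, hd⟩ := exists_prime_dvd_of_not_unit x (fromBlocks E G B F).det (by
    intro hu
    have := hu.map (constantCoeff (σ := Fin r) (R := k))
    rw [hcc] at this
    exact not_isUnit_zero this)
  have : p ∣ 1 := by
    apply hyper x y hxy p 1 hp
    intro a ha hpa
    exfalso
    apply (pt a ha).det_ne (by ext i j; simp [hA])
    obtain ⟨q, hq⟩ := hd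
    have : eval a (fromBlocks E G B F).det = 0 := by rw [hq]; simp [hpa]
    rw [RingHom.map_det] at this
    rw [← fromBlocks_map]
    exact this
  exact hp.not_unit (isUnit_of_dvd_one this)

lemma exists_not_dvd {p : SS} (hp : Prime p) {v : Fin 2 → SS} (hv : IsRelPrime (v 0) (v 1)) :
    ∃ i, ¬ p ∣ v i := by
  by_contra! h
  exact hp.not_unit (hv (h 0) (h 1))

lemma fun_ne_zero_of {v : Fin 2 → SS} {a : Fin r → k} {i : Fin 2} (h : eval a (v i) ≠ 0) :
    (fun i => eval a (v i)) ≠ 0 := fun h' => h (congrFun h' i)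

lemma main_B_ne (x y z : Fin r) (hxy : x ≠ y) (hxz : x ≠ z) (hyz : y ≠ z)
    (A B C E F G : Matrix (Fin 2) (Fin 2) SS)
    (hF0 : ∀ i j, constantCoeff (F i j) = 0) (hG0 : ∀ i j, constantCoeff (G i j) = 0)
    (hAB : A * B = 0) (hBC : B * C = 0) (hAF : A * F + E * C = 0)
    (hA : A ≠ 0) (hC : C ≠ 0) (hB : B ≠ 0)
    (pt : ∀ a : Fin r → k, a ≠ 0 → PointExact (A.map (eval a)) (B.map (eval a)) (C.map (eval a))
      (E.map (eval a)) (F.map (eval a)) (G.map (eval a))) : False := by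
  have hdet : B.det = 0 := by
    by_contra hne
    apply hA
    have : B.det • A = 0 := by
      have := congrArg (· * B.adjugate) hAB
      simpa [Matrix.mul_assoc, mul_adjugate] using this
    ext1 i j
    simpa [hne] using congrFun (congrFun this i) j
  obtain ⟨g, u, v, hg, hu, hv, hBuv⟩ := ufd_factor B hB hdet
  have hu0 := relPrime_ne hu
  have hv0 := relPrime_ne hv
  obtain ⟨iu, hiu⟩ := ne_zero_cases hu0
  obtain ⟨iv, hiv⟩ := ne_zero_cases hv0
  have hAu : ∀ i, ∃ s, A i 0 = -(s * u 1) ∧ A i 1 = s * u 0 := by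
    intro i
    apply ufd_perp u (A i) hu
    have := congrFun (congrFun hAB i) iv
    simp only [Matrix.mul_apply, Fin.sum_univ_two, hBuv, Matrix.zero_apply] at this
    exact (mul_eq_zero.1 (show (g * v iv) * _ = 0 by linear_combination this)).resolve_left
      (mul_ne_zero hg hiv)
  choose al' hal0 hal1 using hAu
  have hal' : al' ≠ 0 := by
    rintro rfl
    apply hA; ext1 i j; fin_cases j
    · simp [hal0]
    · simp [hal1]
  obtain ⟨c, al, hc, hal, hcal⟩ := ufd_reduce al' hal'
  obtain ⟨ia, hia⟩ := ne_zero_cases (relPrime_ne hal)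
  have hvC : ∀ j, ∃ s, C 0 j = -(s * v 1) ∧ C 1 j = s * v 0 := by
    intro j
    apply ufd_perp v (fun i => C i j) hv
    have := congrFun (congrFun hBC iu) j
    simp only [Matrix.mul_apply, Fin.sum_univ_two, hBuv, Matrix.zero_apply] at this
    exact (mul_eq_zero.1 (show (g * u iu) * _ = 0 by linear_combination this)).resolve_left
      (mul_ne_zero hg hiu)
  choose ga' hga0 hga1 using hvC
  have hga' : ga' ≠ 0 := by
    rintro rfl
    apply hC; ext1 i j; fin_cases i
    · simp [hga0]
    · simp [hga1]
  obtain ⟨e, ga, he, hga, hega⟩ := ufd_reduce ga' hga'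
  obtain ⟨ig, hig⟩ := ne_zero_cases (relPrime_ne hga)
  have hA0 : ∀ i, A i 0 = -(c * al i * u 1) := fun i => by rw [hal0, hcal]
  have hA1 : ∀ i, A i 1 = c * al i * u 0 := fun i => by rw [hal1, hcal]
  have hC0 : ∀ j, C 0 j = -(e * v 1 * ga j) := fun j => by rw [hga0, hega]; ring
  have hC1 : ∀ j, C 1 j = e * v 0 * ga j := fun j => by rw [hga1, hega]; ring
  clear hal0 hal1 hga0 hga1 hcal hega hal' hga' al' ga'
  have hrel : ∀ i j, c * al i * (u 0 * F 1 j - u 1 * F 0 j)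
      + e * (E i 1 * v 0 - E i 0 * v 1) * ga j = 0 := by
    intro i j
    have := congrFun (congrFun hAF i) j
    simp only [Matrix.mul_apply, Fin.sum_univ_two, Matrix.zero_apply, Matrix.add_apply,
      hA0, hA1, hC0, hC1] at this
    linear_combination this
  obtain ⟨h', hE'⟩ := ufd_par al (fun i => E i 1 * v 0 - E i 0 * v 1) hal (by
    have := hrel 0 ig
    have := hrel 1 ig
    apply mul_left_cancel₀ (mul_ne_zero he hig)
    linear_combination al 1 * hrel 0 ig - al 0 * hrel 1 ig)
  obtain ⟨h, hF'⟩ := ufd_par ga (fun j => u 0 * F 1 j - u 1 * F 0 j) hga (by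
    apply mul_left_cancel₀ (mul_ne_zero hc hia)
    linear_combination ga 1 * hrel ia 0 - ga 0 * hrel ia 1)
  have hch : c * h + e * h' = 0 := by
    apply mul_left_cancel₀ (mul_ne_zero hia hig)
    linear_combination hrel ia ig - c * al ia * hF' ig - e * ga ig * hE' ia
  obtain ⟨s, hs⟩ := ufd_par v (fun j => al 0 * E 1 j - al 1 * E 0 j) hv (by
    linear_combination -al 0 * hE' 1 + al 1 * hE' 0)
  obtain ⟨t, ht⟩ := ufd_par u (fun i => ga 0 * F i 1 - ga 1 * F i 0) hu (by
    linear_combination -ga 0 * hF' 1 + ga 1 * hF' 0)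
  have heh : IsRelPrime e h := by
    intro d hde hdh
    by_contra hd
    obtain ⟨p, hp, hpd⟩ := exists_prime_dvd_of_not_unit x d hd
    obtain ⟨e1, he1⟩ := hpd.trans hde
    obtain ⟨h1, hh1⟩ := hpd.trans hdh
    have key : ∀ a : Fin r → k, a ≠ 0 → eval a p = 0 → (fun i => eval a (u i)) = 0 := by
      intro a ha hpa
      refine (pt a ha).false_of_e_h _ (fun i => eval a (v i)) (fun i => eval a (al i))
        (eval a c) (eval a g) (eval a s) ?_ ?_ ?_ ?_ ?_ ?_
      · ext i j; fin_cases i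
        · simp [hC0, he1, hpa]
        · simp [hC1, he1, hpa]
      · intro j
        have := congrArg (eval a) (hF' j)
        simpa [hh1, hpa] using this
      · intro i j; simp [hBuv]
      · intro i; simp [hA0]
      · intro i; simp [hA1]
      · intro j; simpa using congrArg (eval a) (hs j)
    have : ∀ i, p ∣ u i := fun i => hyper x y hxy p _ hp fun a ha hpa => congrFun (key a ha hpa) i
    exact hp.not_unit (hu (this 0) (this 1))
  have hD : IsUnit (g * (al 0 * (ga 0 * G 1 1 - ga 1 * G 1 0)
      - al 1 * (ga 0 * G 0 1 - ga 1 * G 0 0)) - s * t) := by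
    by_contra hD
    obtain ⟨p, hp, q, hpq⟩ := exists_prime_dvd_of_not_unit x _ hD
    have key : ∀ i j l m, p ∣ al i * ga j * u l * v m := by
      intro i j l m
      apply hyper x y hxy p _ hp
      intro a ha hpa
      by_contra hne
      simp only [map_mul, mul_ne_zero_iff] at hne
      obtain ⟨⟨⟨n1, n2⟩, n3⟩, n4⟩ := hne
      refine (pt a ha).false_of_delta (fun i => eval a (u i)) (fun i => eval a (v i))
        (fun i => eval a (al i)) (fun i => eval a (ga i)) (eval a c) (eval a e) (eval a g)
        (eval a s) (eval a t) (eval a h) (eval a h')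
        (fun_ne_zero_of n3) (fun_ne_zero_of n4) (fun_ne_zero_of n1) (fun_ne_zero_of n2)
        ?_ ?_ ?_ ?_ ?_ ?_ ?_ ?_ ?_ ?_
      · intro i; simp [hA0]
      · intro i; simp [hA1]
      · intro i j; simp [hBuv]
      · intro j; simp [hC0]
      · intro j; simp [hC1]
      · intro j; simpa using congrArg (eval a) (hF' j)
      · intro j; simpa using congrArg (eval a) (hE' j)
      · intro j; simpa using congrArg (eval a) (hs j)
      · intro j; simpa using congrArg (eval a) (ht j)
      · simpa [hpa] using congrArg (eval a) hpq
    obtain ⟨i1, n1⟩ := exists_not_dvd hp hal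
    obtain ⟨i2, n2⟩ := exists_not_dvd hp hga
    obtain ⟨i3, n3⟩ := exists_not_dvd hp hu
    obtain ⟨i4, n4⟩ := exists_not_dvd hp hv
    have := key i1 i2 i3 i4
    rw [hp.dvd_mul, hp.dvd_mul, hp.dvd_mul] at this
    tauto
  have ht0 : constantCoeff t ≠ 0 := by
    have := (hD.map (constantCoeff (σ := Fin r) (R := k))).ne_zero
    intro h
    apply this
    simp [hG0, h]
  have hhh' : h ∣ h' := heh.symm.dvd_of_dvd_mul_left ⟨-c, by linear_combination hch⟩
  have hdetE : E.det = -(s * h') := by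
    rw [det_fin_two]
    have e0 : al 0 * (E 0 0 * E 1 1 - E 0 1 * E 1 0) = al 0 * (-(s * h')) := by
      linear_combination -s * hE' 0 + E 0 0 * hs 1 - E 0 1 * hs 0
    have e1 : al 1 * (E 0 0 * E 1 1 - E 0 1 * E 1 0) = al 1 * (-(s * h')) := by
      linear_combination -s * hE' 1 + E 1 0 * hs 1 - E 1 1 * hs 0
    apply mul_left_cancel₀ hia
    fin_cases ia
    · exact e0
    · exact e1
  obtain ⟨N, hN⟩ := null_pow (Ideal.span {u 0, u 1, h}) (by
    intro a ha
    by_contra! hall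
    have a0 : eval a (u 0) = 0 := hall _ (Ideal.subset_span (by simp))
    have a1 : eval a (u 1) = 0 := hall _ (Ideal.subset_span (by simp))
    have a2 : eval a h = 0 := hall _ (Ideal.subset_span (by simp))
    refine (pt a ha).false_of ?_ ?_ ?_
    · ext i j; fin_cases j
      · simp [hA0, a1]
      · simp [hA1, a0]
    · ext i j; fin_cases i
      · simp [hBuv, a0]
      · simp [hBuv, a1]
    · have : eval a E.det = 0 := by
        obtain ⟨w, hw⟩ := hhh'
        rw [hdetE, hw]; simp [a2]
      rwa [RingHom.map_det] at this)
  have hgau : ∀ j, ∃ w : Fin 2 → SS, w 0 * u 0 + w 1 * u 1 = ga j := by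
    intro j
    apply torsion_pair x y z hxy hxz hyz u hu N
    intro i
    have := hN i
    rw [Ideal.mem_span_insert] at this
    obtain ⟨w0, z, hz, hw⟩ := this
    rw [Ideal.mem_span_pair] at hz
    obtain ⟨w1, w2, hw2⟩ := hz
    refine ⟨![w0 * ga j + w2 * F 1 j, w1 * ga j - w2 * F 0 j], ?_⟩
    simp
    linear_combination -ga j * hw + ga j * hw2 + w2 * hF' j
  choose w hw using hgau
  have hT : (!![t - (w 0 0 * F 0 1 - w 1 0 * F 0 0), -(w 0 1 * F 0 1 - w 1 1 * F 0 0);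
      -(w 0 0 * F 1 1 - w 1 0 * F 1 0), t - (w 0 1 * F 1 1 - w 1 1 * F 1 0)] :
      Matrix (Fin 2) (Fin 2) SS).det = 0 := by
    apply exists_mulVec_eq_zero_iff.1
    refine ⟨u, hu0, ?_⟩
    ext1 i
    fin_cases i
    · simp [mulVec, dotProduct, Fin.sum_univ_two]
      linear_combination -ht 0 - F 0 1 * hw 0 + F 0 0 * hw 1
    · simp [mulVec, dotProduct, Fin.sum_univ_two]
      linear_combination -ht 1 - F 1 1 * hw 0 + F 1 0 * hw 1
  have := congrArg constantCoeff hT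
  simp [det_fin_two, hF0] at this
  exact ht0 this

lemma main_blocks (x y z : Fin r) (hxy : x ≠ y) (hxz : x ≠ z) (hyz : y ≠ z)
    (A B C E F G : Matrix (Fin 2) (Fin 2) SS)
    (hA0 : ∀ i j, constantCoeff (A i j) = 0) (hE0 : ∀ i j, constantCoeff (E i j) = 0)
    (hF0 : ∀ i j, constantCoeff (F i j) = 0) (hG0 : ∀ i j, constantCoeff (G i j) = 0)
    (hAB : A * B = 0) (hBC : B * C = 0) (hAF : A * F + E * C = 0)
    (pt : ∀ a : Fin r → k, a ≠ 0 → PointExact (A.map (eval a)) (B.map (eval a)) (C.map (eval a))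
      (E.map (eval a)) (F.map (eval a)) (G.map (eval a))) : False := by
  have hA : A ≠ 0 := A_ne_zero x y hxy A B C E F G hE0 hG0 pt
  have hC : C ≠ 0 := by
    have := A_ne_zero x y hxy Cᵀ Bᵀ Aᵀ Fᵀ Eᵀ Gᵀ (fun i j => hF0 j i) (fun i j => hG0 j i)
      (fun a ha => (pt a ha).symm)
    intro h; apply this; rw [h]; rfl
  by_cases hB : B = 0
  · refine no_B x y z hxy hxz hyz (fromCols A E) (fromRows F C) ?_ ?_ ?_ ?_
    · rw [fromCols_mul_fromRows, hAF]
    · rintro i (j | j) <;> simp [hA0, hE0]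
    · intro a ha y hy
      have h1 := ((pt a ha).of_B (by ext i j; simp [hB])).1 y
      have e : (fromRows F C).map (eval a) = fromRows (F.map (eval a)) (C.map (eval a)) := by
        ext (i | i) j <;> simp
      rw [e, fromRows_mulVec] at hy
      apply h1
      · ext1 i; exact congrFun hy (Sum.inl i)
      · ext1 i; exact congrFun hy (Sum.inr i)
    · intro a ha x
      obtain ⟨y2, y3, h1⟩ := ((pt a ha).of_B (by ext i j; simp [hB])).2 x
      have e : (fromCols A E).map (eval a) = fromCols (A.map (eval a)) (E.map (eval a)) := by
        ext i (j | j) <;> simp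
      refine ⟨Sum.elim y2 y3, ?_⟩
      rw [e, fromCols_mulVec]
      simpa using h1
  · exact main_B_ne x y z hxy hxz hyz A B C E F G hF0 hG0 hAB hBC hAF hA hC hB pt

end main
section final
open Matrix
variable {K : Type*} [Field K]

lemma exact_of_rank (M : Matrix (Fin 8) (Fin 8) K) (h2 : M * M = 0) (hr : M.rank = 4)
    (x : Fin 8 → K) (hx : M *ᵥ x = 0) : ∃ y, M *ᵥ y = x := by
  have hle : LinearMap.range M.mulVecLin ≤ LinearMap.ker M.mulVecLin := by
    rintro _ ⟨y, rfl⟩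
    simp [h2]
  have hrn := LinearMap.finrank_range_add_finrank_ker M.mulVecLin
  have hr' : Module.finrank K (LinearMap.range M.mulVecLin) = 4 := hr
  have heq := Submodule.eq_of_le_of_finrank_eq hle (by simp at hrn; omega)
  have : x ∈ LinearMap.range M.mulVecLin := by
    rw [heq]; simpa using hx
  obtain ⟨y, hy⟩ := this
  exact ⟨y, by simpa using hy⟩

set_option maxHeartbeats 4000000 in
lemma pointExact_of_rank (M : Matrix (Fin 8) (Fin 8) K) (h2 : M * M = 0) (hr : M.rank = 4)
    (hz : ∀ i j : Fin 8, (j : ℕ) / 2 ≤ (i : ℕ) / 2 → M i j = 0) :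
    PointExact !![M 0 2, M 0 3; M 1 2, M 1 3] !![M 2 4, M 2 5; M 3 4, M 3 5]
      !![M 4 6, M 4 7; M 5 6, M 5 7] !![M 0 4, M 0 5; M 1 4, M 1 5]
      !![M 2 6, M 2 7; M 3 6, M 3 7] !![M 0 6, M 0 7; M 1 6, M 1 7] := by
  have hform : M = !![0, 0, M 0 2, M 0 3, M 0 4, M 0 5, M 0 6, M 0 7;
      0, 0, M 1 2, M 1 3, M 1 4, M 1 5, M 1 6, M 1 7;
      0, 0, 0, 0, M 2 4, M 2 5, M 2 6, M 2 7;
      0, 0, 0, 0, M 3 4, M 3 5, M 3 6, M 3 7;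
      0, 0, 0, 0, 0, 0, M 4 6, M 4 7;
      0, 0, 0, 0, 0, 0, M 5 6, M 5 7;
      0, 0, 0, 0, 0, 0, 0, 0;
      0, 0, 0, 0, 0, 0, 0, 0] := by
    ext i j
    fin_cases i <;> fin_cases j <;> first | rfl | exact hz _ _ (by decide)
  have h2t : Mᵀ * Mᵀ = 0 := by rw [← transpose_mul, h2, transpose_zero]
  have hrt : Mᵀ.rank = 4 := by rw [rank_transpose, hr]
  have ex1 := exact_of_rank M h2 hr
  have ex2 := exact_of_rank Mᵀ h2t hrt
  generalize M 0 2 = m02, M 0 3 = m03, M 0 4 = m04, M 0 5 = m05, M 0 6 = m06, M 0 7 = m07,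
    M 1 2 = m12, M 1 3 = m13, M 1 4 = m14, M 1 5 = m15, M 1 6 = m16, M 1 7 = m17,
    M 2 4 = m24, M 2 5 = m25, M 2 6 = m26, M 2 7 = m27,
    M 3 4 = m34, M 3 5 = m35, M 3 6 = m36, M 3 7 = m37,
    M 4 6 = m46, M 4 7 = m47, M 5 6 = m56, M 5 7 = m57 at hform ⊢
  subst hform
  constructor
  · intro x1 x2 x3 x4 e1 e2 e3
    obtain ⟨y, hy⟩ := ex1 ![x1 0, x1 1, x2 0, x2 1, x3 0, x3 1, x4 0, x4 1] (by
      have e10 := congrFun e1 0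
      have e11 := congrFun e1 1
      have e20 := congrFun e2 0
      have e21 := congrFun e2 1
      have e30 := congrFun e3 0
      have e31 := congrFun e3 1
      simp [mulVec, dotProduct, Fin.sum_univ_two] at e10 e11 e20 e21 e30 e31
      ext1 i
      fin_cases i <;> simp [mulVec, dotProduct, Fin.sum_univ_eight]
      · linear_combination e10
      · linear_combination e11
      · linear_combination e20
      · linear_combination e21
      · linear_combination e30
      · linear_combination e31)
    have f := fun i => congrFun hy i
    simp [Fin.forall_fin_succ, mulVec, dotProduct, Fin.sum_univ_eight] at f
    refine ⟨![y 2, y 3], ![y 4, y 5], ![y 6, y 7], ?_, ?_, ?_, ?_⟩ <;> ext1 i <;> fin_cases i <;>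
      simp [mulVec, dotProduct, Fin.sum_univ_two] <;> grind
  · intro x1 x2 x3 x4 e1 e2 e3
    obtain ⟨y, hy⟩ := ex2 ![x1 0, x1 1, x2 0, x2 1, x3 0, x3 1, x4 0, x4 1] (by
      have e10 := congrFun e1 0
      have e11 := congrFun e1 1
      have e20 := congrFun e2 0
      have e21 := congrFun e2 1
      have e30 := congrFun e3 0
      have e31 := congrFun e3 1
      simp [mulVec, dotProduct, Fin.sum_univ_two] at e10 e11 e20 e21 e30 e31
      ext1 i
      fin_cases i <;> simp [mulVec, dotProduct, Fin.sum_univ_eight]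
      · linear_combination e30
      · linear_combination e31
      · linear_combination e20
      · linear_combination e21
      · linear_combination e10
      · linear_combination e11)
    have f := fun i => congrFun hy i
    simp [Fin.forall_fin_succ, mulVec, dotProduct, Fin.sum_univ_eight] at f
    refine ⟨![y 4, y 5], ![y 2, y 3], ![y 0, y 1], ?_, ?_, ?_, ?_⟩ <;> ext1 i <;> fin_cases i <;>
      simp [mulVec, dotProduct, Fin.sum_univ_two] <;> grind

end final

theorem statement_8 {k : Type*} [Field k] [IsAlgClosed k] {r : ℕ}
    (D : Matrix (Fin 8) (Fin 8) (MvPolynomial (Fin r) k))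
    (hstd : StandardConditions D)
    (hzero : ∀ i j : Fin 8,
        ¬((1 ≤ (i : ℕ) + 1 ∧ (i : ℕ) + 1 ≤ 2 ∧ 3 ≤ (j : ℕ) + 1 ∧ (j : ℕ) + 1 ≤ 8) ∨
          (3 ≤ (i : ℕ) + 1 ∧ (i : ℕ) + 1 ≤ 4 ∧ 5 ≤ (j : ℕ) + 1 ∧ (j : ℕ) + 1 ≤ 8) ∨
          (5 ≤ (i : ℕ) + 1 ∧ (i : ℕ) + 1 ≤ 6 ∧ 7 ≤ (j : ℕ) + 1 ∧ (j : ℕ) + 1 ≤ 8)) →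
        D i j = 0) :
    r < 3 := by
  by_contra hr
  push Not at hr
  obtain ⟨-, h2, h0, h4, -⟩ := hstd
  have hz : ∀ i j : Fin 8, (j : ℕ) / 2 ≤ (i : ℕ) / 2 → D i j = 0 := by
    intro i j hij
    apply hzero
    omega
  have hc : ∀ i j, constantCoeff (D i j) = 0 := by
    intro i j
    rw [← eval_zero]
    exact h0 i j
  have hm : ∀ i j : Fin 8, ∑ l, D i l * D l j = 0 := fun i j => by
    rw [← Matrix.mul_apply, h2]; rfl
  refine main_blocks (⟨0, by omega⟩ : Fin r) ⟨1, by omega⟩ ⟨2, by omega⟩ (by simp) (by simp)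
    (by simp) !![D 0 2, D 0 3; D 1 2, D 1 3] !![D 2 4, D 2 5; D 3 4, D 3 5]
      !![D 4 6, D 4 7; D 5 6, D 5 7] !![D 0 4, D 0 5; D 1 4, D 1 5]
      !![D 2 6, D 2 7; D 3 6, D 3 7] !![D 0 6, D 0 7; D 1 6, D 1 7] ?_ ?_ ?_ ?_ ?_ ?_ ?_ ?_
  · intro i j; fin_cases i <;> fin_cases j <;> exact hc _ _
  · intro i j; fin_cases i <;> fin_cases j <;> exact hc _ _
  · intro i j; fin_cases i <;> fin_cases j <;> exact hc _ _
  · intro i j; fin_cases i <;> fin_cases j <;> exact hc _ _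
  · have key : ∀ i j : Fin 8, (i : ℕ) / 2 = 0 → (j : ℕ) / 2 = 2 →
        D i 2 * D 2 j + D i 3 * D 3 j = 0 := by
      intro i j hi hj
      have := hm i j
      rw [Fin.sum_univ_eight, hz i 0 (by simp), hz i 1 (by simp), hz 4 j (by simp [hj]),
        hz 5 j (by simp [hj]), hz 6 j (by simp [hj]), hz 7 j (by simp [hj])] at this
      linear_combination this
    ext1 i j
    fin_cases i <;> fin_cases j <;> simp <;> exact key _ _ (by decide) (by decide)
  · have key : ∀ i j : Fin 8, (i : ℕ) / 2 = 1 → (j : ℕ) / 2 = 3 →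
        D i 4 * D 4 j + D i 5 * D 5 j = 0 := by
      intro i j hi hj
      have := hm i j
      rw [Fin.sum_univ_eight, hz i 0 (by simp), hz i 1 (by simp), hz i 2 (by simp [hi]),
        hz i 3 (by simp [hi]), hz 6 j (by simp [hj]), hz 7 j (by simp [hj])] at this
      linear_combination this
    ext1 i j
    fin_cases i <;> fin_cases j <;> simp <;> exact key _ _ (by decide) (by decide)
  · have key : ∀ i j : Fin 8, (i : ℕ) / 2 = 0 → (j : ℕ) / 2 = 3 →
        D i 2 * D 2 j + D i 3 * D 3 j + (D i 4 * D 4 j + D i 5 * D 5 j) = 0 := by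
      intro i j hi hj
      have := hm i j
      rw [Fin.sum_univ_eight, hz i 0 (by simp), hz i 1 (by simp), 
        hz 6 j (by simp [hj]), hz 7 j (by simp [hj])] at this
      linear_combination this
    ext1 i j
    fin_cases i <;> fin_cases j <;> simp <;> exact key _ _ (by decide) (by decide)
  · intro a ha
    have := pointExact_of_rank (D.map (eval a)) (by
      rw [← Matrix.map_mul, h2]; ext; simp) (h4 a ha)
      (fun i j hij => by simp [hz i j hij])
    convert this using 1 <;> (ext i j; fin_cases i <;> fin_cases j <;> rfl)
end

section
/- Let k be an algebraically closed field and S = k[x_1,...,x_r]. Suppose D = (p_{ij}) is an 8×8 matrix with entries in S satisfying the standard conditions, and suppose moreover that p_{ij} = 0 unless (i = 1 and 2 ≤ j ≤ 8) or (2 ≤ i ≤ 4 and 5 ≤ j ≤ 8) or (5 ≤ i ≤ 7 and j = 8). Then r < 4, i.e., r ≤ 3. -/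
open MvPolynomial

open Matrix in
lemma minors_of_adj {R : Type*} [CommRing R] (A : Matrix (Fin 3) (Fin 3) R)
    (h : A.adjugate = 0) (i j l m : Fin 3) : A i j * A l m = A i m * A l j := by
  rw [Matrix.adjugate_fin_three] at h
  have h00 := congrFun (congrFun h 0) 0
  have h01 := congrFun (congrFun h 0) 1
  have h02 := congrFun (congrFun h 0) 2
  have h10 := congrFun (congrFun h 1) 0
  have h11 := congrFun (congrFun h 1) 1
  have h12 := congrFun (congrFun h 1) 2
  have h20 := congrFun (congrFun h 2) 0
  have h21 := congrFun (congrFun h 2) 1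
  have h22 := congrFun (congrFun h 2) 2
  simp at h00 h01 h02 h10 h11 h12 h20 h21 h22
  clear h
  fin_cases i <;> fin_cases l <;> fin_cases j <;> fin_cases m <;> simp only [Fin.zero_eta, Fin.mk_one, Fin.reduceFinMk] <;> first | ring | grind

lemma factor_rank_one {R : Type*} [CommRing R] [IsDomain R] [UniqueFactorizationMonoid R]
    (N : Fin 3 → Fin 3 → R)
    (h : ∀ i j l m : Fin 3, N i j * N l m = N i m * N l j) :
    ∃ g h : Fin 3 → R, ∀ i j, N i j = g i * h j := by
  classical
  let _ : StrongNormalizationMonoid R := UniqueFactorizationMonoid.strongNormalizationMonoid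
  let _ : NormalizedGCDMonoid R := UniqueFactorizationMonoid.toNormalizedGCDMonoid R
  by_cases h0 : ∀ i j, N i j = 0
  · exact ⟨0, 0, by simpa using h0⟩
  push Not at h0
  obtain ⟨i0, j0, hN⟩ := h0
  obtain ⟨g, hg, hg1⟩ := Finset.extract_gcd (s := Finset.univ) (fun i => N i j0) ⟨0, by simp⟩
  set d := Finset.univ.gcd (fun i => N i j0) with hd
  replace hg : ∀ i, N i j0 = d * g i := fun i => hg i (by simp)
  have hd0 : d ≠ 0 := fun h' => hN (by rw [hg, h', zero_mul])
  have hg0 : g i0 ≠ 0 := fun h' => hN (by rw [hg, h', mul_zero])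
  have key : ∀ i j l, N i j * g l = g i * N l j := by
    intro i j l
    have := h i j l j0
    rw [hg, hg] at this
    apply mul_left_cancel₀ hd0
    linear_combination this
  have hdvd : ∀ j, g i0 ∣ N i0 j := by
    intro j
    have h1 : g i0 ∣ Finset.univ.gcd (fun l => N i0 j * g l) :=
      Finset.dvd_gcd fun l _ => ⟨N l j, key i0 j l⟩
    have h2 := Finset.gcd_mul_left' Finset.univ g (N i0 j)
    rw [hg1, mul_one] at h2
    exact h1.trans h2.dvd
  choose q hq using hdvd
  refine ⟨g, q, fun i j => ?_⟩
  apply mul_right_cancel₀ hg0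
  rw [key, hq]; ring

lemma height_origin {k : Type*} [Field k] [IsAlgClosed k] {r : ℕ} :
    (vanishingIdeal k {(0 : Fin r → k)}).height = r := by
  have hdim : ringKrullDim (MvPolynomial (Fin r) k) = r := by
    rw [MvPolynomial.ringKrullDim_of_isNoetherianRing]; simp
  have : FiniteRingKrullDim (MvPolynomial (Fin r) k) := by
    rw [finiteRingKrullDim_iff_ne_bot_and_top, hdim]
    constructor <;> simp
    exact fun h => by cases h
  obtain ⟨p, hp, hht⟩ := Ideal.exists_isMaximal_height (R := MvPolynomial (Fin r) k)
  obtain ⟨x, rfl⟩ := (isMaximal_iff_eq_vanishingIdeal_singleton).1 hp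
  let e : MvPolynomial (Fin r) k ≃ₐ[k] MvPolynomial (Fin r) k :=
    AlgEquiv.ofAlgHom (aeval fun i => X i + C (x i)) (aeval fun i => X i - C (x i))
      (by ext i; simp) (by ext i; simp)
  have he : (vanishingIdeal k {(0 : Fin r → k)}).comap (e : _ ≃+* _) = vanishingIdeal k {x} := by
    ext p
    rw [Ideal.mem_comap, mem_vanishingIdeal_singleton_iff, mem_vanishingIdeal_singleton_iff]
    have : ((aeval (0 : Fin r → k)).comp (e : _ →ₐ[k] _) : MvPolynomial (Fin r) k →ₐ[k] k) = aeval x := by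
      ext i; simp [e]
    rw [← this]; rfl
  have h2 := RingEquiv.height_comap (e : MvPolynomial (Fin r) k ≃+* _) (vanishingIdeal k {(0 : Fin r → k)})
  rw [he] at h2
  rw [← h2]
  rw [hdim] at hht
  exact_mod_cast hht

lemma exists_common_zero {k : Type*} [Field k] [IsAlgClosed k] {r n : ℕ} (hn : n < r)
    (g : Fin n → MvPolynomial (Fin r) k) (hg : ∀ i, eval 0 (g i) = 0) :
    ∃ a : Fin r → k, a ≠ 0 ∧ ∀ i, eval a (g i) = 0 := by
  classical
  by_contra! hcon
  let s : Finset (MvPolynomial (Fin r) k) := Finset.univ.image g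
  have hz : zeroLocus k (Ideal.span (s : Set (MvPolynomial (Fin r) k))) = {(0 : Fin r → k)} := by
    rw [zeroLocus_span]
    ext a
    simp only [Set.mem_ofPred_eq, Set.mem_singleton_iff, s]
    constructor
    · intro h
      by_contra ha
      obtain ⟨i, hi⟩ := hcon a ha
      exact hi (by simpa using h (g i) (by simp))
    · rintro rfl p hp
      simp at hp
      obtain ⟨i, rfl⟩ := hp
      simpa [aeval_eq_eval] using hg i
  have hrad := vanishingIdeal_zeroLocus_eq_radical (K := k) (Ideal.span (s : Set (MvPolynomial (Fin r) k)))
  rw [hz] at hrad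
  have hpr : (vanishingIdeal k {(0 : Fin r → k)}).IsPrime := inferInstance
  have hmin : vanishingIdeal k {(0 : Fin r → k)} ∈ (Ideal.span (s : Set (MvPolynomial (Fin r) k))).minimalPrimes := by
    rw [← Ideal.radical_minimalPrimes, ← hrad, Ideal.minimalPrimes_eq_subsingleton_self]
    rfl
  have hle := Ideal.height_le_card_of_mem_minimalPrimes_span_finset hmin
  rw [height_origin] at hle
  have hc : s.card ≤ n := by simpa using (Finset.card_image_le : s.card ≤ _)
  have : r ≤ s.card := by exact_mod_cast hle
  omega

/-- a rank-one middle block forces rank at most three -/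
lemma rank_le_three {k : Type*} [Field k] (E : Matrix (Fin 8) (Fin 8) k)
    (hE : ∀ i j : Fin 8, ¬((i = 0 ∧ 1 ≤ j) ∨ (1 ≤ i ∧ i ≤ 3 ∧ 4 ≤ j) ∨ (4 ≤ i ∧ i ≤ 6 ∧ j = 7)) →
      E i j = 0)
    (u v : Fin 8 → k) (huv : ∀ i j : Fin 8, 1 ≤ i → i ≤ 3 → 4 ≤ j → j ≤ 6 → E i j = u i * v j) :
    E.rank ≤ 3 := by
  let L : Matrix (Fin 8) (Fin 3) k := fun i s =>
    if s = 0 then (if i = 0 then 1 else 0) else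
    if s = 1 then (if 1 ≤ i ∧ i ≤ 3 then u i else 0) else
      (if i = 0 then 0 else E i 7)
  let R : Matrix (Fin 3) (Fin 8) k := fun s j =>
    if s = 0 then E 0 j else
    if s = 1 then (if 4 ≤ j ∧ j ≤ 6 then v j else 0) else
      (if j = 7 then 1 else 0)
  have : E = L * R := by
    ext i j
    rw [Matrix.mul_apply, Fin.sum_univ_three]
    by_cases hi : i = 0
    · subst hi; simp [L, R]
    by_cases hj : j = 7
    · subst hj; simp [L, R, hi]
    by_cases h3 : 1 ≤ i ∧ i ≤ 3 ∧ 4 ≤ j ∧ j ≤ 6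
    · simp [L, R, hi, hj, h3, huv i j h3.1 h3.2.1 h3.2.2.1 h3.2.2.2]
    · rw [hE i j (by clear hE huv L R; revert i j; decide)]
      simp only [L, R, hi, hj]
      simp
      intro a b c d
      exact absurd ⟨c, d, a, b⟩ h3
  rw [this]
  calc _ ≤ L.rank := Matrix.rank_mul_le_left _ _
    _ ≤ 3 := by simpa using L.rank_le_width

/-- A matrix supported in the upper right block, with singular block, has rank at most three. -/
lemma rank_block {k : Type*} [Field k] (E : Matrix (Fin 8) (Fin 8) k)
    (hE : ∀ i j : Fin 8, ¬(i ≤ 3 ∧ 4 ≤ j) → E i j = 0)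
    (hdet : (E.submatrix (Fin.castAdd 4 : Fin 4 → Fin 8) (Fin.natAdd 4 : Fin 4 → Fin 8)).det = 0) :
    E.rank ≠ 4 := by
  set P := E.submatrix (Fin.castAdd 4 : Fin 4 → Fin 8) (Fin.natAdd 4 : Fin 4 → Fin 8) with hP
  obtain ⟨v, hv0, hv⟩ := Matrix.exists_mulVec_eq_zero_iff.2 hdet
  have hPr : P.rank < 4 := by
    have h1 := P.mulVecLin.finrank_range_add_finrank_ker
    have h2 : 0 < Module.finrank k (LinearMap.ker P.mulVecLin) := by
      rw [Module.finrank_pos_iff_exists_ne_zero]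
      exact ⟨⟨v, by simpa using hv⟩, by simpa using hv0⟩
    rw [Module.finrank_fin_fun] at h1
    change Module.finrank k (LinearMap.range P.mulVecLin) < 4
    omega
  let L : Matrix (Fin 8) (Fin 4) k := fun i s => if i = Fin.castAdd 4 s then 1 else 0
  let R : Matrix (Fin 4) (Fin 8) k := fun s j => if j = Fin.natAdd 4 s then 1 else 0
  have : E = L * P * R := by
    ext i j
    by_cases hij : i ≤ 3 ∧ 4 ≤ j
    · obtain ⟨s, rfl⟩ : ∃ s : Fin 4, i = Fin.castAdd 4 s := by
        clear hE; revert i j; decide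
      obtain ⟨t, rfl⟩ : ∃ t : Fin 4, j = Fin.natAdd 4 t := by
        clear hE; revert s j; decide
      rw [Matrix.mul_apply, Finset.sum_eq_single t, Matrix.mul_apply, Finset.sum_eq_single s]
      · simp [L, R, P]
      · intro s' _ hs
        have : Fin.castAdd 4 s ≠ Fin.castAdd 4 s' := fun h => hs (Fin.castAdd_injective _ _ h).symm
        simp only [L, if_neg this, zero_mul]
      · simp
      · intro t' _ ht
        have : (Fin.natAdd 4 t : Fin 8) ≠ Fin.natAdd 4 t' := fun h => ht (Fin.natAdd_injective _ _ h).symm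
        simp only [R, if_neg this, mul_zero]
      · simp
    · rw [hE i j hij]
      symm
      simp only [Matrix.mul_apply]
      refine Finset.sum_eq_zero fun t _ => ?_
      rw [Finset.sum_mul]
      refine Finset.sum_eq_zero fun s _ => ?_
      simp only [L, R]
      split_ifs with h1 h2
      · exact absurd (by subst h1; subst h2; clear hij; revert s t; decide) hij
      all_goals simp
  have h1 : E.rank ≤ P.rank := by
    rw [this]
    exact (Matrix.rank_mul_le_left _ _).trans (Matrix.rank_mul_le_right _ _)
  omega

lemma det_zero_of_entries {k : Type*} [Field k] {n r : ℕ}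
    (P : Matrix (Fin (n+1)) (Fin (n+1)) (MvPolynomial (Fin r) k))
    (h : ∀ i j, eval 0 (P i j) = 0) : eval 0 P.det = 0 := by
  rw [RingHom.map_det]
  have : (eval (0 : Fin r → k)).mapMatrix P = 0 := by ext i j; simpa using h i j
  rw [this, Matrix.det_zero]

theorem statement_9 {k : Type*} [Field k] [IsAlgClosed k] {r : ℕ}
    (D : Matrix (Fin 8) (Fin 8) (MvPolynomial (Fin r) k))
    (hstd : StandardConditions D)
    (hzero : ∀ i j : Fin 8,
        ¬((1 ≤ (i : ℕ) + 1 ∧ (i : ℕ) + 1 ≤ 1 ∧ 2 ≤ (j : ℕ) + 1 ∧ (j : ℕ) + 1 ≤ 8) ∨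
          (2 ≤ (i : ℕ) + 1 ∧ (i : ℕ) + 1 ≤ 4 ∧ 5 ≤ (j : ℕ) + 1 ∧ (j : ℕ) + 1 ≤ 8) ∨
          (5 ≤ (i : ℕ) + 1 ∧ (i : ℕ) + 1 ≤ 7 ∧ 8 ≤ (j : ℕ) + 1 ∧ (j : ℕ) + 1 ≤ 8)) →
        D i j = 0) :
    r < 4 := by
  obtain ⟨-, hsq, h0, hrk, -⟩ := hstd
  by_contra! hr
  have hD : ∀ i j : Fin 8, ¬((i = 0 ∧ 1 ≤ j) ∨ (1 ≤ i ∧ i ≤ 3 ∧ 4 ≤ j) ∨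
      (4 ≤ i ∧ i ≤ 6 ∧ j = 7)) → D i j = 0 := by
    intro i j h
    apply hzero i j
    revert h
    clear hzero hsq h0 hrk
    revert i j
    decide
  clear hzero
  let M : Matrix (Fin 3) (Fin 3) (MvPolynomial (Fin r) k) :=
    D.submatrix ![1, 2, 3] ![4, 5, 6]
  have hM0 : ∀ i j, eval 0 (M i j) = 0 := fun i j => h0 _ _
  by_cases hdet : M.det = 0
  · -- rank-one adjugate
    have hadj : M.adjugate.adjugate = 0 := by
      rw [Matrix.adjugate_adjugate _ (by simp), hdet]; simp
    obtain ⟨g, h, hgh⟩ := factor_rank_one M.adjugate (minors_of_adj _ hadj)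
    -- it suffices to find a nonzero point where the adjugate vanishes
    suffices hx : ∃ a : Fin r → k, a ≠ 0 ∧ ∀ i j, eval a (M.adjugate i j) = 0 by
      obtain ⟨a, ha, hx⟩ := hx
      have hMa : (M.map (eval a)).adjugate = 0 := by
        have := (eval a).map_adjugate M
        rw [RingHom.mapMatrix_apply, RingHom.mapMatrix_apply] at this
        rw [← this]
        ext i j; exact hx i j
      have hmin := minors_of_adj _ hMa
      obtain ⟨u, v, huv⟩ := factor_rank_one _ hmin
      have := rank_le_three (D.map (eval a)) (fun i j hij => by simp [hD i j hij])
        ![0, u 0, u 1, u 2, 0, 0, 0, 0] ![0, 0, 0, 0, v 0, v 1, v 2, 0] (by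
          intro i j h1 h2 h3 h4
          obtain ⟨s, rfl⟩ : ∃ s : Fin 3, i = ![1, 2, 3] s := by
            clear h3 h4; revert i; decide
          obtain ⟨t, rfl⟩ : ∃ t : Fin 3, j = ![4, 5, 6] t := by
            clear h1 h2; revert j; decide
          refine (huv s t).trans ?_
          clear h1 h2 h3 h4
          fin_cases s <;> fin_cases t <;> rfl)
      rw [hrk a ha] at this
      omega
    have hN0 : ∀ i j, eval 0 (g i) * eval 0 (h j) = 0 := by
      intro i j
      rw [← map_mul, ← hgh]
      have h1 := (eval (0 : Fin r → k)).map_adjugate M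
      have h2 : (eval (0 : Fin r → k)).mapMatrix M = 0 := by ext i j; simpa using hM0 i j
      rw [h2, Matrix.adjugate_zero] at h1
      simpa using congrFun (congrFun h1 i) j
    by_cases hg : ∀ i, eval 0 (g i) = 0
    · obtain ⟨a, ha, hz⟩ := exists_common_zero (by omega) g hg
      exact ⟨a, ha, fun i j => by rw [hgh, map_mul, hz, zero_mul]⟩
    · push Not at hg
      obtain ⟨i, hi⟩ := hg
      obtain ⟨a, ha, hz⟩ := exists_common_zero (by omega) h
        (fun j => (mul_eq_zero.1 (hN0 i j)).resolve_left hi)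
      exact ⟨a, ha, fun i j => by rw [hgh, map_mul, hz, mul_zero]⟩
  · have hrow : (fun s : Fin 3 => D 0 (![1, 2, 3] s)) = 0 := by
      apply Matrix.eq_zero_of_vecMul_eq_zero hdet
      ext1 t
      have h1 := congrFun (congrFun hsq 0) (![4, 5, 6] t)
      rw [Matrix.mul_apply, Fin.sum_univ_eight] at h1
      have hh : ∀ i : Fin 8, 4 ≤ i → D i (![4, 5, 6] t) = 0 := fun i hi =>
        hD _ _ (by clear h1; revert i t; decide)
      rw [hD 0 0 (by decide), hh 4 (by decide), hh 5 (by decide), hh 6 (by decide),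
        hh 7 (by decide)] at h1
      simp only [mul_zero, zero_mul, zero_add, add_zero] at h1
      rw [Matrix.vecMul, dotProduct, Fin.sum_univ_three]
      exact h1
    have hcol : (fun t : Fin 3 => D (![4, 5, 6] t) 7) = 0 := by
      apply Matrix.eq_zero_of_mulVec_eq_zero hdet
      ext1 s
      have h1 := congrFun (congrFun hsq (![1, 2, 3] s)) 7
      rw [Matrix.mul_apply, Fin.sum_univ_eight] at h1
      have hh : ∀ i : Fin 8, i ≤ 3 → D (![1, 2, 3] s) i = 0 := fun i hi =>
        hD _ _ (by clear h1; revert i s; decide)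
      rw [hD 7 7 (by decide), hh 0 (by decide), hh 1 (by decide), hh 2 (by decide),
        hh 3 (by decide)] at h1
      simp only [mul_zero, zero_mul, zero_add, add_zero] at h1
      rw [Matrix.mulVec, dotProduct, Fin.sum_univ_three]
      exact h1
    have hD' : ∀ i j : Fin 8, ¬(i ≤ 3 ∧ 4 ≤ j) → D i j = 0 := by
      intro i j hij
      have r1 : D 0 1 = 0 := congrFun hrow 0
      have r2 : D 0 2 = 0 := congrFun hrow 1
      have r3 : D 0 3 = 0 := congrFun hrow 2
      have c1 : D 4 7 = 0 := congrFun hcol 0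
      have c2 : D 5 7 = 0 := congrFun hcol 1
      have c3 : D 6 7 = 0 := congrFun hcol 2
      by_cases hc : (i = 0 ∧ 1 ≤ j) ∨ (1 ≤ i ∧ i ≤ 3 ∧ 4 ≤ j) ∨ (4 ≤ i ∧ i ≤ 6 ∧ j = 7)
      · have : (i = 0 ∧ (j = 1 ∨ j = 2 ∨ j = 3)) ∨ ((i = 4 ∨ i = 5 ∨ i = 6) ∧ j = 7) := by
          clear hD hsq h0 hrk hdet hrow hcol r1 r2 r3 c1 c2 c3 hM0 M
          revert i j
          decide
        rcases this with ⟨rfl, rfl | rfl | rfl⟩ | ⟨rfl | rfl | rfl, rfl⟩ <;> assumption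
      · exact hD i j hc
    let P := D.submatrix (Fin.castAdd 4 : Fin 4 → Fin 8) (Fin.natAdd 4 : Fin 4 → Fin 8)
    have hP0 : eval 0 P.det = 0 := det_zero_of_entries P fun i j => h0 _ _
    obtain ⟨a, ha, hz⟩ := exists_common_zero (n := 1) (by omega) (fun _ => P.det) (fun _ => hP0)
    refine rank_block (D.map (eval a)) (fun i j hij => by simp [hD' i j hij]) ?_ (hrk a ha)
    have := hz 0
    rw [RingHom.map_det] at this
    exact this
end
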